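/- GF-interpolant existence is decidable: given GF-formulas φ(x) and ψ(x), it is decidable whether there exists a GF-formula θ(x) with sig(θ) ⊆ sig(φ) ∩ sig(ψ), φ ⊨ θ, and θ ⊨ ψ; moreover the problem is in 3-EXPTIME, and in 2-EXPTIME if the maximal arity of relation symbols in the input is bounded by a constant. -/

import Mathlib

/-- A relational signature: relation symbols with arities, no function or
constant symbols. -/
structure Sig : Type 1 where
  Rel : Type
  arity : Rel → ℕ

/-- A relational structure for a signature. -/
structure Str (σ : Sig) : Type 1 where
  dom : Type
  interp : (R : σ.Rel) → (Fin (σ.arity R) → dom) → Prop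

/-- Update an assignment on all variables occurring in the list `ys`. -/
def updOn {D : Type} (v : ℕ → D) (ys : List ℕ) (w : ℕ → D) : ℕ → D :=
  fun n => if n ∈ ys then w n else v n

/-- `a ↦ b` is a partial `τ`-isomorphism between the tuples `a` (in `A`) and
`b` (in `B`). -/
def PartialIso {σ : Sig} (τ : Set σ.Rel) (A B : Str σ) {n : ℕ}
    (a : Fin n → A.dom) (b : Fin n → B.dom) : Prop :=
  (∀ i j : Fin n, a i = a j ↔ b i = b j) ∧
  ∀ R ∈ τ, ∀ t : Fin (σ.arity R) → Fin n, A.interp R (a ∘ t) ↔ B.interp R (b ∘ t)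

/-- Atomic formulas over named variables. -/
inductive Atomic (σ : Sig) : Type
  | eq : ℕ → ℕ → Atomic σ
  | rel : (R : σ.Rel) → (Fin (σ.arity R) → ℕ) → Atomic σ

namespace Atomic

def Sat {σ : Sig} (A : Str σ) : Atomic σ → (ℕ → A.dom) → Prop
  | .eq i j, v => v i = v j
  | .rel R t, v => A.interp R (fun k => v (t k))

def vars {σ : Sig} : Atomic σ → Finset ℕ
  | .eq i j => {i, j}
  | .rel _ t => Finset.image t Finset.univ

def sig {σ : Sig} : Atomic σ → Set σ.Rel
  | .eq _ _ => ∅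
  | .rel R _ => {R}

end Atomic

/-- Syntax of the guarded fragment: Boolean connectives and guarded
quantifiers `∃ ys (α ∧ φ)` and `∀ ys (α → φ)`. -/
inductive GF (σ : Sig) : Type
  | atom : Atomic σ → GF σ
  | not : GF σ → GF σ
  | and : GF σ → GF σ → GF σ
  | or : GF σ → GF σ → GF σ
  | gex : List ℕ → Atomic σ → GF σ → GF σ
  | gall : List ℕ → Atomic σ → GF σ → GF σ

namespace GF

def Sat {σ : Sig} (A : Str σ) : GF σ → (ℕ → A.dom) → Prop
  | .atom α, v => α.Sat A v
  | .not φ, v => ¬ Sat A φ v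
  | .and φ ψ, v => Sat A φ v ∧ Sat A ψ v
  | .or φ ψ, v => Sat A φ v ∨ Sat A ψ v
  | .gex ys α φ, v => ∃ w, α.Sat A (updOn v ys w) ∧ Sat A φ (updOn v ys w)
  | .gall ys α φ, v => ∀ w, α.Sat A (updOn v ys w) → Sat A φ (updOn v ys w)

/-- Free variables. -/
def fv {σ : Sig} : GF σ → Finset ℕ
  | .atom α => α.vars
  | .not φ => fv φ
  | .and φ ψ => fv φ ∪ fv ψ
  | .or φ ψ => fv φ ∪ fv ψ
  | .gex ys α φ => (α.vars ∪ fv φ).filter (fun m => m ∉ ys)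
  | .gall ys α φ => (α.vars ∪ fv φ).filter (fun m => m ∉ ys)

/-- The signature (set of relation symbols) of a formula. -/
def sig {σ : Sig} : GF σ → Set σ.Rel
  | .atom α => α.sig
  | .not φ => sig φ
  | .and φ ψ => sig φ ∪ sig ψ
  | .or φ ψ => sig φ ∪ sig ψ
  | .gex _ α φ => α.sig ∪ sig φ
  | .gall _ α φ => α.sig ∪ sig φ

/-- The guard of each quantifier contains all free variables of the formula in
its scope. -/
def WellGuarded {σ : Sig} : GF σ → Prop
  | .atom _ => True
  | .not φ => WellGuarded φ
  | .and φ ψ => WellGuarded φ ∧ WellGuarded ψ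
  | .or φ ψ => WellGuarded φ ∧ WellGuarded ψ
  | .gex _ α φ => fv φ ⊆ α.vars ∧ WellGuarded φ
  | .gall _ α φ => fv φ ⊆ α.vars ∧ WellGuarded φ

end GF

/-- A `τ`-guarded set: a singleton or the set of components of a tuple in the
interpretation of some `R ∈ τ`. -/
def GuardedSet {σ : Sig} (τ : Set σ.Rel) (A : Str σ) (G : Set A.dom) : Prop :=
  (∃ a, G = {a}) ∨ ∃ R ∈ τ, ∃ t : Fin (σ.arity R) → A.dom, A.interp R t ∧ G = Set.range t

/-- A `τ`-guarded tuple: all components lie in some `τ`-guarded set. -/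
def GuardedTuple {σ : Sig} (τ : Set σ.Rel) (A : Str σ) {n : ℕ} (a : Fin n → A.dom) : Prop :=
  ∃ G, GuardedSet τ A G ∧ ∀ i, a i ∈ G

/-- A pair of tuples of the same length in `A` and `B`, representing the
partial map sending the first tuple to the second. -/
def TuplePair {σ : Sig} (A B : Str σ) : Type :=
  Σ n : ℕ, (Fin n → A.dom) × (Fin n → B.dom)

/-- The back-and-forth conditions for the pair `a ↦ b` relative to a set `I`
of tuple pairs. -/
def ForthBack {σ : Sig} (τ : Set σ.Rel) (A B : Str σ) (I : Set (TuplePair A B))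
    {n : ℕ} (a : Fin n → A.dom) (b : Fin n → B.dom) : Prop :=
  (∀ (m : ℕ) (a' : Fin m → A.dom), GuardedTuple τ A a' →
    ∃ b' : Fin m → B.dom, (⟨m, a', b'⟩ : TuplePair A B) ∈ I ∧
      ∀ i j, a i = a' j → b i = b' j) ∧
  (∀ (m : ℕ) (b' : Fin m → B.dom), GuardedTuple τ B b' →
    ∃ a' : Fin m → A.dom, (⟨m, a', b'⟩ : TuplePair A B) ∈ I ∧
      ∀ i j, b i = b' j → a i = a' j)

/-- `I` is a GF(τ)-bisimulation between `A` and `B`. -/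
def IsGFBisim {σ : Sig} (τ : Set σ.Rel) (A B : Str σ) (I : Set (TuplePair A B)) : Prop :=
  ∀ p ∈ I, GuardedTuple τ A p.2.1 ∧ GuardedTuple τ B p.2.2 ∧
    PartialIso τ A B p.2.1 p.2.2 ∧ ForthBack τ A B I p.2.1 p.2.2

/-- `(A, a) ∼_{GF,τ} (B, b)`. -/
def GFBisimilar {σ : Sig} (τ : Set σ.Rel) (A B : Str σ) {n : ℕ}
    (a : Fin n → A.dom) (b : Fin n → B.dom) : Prop :=
  ∃ I, IsGFBisim τ A B I ∧ PartialIso τ A B a b ∧ ForthBack τ A B I a b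

/-- The pointed structure `(A, a)` satisfies `φ` (the tuple `a` is assigned to
the variables `0, …, n-1`). -/
def SatTupleGF {σ : Sig} (A : Str σ) (φ : GF σ) {n : ℕ} (a : Fin n → A.dom) : Prop :=
  ∀ v : ℕ → A.dom, (∀ i : Fin n, v i = a i) → φ.Sat A v

/-- `(A, a)` and `(B, b)` satisfy exactly the same GF(τ)-formulas. -/
def GFEquiv {σ : Sig} (τ : Set σ.Rel) (A B : Str σ) {n : ℕ}
    (a : Fin n → A.dom) (b : Fin n → B.dom) : Prop :=
  ∀ φ : GF σ, φ.WellGuarded → φ.sig ⊆ τ → φ.fv ⊆ Finset.range n →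
    (SatTupleGF A φ a ↔ SatTupleGF B φ b)

/-- Semantic entailment for GF formulas. -/
def GFEnt {σ : Sig} (φ ψ : GF σ) : Prop :=
  ∀ (A : Str σ) (v : ℕ → A.dom), φ.Sat A v → ψ.Sat A v

/-- Joint GF(τ)-consistency of two formulas with free variables among
`0, …, n-1`. -/
def JointGFCon {σ : Sig} (τ : Set σ.Rel) (n : ℕ) (φ ψ : GF σ) : Prop :=
  ∃ (A B : Str σ) (a : Fin n → A.dom) (b : Fin n → B.dom),
    SatTupleGF A φ a ∧ SatTupleGF B ψ b ∧ GFBisimilar τ A B a b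

/-- Existence of a GF-interpolant for `φ, ψ` (free variables among
`0, …, n-1`). -/
def HasGFInterpolant {σ : Sig} (n : ℕ) (φ ψ : GF σ) : Prop :=
  ∃ θ : GF σ, θ.WellGuarded ∧ θ.sig ⊆ φ.sig ∩ ψ.sig ∧
    θ.fv ⊆ Finset.range n ∧ GFEnt φ θ ∧ GFEnt θ ψ

/-- A Gödel numbering of atoms over the signature `⟨ℕ, ar⟩`. -/
def encAtom {ar : ℕ → ℕ} : Atomic ⟨ℕ, ar⟩ → ℕ
  | .eq i j => Nat.pair 0 (Nat.pair i j)
  | .rel R t => Nat.pair 1 (Nat.pair R (Encodable.encode (List.ofFn t)))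

/-- A Gödel numbering of GF formulas over the signature `⟨ℕ, ar⟩`. -/
def encGF {ar : ℕ → ℕ} : GF ⟨ℕ, ar⟩ → ℕ
  | .atom α => Nat.pair 0 (encAtom α)
  | .not φ => Nat.pair 1 (encGF φ)
  | .and φ ψ => Nat.pair 2 (Nat.pair (encGF φ) (encGF ψ))
  | .or φ ψ => Nat.pair 3 (Nat.pair (encGF φ) (encGF ψ))
  | .gex ys α φ =>
      Nat.pair 4 (Nat.pair (Encodable.encode ys) (Nat.pair (encAtom α) (encGF φ)))
  | .gall ys α φ =>
      Nat.pair 5 (Nat.pair (Encodable.encode ys) (Nat.pair (encAtom α) (encGF φ)))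

/-!
By compactness, `φ` and `ψ` have no interpolant iff a tuple satisfying `φ` in some structure and a
tuple satisfying `¬ψ` in some other one agree on all guarded formulas over the shared signature;
both structures may be taken countably saturated, and then the agreement extends to a guarded
bisimulation. Such a pair is described up to the subformulas of `φ` and `ψ` by a finite *mosaic
system*: the types of bounded-length tuples, together with the sets of types (mosaics) realised by
tuples which agree on the shared formulas. Conversely, any mosaic system in which all quantifiers
have witnesses unravels into two structures with bisimilar tuples. There are boundedly many types
and mosaics to consider, so some such system exists iff one of bounded size does, and since finite
systems are coded by natural numbers, a bounded search decides whether there is one.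
-/

open Fin.NatCast

/-! ### Semantics of GF formulas -/

theorem updOn_of_mem {D : Type} {v w : ℕ → D} {ys : List ℕ} {x : ℕ} (h : x ∈ ys) :
    updOn v ys w x = w x := if_pos h

theorem updOn_of_notMem {D : Type} {v w : ℕ → D} {ys : List ℕ} {x : ℕ} (h : x ∉ ys) :
    updOn v ys w x = v x := if_neg h

theorem updOn_eq_of_agree {D : Type} {v w : ℕ → D} {ys : List ℕ} {x : ℕ}
    (h : x ∉ ys → v x = w x) : updOn v ys w x = w x := by
  by_cases hx : x ∈ ys
  · exact updOn_of_mem hx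
  · exact (updOn_of_notMem hx).trans (h hx)

theorem Atomic.sat_congr {σ : Sig} {A : Str σ} {α : Atomic σ} {v v' : ℕ → A.dom}
    (h : ∀ x ∈ α.vars, v x = v' x) : α.Sat A v ↔ α.Sat A v' := by
  cases α with
  | eq i j => simp only [Atomic.Sat, h i (by simp [Atomic.vars]), h j (by simp [Atomic.vars])]
  | rel R t =>
    have : (fun k => v (t k)) = fun k => v' (t k) :=
      funext fun k => h _ (by simp [Atomic.vars])
    simp only [Atomic.Sat, this]

namespace GF

variable {σ : Sig}

theorem mem_fv_gex {ys : List ℕ} {α : Atomic σ} {χ : GF σ} (hχ : χ.fv ⊆ α.vars) {x : ℕ} :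
    x ∈ (gex ys α χ).fv ↔ x ∈ α.vars ∧ x ∉ ys := by
  rw [fv, Finset.mem_filter, Finset.union_eq_left.2 hχ]

theorem mem_fv_gall {ys : List ℕ} {α : Atomic σ} {χ : GF σ} (hχ : χ.fv ⊆ α.vars) {x : ℕ} :
    x ∈ (gall ys α χ).fv ↔ x ∈ α.vars ∧ x ∉ ys :=
  mem_fv_gex hχ

theorem updOn_congr {D : Type} {v v' : ℕ → D} {ys : List ℕ} {S : Finset ℕ}
    (h : ∀ x ∈ S.filter (· ∉ ys), v x = v' x) (w : ℕ → D) :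
    ∀ x ∈ S, updOn v ys w x = updOn v' ys w x := by
  intro x hx
  by_cases hy : x ∈ ys
  · rw [updOn_of_mem hy, updOn_of_mem hy]
  · rw [updOn_of_notMem hy, updOn_of_notMem hy, h x (Finset.mem_filter.2 ⟨hx, hy⟩)]

theorem sat_congr {A : Str σ} {χ : GF σ} {v v' : ℕ → A.dom} (h : ∀ x ∈ χ.fv, v x = v' x) :
    χ.Sat A v ↔ χ.Sat A v' := by
  induction χ generalizing v v' with
  | atom α => exact Atomic.sat_congr h
  | not χ ih => exact not_congr (ih h)
  | and χ ξ ih₁ ih₂ =>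
    exact and_congr (ih₁ fun x hx => h x (Finset.mem_union_left _ hx))
      (ih₂ fun x hx => h x (Finset.mem_union_right _ hx))
  | or χ ξ ih₁ ih₂ =>
    exact or_congr (ih₁ fun x hx => h x (Finset.mem_union_left _ hx))
      (ih₂ fun x hx => h x (Finset.mem_union_right _ hx))
  | gex ys α χ ih =>
    refine exists_congr fun w => and_congr (Atomic.sat_congr fun x hx => ?_) (ih fun x hx => ?_)
    · exact updOn_congr h w x (Finset.mem_union_left _ hx)
    · exact updOn_congr h w x (Finset.mem_union_right _ hx)
  | gall ys α χ ih =>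
    refine forall_congr' fun w => imp_congr (Atomic.sat_congr fun x hx => ?_) (ih fun x hx => ?_)
    · exact updOn_congr h w x (Finset.mem_union_left _ hx)
    · exact updOn_congr h w x (Finset.mem_union_right _ hx)

theorem sat_gex_iff {A : Str σ} {ys : List ℕ} {α : Atomic σ} {χ : GF σ} (hχ : χ.fv ⊆ α.vars)
    {v : ℕ → A.dom} : (gex ys α χ).Sat A v ↔
      ∃ w, (∀ x ∈ (gex ys α χ).fv, v x = w x) ∧ α.Sat A w ∧ χ.Sat A w := by
  constructor
  · rintro ⟨w, hα, hsat⟩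
    exact ⟨_, fun x hx => (updOn_of_notMem ((mem_fv_gex hχ).1 hx).2).symm, hα, hsat⟩
  · rintro ⟨w, hw, hα, hsat⟩
    have hagree : ∀ x ∈ α.vars, updOn v ys w x = w x := fun x hx =>
      updOn_eq_of_agree fun hy => hw x ((mem_fv_gex hχ).2 ⟨hx, hy⟩)
    exact ⟨w, (Atomic.sat_congr hagree).2 hα, (sat_congr fun x hx => hagree x (hχ hx)).2 hsat⟩

theorem sat_gall_iff_not_gex {A : Str σ} {ys : List ℕ} {α : Atomic σ} {χ : GF σ}
    {v : ℕ → A.dom} : (gall ys α χ).Sat A v ↔ ¬ (gex ys α χ.not).Sat A v := by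
  simp only [Sat, not_exists, not_and, not_not]

theorem sat_gall_iff {A : Str σ} {ys : List ℕ} {α : Atomic σ} {χ : GF σ} (hχ : χ.fv ⊆ α.vars)
    {v : ℕ → A.dom} : (gall ys α χ).Sat A v ↔
      ∀ w, (∀ x ∈ (gall ys α χ).fv, v x = w x) → α.Sat A w → χ.Sat A w := by
  rw [sat_gall_iff_not_gex, sat_gex_iff (χ := χ.not) hχ]
  simp only [not_exists, not_and, Sat, not_not]
  rfl

/-- The closure of `φ` and `ψ`: their subformulas and guards, together with `x₀ = x₁`, which is
what equality of the components of a tuple is read off from. -/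
inductive Closure (φ ψ : GF σ) : GF σ → Prop
  | left : Closure φ ψ φ
  | right : Closure φ ψ ψ
  | eq : Closure φ ψ (atom (.eq 0 1))
  | not {χ} : Closure φ ψ (not χ) → Closure φ ψ χ
  | and_left {χ ξ} : Closure φ ψ (and χ ξ) → Closure φ ψ χ
  | and_right {χ ξ} : Closure φ ψ (and χ ξ) → Closure φ ψ ξ
  | or_left {χ ξ} : Closure φ ψ (or χ ξ) → Closure φ ψ χ
  | or_right {χ ξ} : Closure φ ψ (or χ ξ) → Closure φ ψ ξ
  | gex_guard {ys α χ} : Closure φ ψ (gex ys α χ) → Closure φ ψ (atom α)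
  | gex_body {ys α χ} : Closure φ ψ (gex ys α χ) → Closure φ ψ χ
  | gall_guard {ys α χ} : Closure φ ψ (gall ys α χ) → Closure φ ψ (atom α)
  | gall_body {ys α χ} : Closure φ ψ (gall ys α χ) → Closure φ ψ χ

theorem Closure.wellGuarded {φ ψ χ : GF σ} (h : Closure φ ψ χ) (hφ : φ.WellGuarded)
    (hψ : ψ.WellGuarded) : χ.WellGuarded := by
  induction h with
  | left => exact hφ
  | right => exact hψ
  | eq | gex_guard | gall_guard => trivial
  | not _ ih => exact ih
  | and_left _ ih | or_left _ ih => exact ih.1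
  | and_right _ ih | or_right _ ih | gex_body _ ih | gall_body _ ih => exact ih.2

/-- Both formulas are well-guarded and every variable of their closure names one of `N` slots. -/
structure Admissible (φ ψ : GF σ) (N : ℕ) : Prop where
  left : φ.WellGuarded
  right : ψ.WellGuarded
  lt : ∀ χ, Closure φ ψ χ → ∀ x ∈ χ.fv, x < N

theorem Admissible.wellGuarded {φ ψ χ : GF σ} {N : ℕ} (h : Admissible φ ψ N)
    (hχ : Closure φ ψ χ) : χ.WellGuarded :=
  hχ.wellGuarded h.left h.right

/-- The atoms of the closure over the signature shared by `φ` and `ψ`. -/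
def SharedAtom (φ ψ : GF σ) (α : Atomic σ) : Prop :=
  Closure φ ψ (atom α) ∧ α.sig ⊆ φ.sig ∩ ψ.sig

theorem SharedAtom.eq (φ ψ : GF σ) : SharedAtom φ ψ (.eq 0 1) :=
  ⟨.eq, Set.empty_subset _⟩

theorem Closure.sharedAtom_rel {φ ψ : GF σ} {R : σ.Rel} {t : Fin (σ.arity R) → ℕ}
    (h : Closure φ ψ (atom (.rel R t))) (hR : R ∈ φ.sig ∩ ψ.sig) : SharedAtom φ ψ (.rel R t) :=
  ⟨h, Set.singleton_subset_iff.2 hR⟩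

end GF

/-! ### Mosaic systems -/

/-- The slots of a type, i.e. the positions of a tuple of fixed length. There are at least two of
them, so that the formula `x₀ = x₁` can be evaluated at any two slots. -/
abbrev Slot (m : ℕ) : Type := Fin (m + 2)

theorem exists_slot_map {m : ℕ} {S : Finset ℕ} (hS : ∀ x ∈ S, x < m + 2)
    {P : ℕ → Slot m → Prop} (h : ∀ x ∈ S, ∃ i, P x i) :
    ∃ l : Slot m → Slot m, ∀ x ∈ S, P x (l x) := by
  have (i : Slot m) : ∃ j, (i : ℕ) ∈ S → P i j := by
    by_cases hi : (i : ℕ) ∈ S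
    · exact (h i hi).imp fun j hj _ => hj
    · exact ⟨0, fun h => absurd h hi⟩
  choose l hl using this
  refine ⟨l, fun x hx => ?_⟩
  have hval : ((x : Slot m) : ℕ) = x := Fin.val_cast_of_lt (hS x hx)
  have hP := hl x
  rw [hval] at hP
  exact hP hx

/-- The part of a slot map that is seen on the variables in `S`: slots `i`, `j` overlap if some
variable of `S` is sent to `i` by `l` and to `j` by `l'`. -/
def overlap {m : ℕ} (S : Set (Slot m)) (l l' : Slot m → Slot m) (i j : Slot m) : Prop :=
  ∃ x ∈ S, l x = i ∧ l' x = j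

/-- Truth values for abstract types `Γ` and abstract mosaics `κ`: `val T (inl χ) l` says that `χ`
holds in type `T` if the variable `x` denotes slot `l x`, and `val T (inr k) ρ` says that the tuple
of slots `ρ` of `T` realises a type of the mosaic `k`. -/
@[ext]
structure MosaicSystem (σ : Sig) (m : ℕ) (Γ κ : Type) where
  val : Γ → GF σ ⊕ κ → (Slot m → Slot m) → Prop

/-- The slots denoted by the free variables of a formula. -/
def GF.slots {σ : Sig} (m : ℕ) (χ : GF σ) : Set (Slot m) := (fun x : ℕ => (x : Slot m)) '' χ.fv

/-- Atoms and quantified formulas; the truth of other formulas is determined by these. -/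
def GF.IsBase {σ : Sig} : GF σ → Prop
  | atom _ | gex _ _ _ | gall _ _ _ => True
  | not _ | and _ _ | or _ _ => False

namespace MosaicSystem

open GF

variable {σ : Sig} {m : ℕ} {Γ κ : Type} (C : MosaicSystem σ m Γ κ) (φ ψ : GF σ)

/-- Truth of a formula in a type. -/
abbrev Holds (T : Γ) (χ : GF σ) (l : Slot m → Slot m) : Prop := C.val T (.inl χ) l

/-- Membership of a tuple of slots in a mosaic. -/
abbrev InMosaic (T : Γ) (k : κ) (ρ : Slot m → Slot m) : Prop := C.val T (.inr k) ρ

/-- Equality of slots, as determined by the formula `x₀ = x₁`. -/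
def SlotEq (T : Γ) (i j : Slot m) : Prop :=
  ∃ l : Slot m → Slot m, l 0 = i ∧ l 1 = j ∧ C.Holds T (.atom (.eq 0 1)) l

/-- The slots on which the value of a feature depends. -/
def support : GF σ ⊕ κ → Set (Slot m)
  | .inl χ => χ.slots m
  | .inr _ => Set.univ

/-- The features of a type that are preserved along overlaps. -/
def IsFeature : GF σ ⊕ κ → Prop
  | .inl χ => Closure φ ψ χ ∧ χ.IsBase
  | .inr _ => True

/-- `T` and `T'` agree on all features supported by slots that correspond via `O`. -/
def Compat (T : Γ) (O : Slot m → Slot m → Prop) (T' : Γ) : Prop :=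
  ∀ f, IsFeature φ ψ f → ∀ l l' : Slot m → Slot m,
    (∀ x ∈ support f, O (l x) (l' x)) → (C.val T f l ↔ C.val T' f l')

/-- The slots enumerated by `ρ` are covered by an atom of the shared signature. -/
def Guarded (T : Γ) (ρ : Slot m → Slot m) : Prop :=
  ∃ α, SharedAtom φ ψ α ∧ ∃ l, C.Holds T (.atom α) l ∧ ∀ i, ∃ x ∈ α.vars, ρ i = l x

/-- Indistinguishability of two tuples of slots by mosaics and by shared atoms. -/
structure Similar (T : Γ) (ρ : Slot m → Slot m) (T' : Γ) (ρ' : Slot m → Slot m) : Prop where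
  inMosaic : ∀ k l, C.InMosaic T k (ρ ∘ l) ↔ C.InMosaic T' k (ρ' ∘ l)
  atom : ∀ α, SharedAtom φ ψ α → ∀ l,
    (C.Holds T (.atom α) (ρ ∘ l) ↔ C.Holds T' (.atom α) (ρ' ∘ l))

/-- Truth in a type respects equality, substitution of equal slots and the Boolean connectives. -/
structure RespectsConnectives : Prop where
  slotEq_refl : ∀ T i, C.SlotEq T i i
  eq : ∀ T x y, Closure φ ψ (.atom (.eq x y)) → ∀ l,
    (C.Holds T (.atom (.eq x y)) l ↔ C.SlotEq T (l x) (l y))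
  rel : ∀ T R t t', Closure φ ψ (.atom (.rel R t)) → Closure φ ψ (.atom (.rel R t')) →
    ∀ l l', (∀ k, C.SlotEq T (l (t k)) (l' (t' k))) → C.Holds T (.atom (.rel R t)) l →
      C.Holds T (.atom (.rel R t')) l'
  not : ∀ T χ, Closure φ ψ (.not χ) → ∀ l, (C.Holds T (.not χ) l ↔ ¬ C.Holds T χ l)
  and : ∀ T χ ξ, Closure φ ψ (.and χ ξ) → ∀ l,
    (C.Holds T (.and χ ξ) l ↔ C.Holds T χ l ∧ C.Holds T ξ l)
  or : ∀ T χ ξ, Closure φ ψ (.or χ ξ) → ∀ l,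
    (C.Holds T (.or χ ξ) l ↔ C.Holds T χ l ∨ C.Holds T ξ l)

/-- Truth of a quantified formula is witnessed, positively and negatively, by compatible types. -/
structure HasWitnesses : Prop where
  gex_intro : ∀ T ys α χ, Closure φ ψ (.gex ys α χ) → ∀ l, C.Holds T (.atom α) l →
    C.Holds T χ l → C.Holds T (.gex ys α χ) l
  gex_elim : ∀ T ys α χ, Closure φ ψ (.gex ys α χ) → ∀ l, C.Holds T (.gex ys α χ) l →
    ∃ T' l', C.Compat φ ψ T (overlap ((gex ys α χ).slots m) l l') T' ∧
      C.Holds T' (.atom α) l' ∧ C.Holds T' χ l'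
  gall_elim : ∀ T ys α χ, Closure φ ψ (.gall ys α χ) → ∀ l, C.Holds T (.gall ys α χ) l →
    C.Holds T (.atom α) l → C.Holds T χ l
  gall_intro : ∀ T ys α χ, Closure φ ψ (.gall ys α χ) → ∀ l, ¬ C.Holds T (.gall ys α χ) l →
    ∃ T' l', C.Compat φ ψ T (overlap ((gall ys α χ).slots m) l l') T' ∧
      C.Holds T' (.atom α) l' ∧ ¬ C.Holds T' χ l'

/-- Slot equality is a congruence, and the mosaics cover all shared guarded tuples, consist of
indistinguishable tuples, and provide the moves of a guarded bisimulation. -/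
structure CoherentMosaics : Prop where
  compat_self : ∀ T, C.Compat φ ψ T (C.SlotEq T) T
  exists_mosaic : ∀ T ρ, C.Guarded φ ψ T ρ → ∃ k, C.InMosaic T k ρ
  similar : ∀ T T' k ρ ρ', C.InMosaic T k ρ → C.InMosaic T' k ρ' → C.Similar φ ψ T ρ T' ρ'
  extend : ∀ T T₁ k₀ k₁ ρ ρ₁ l, C.InMosaic T k₁ ρ → C.InMosaic T₁ k₁ (ρ₁ ∘ l) →
    C.InMosaic T₁ k₀ ρ₁ →
      ∃ T₂, C.Compat φ ψ T (overlap Set.univ ρ l) T₂ ∧ C.InMosaic T₂ k₀ id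
  realise : ∀ T T₁ k₀ ρ₁, C.InMosaic T₁ k₀ ρ₁ →
    ∃ T₂, C.Compat φ ψ T (fun _ _ => False) T₂ ∧ C.InMosaic T₂ k₀ id

/-- The local and existential saturation conditions under which the types of a mosaic system can
be unravelled into structures that realise bisimilar tuples for tuples of the same mosaic. -/
structure Saturated : Prop extends
  C.RespectsConnectives φ ψ, C.HasWitnesses φ ψ, C.CoherentMosaics φ ψ

variable {C φ ψ}

theorem Compat.symm {T T' : Γ} {O : Slot m → Slot m → Prop} (h : C.Compat φ ψ T O T') :
    C.Compat φ ψ T' (fun i j => O j i) T :=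
  fun f hf l l' hl => (h f hf l' l hl).symm

theorem Compat.trans {T T' T'' : Γ} {O O' : Slot m → Slot m → Prop} (h : C.Compat φ ψ T O T')
    (h' : C.Compat φ ψ T' O' T'') :
    C.Compat φ ψ T (fun i j => ∃ k, O i k ∧ O' k j) T'' := by
  intro f hf l l' hl
  have (x : Slot m) : ∃ k, x ∈ support f → O (l x) k ∧ O' k (l' x) := by
    by_cases hx : x ∈ support f
    · exact (hl x hx).imp fun k hk _ => hk
    · exact ⟨0, fun h => absurd h hx⟩
  choose k hk using this
  exact (h f hf l k fun x hx => (hk x hx).1).trans (h' f hf k l' fun x hx => (hk x hx).2)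

theorem Compat.slotEq_mp {T T' : Γ} {O : Slot m → Slot m → Prop} (h : C.Compat φ ψ T O T')
    {i j i' j' : Slot m} (hi : O i i') (hj : O j j') (hij : C.SlotEq T i j) :
    C.SlotEq T' i' j' := by
  obtain ⟨l, rfl, rfl, hl⟩ := hij
  let l' : Slot m → Slot m := Function.update (fun _ => j') 0 i'
  refine ⟨l', by simp [l'], by simp [l'], (h (.inl (.atom (.eq 0 1))) ⟨.eq, trivial⟩ l l' ?_).1 hl⟩
  rintro _ ⟨x, hx, rfl⟩
  obtain rfl | rfl : x = 0 ∨ x = 1 := by simpa [fv, Atomic.vars] using hx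
  · simpa [l'] using hi
  · simpa [l'] using hj

theorem Compat.slotEq_iff {T T' : Γ} {O : Slot m → Slot m → Prop} (h : C.Compat φ ψ T O T')
    {i j i' j' : Slot m} (hi : O i i') (hj : O j j') : C.SlotEq T i j ↔ C.SlotEq T' i' j' :=
  ⟨h.slotEq_mp hi hj, h.symm.slotEq_mp hi hj⟩

theorem Similar.symm {T T' : Γ} {ρ ρ' : Slot m → Slot m} (h : C.Similar φ ψ T ρ T' ρ') :
    C.Similar φ ψ T' ρ' T ρ :=
  ⟨fun k l => (h.inMosaic k l).symm, fun α hα l => (h.atom α hα l).symm⟩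

theorem Guarded.comp {T : Γ} {ρ : Slot m → Slot m} (h : C.Guarded φ ψ T ρ)
    (l : Slot m → Slot m) : C.Guarded φ ψ T (ρ ∘ l) := by
  obtain ⟨α, hα, lα, hsat, hρ⟩ := h
  exact ⟨α, hα, lα, hsat, fun i => hρ (l i)⟩

namespace Saturated

variable (hC : C.Saturated φ ψ)
include hC

theorem slotEq_symm {T : Γ} {i j : Slot m} (h : C.SlotEq T i j) : C.SlotEq T j i :=
  (hC.compat_self T).slotEq_mp h (hC.slotEq_refl T i) (hC.slotEq_refl T i)

theorem slotEq_trans {T : Γ} {i j k : Slot m} (hij : C.SlotEq T i j) (hjk : C.SlotEq T j k) :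
    C.SlotEq T i k :=
  (hC.compat_self T).slotEq_mp (hC.slotEq_symm hij) (hC.slotEq_refl T k) hjk

theorem guarded_const (T : Γ) (i : Slot m) : C.Guarded φ ψ T fun _ => i :=
  ⟨.eq 0 1, .eq φ ψ, fun _ => i, (hC.eq T 0 1 .eq _).2 (hC.slotEq_refl T i),
    fun _ => ⟨0, by simp [Atomic.vars], rfl⟩⟩

theorem _root_.MosaicSystem.Similar.slotEq_iff {T T' : Γ} {ρ ρ' : Slot m → Slot m}
    (h : C.Similar φ ψ T ρ T' ρ') (i j : Slot m) :
    C.SlotEq T (ρ i) (ρ j) ↔ C.SlotEq T' (ρ' i) (ρ' j) := by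
  have key := h.atom _ (.eq φ ψ) (Function.update (fun _ => j) 0 i)
  simpa [hC.eq _ 0 1 .eq] using key

end Saturated

end MosaicSystem

/-! ### Unravelling a saturated mosaic system -/

namespace MosaicSystem

open GF

variable {σ : Sig} {m : ℕ} {Γ κ : Type}

/-- Nodes of the unravelling tree, as lists of types with the overlap with the parent node. -/
abbrev Path (m : ℕ) (Γ : Type) : Type := List (Γ × (Slot m → Slot m → Prop))

/-- The type at the end of a path, where `T₀` is the type of the root. -/
def label (T₀ : Γ) : Path m Γ → Γ
  | [] => T₀
  | (T, _) :: _ => T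

variable (C : MosaicSystem σ m Γ κ) (φ ψ : GF σ)

/-- Adjacent types along the path agree on their overlap. -/
def Valid (T₀ : Γ) : Path m Γ → Prop
  | [] => True
  | (T, O) :: p => Valid T₀ p ∧ C.Compat φ ψ (label T₀ p) O T

/-- Slot `j` of `T` stands for the same element as slot `i` of the parent node. -/
def Inherits (T : Γ) (O : Slot m → Slot m → Prop) (j i : Slot m) : Prop :=
  ∃ j', O i j' ∧ C.SlotEq T j j'

open Classical in
/-- The element denoted by a slot at a path: the class of the slot at the ancestor closest to the
root to which it can be traced back. -/
noncomputable def point (T₀ : Γ) : Path m Γ → Slot m → Path m Γ × (Slot m → Prop)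
  | [], j => ([], C.SlotEq T₀ j)
  | (T, O) :: p, j =>
    if h : ∃ i, C.Inherits T O j i then point T₀ p h.choose else ((T, O) :: p, C.SlotEq T j)

variable {C φ ψ} {T₀ T₁ : Γ}

theorem point_suffix (p : Path m Γ) (j : Slot m) : (C.point T₀ p j).1 <:+ p := by
  induction p generalizing j with
  | nil => exact List.suffix_refl _
  | cons a p ih =>
    rw [point]
    split
    · exact (ih _).trans (List.suffix_cons _ _)
    · exact List.suffix_refl _

theorem exists_point_eq_of_inherits {T : Γ} {O : Slot m → Slot m → Prop} {p : Path m Γ}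
    {j : Slot m} (h : ∃ i, C.Inherits T O j i) :
    ∃ i, C.Inherits T O j i ∧ C.point T₀ ((T, O) :: p) j = C.point T₀ p i :=
  ⟨h.choose, h.choose_spec, by rw [point, dif_pos h]⟩

theorem point_of_not_inherits {T : Γ} {O : Slot m → Slot m → Prop} {p : Path m Γ} {j : Slot m}
    (h : ¬ ∃ i, C.Inherits T O j i) : C.point T₀ ((T, O) :: p) j = ((T, O) :: p, C.SlotEq T j) := by
  rw [point, dif_neg h]

theorem point_ne_cons {a} (p : Path m Γ) (i : Slot m) (s : Slot m → Prop) :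
    C.point T₀ p i ≠ (a :: p, s) := by
  intro h
  have hlen := (point_suffix (C := C) (T₀ := T₀) p i).length_le
  simp [h] at hlen

namespace Saturated

variable (hC : C.Saturated φ ψ)
include hC

theorem slotEq_eq_iff {T : Γ} {i j : Slot m} : C.SlotEq T i = C.SlotEq T j ↔ C.SlotEq T i j := by
  refine ⟨fun h => h ▸ hC.slotEq_refl T j, fun h => funext fun k => propext ?_⟩
  exact ⟨hC.slotEq_trans (hC.slotEq_symm h), hC.slotEq_trans h⟩

theorem slotEq_iff_of_inherits {T T' : Γ} {O : Slot m → Slot m → Prop}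
    (hO : C.Compat φ ψ T O T') {i i' j j' : Slot m} (hi : C.Inherits T' O i i')
    (hj : C.Inherits T' O j j') : C.SlotEq T i' j' ↔ C.SlotEq T' i j := by
  obtain ⟨i₁, hOi, hi⟩ := hi
  obtain ⟨j₁, hOj, hj⟩ := hj
  rw [hO.slotEq_iff hOi hOj]
  exact (hC.compat_self T').slotEq_iff (hC.slotEq_symm hi) (hC.slotEq_symm hj)

theorem inherits_congr {T : Γ} {O : Slot m → Slot m → Prop} {j j' i : Slot m}
    (h : C.SlotEq T j j') (hj : C.Inherits T O j' i) : C.Inherits T O j i :=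
  hj.imp fun _ ⟨hO, hj⟩ => ⟨hO, hC.slotEq_trans h hj⟩

theorem point_eq_iff {p : Path m Γ} (hp : C.Valid φ ψ T₀ p) (i j : Slot m) :
    C.point T₀ p i = C.point T₀ p j ↔ C.SlotEq (label T₀ p) i j := by
  induction p generalizing i j with
  | nil => simp [point, label, hC.slotEq_eq_iff]
  | cons a p ih =>
    obtain ⟨T, O⟩ := a
    obtain ⟨hp, hO⟩ := hp
    change _ ↔ C.SlotEq T i j
    by_cases hi : ∃ i', C.Inherits T O i i' <;> by_cases hj : ∃ j', C.Inherits T O j j'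
    · obtain ⟨i', hi', hi⟩ := exists_point_eq_of_inherits (T₀ := T₀) (p := p) hi
      obtain ⟨j', hj', hj⟩ := exists_point_eq_of_inherits (T₀ := T₀) (p := p) hj
      rw [hi, hj, ih hp, hC.slotEq_iff_of_inherits hO hi' hj']
    · obtain ⟨i', hi', hi⟩ := exists_point_eq_of_inherits (T₀ := T₀) (p := p) hi
      rw [hi, point_of_not_inherits hj]
      refine iff_of_false (point_ne_cons _ _ _) fun h => hj ⟨i', ?_⟩
      exact hC.inherits_congr (hC.slotEq_symm h) hi'
    · obtain ⟨j', hj', hj⟩ := exists_point_eq_of_inherits (T₀ := T₀) (p := p) hj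
      rw [hj, point_of_not_inherits hi]
      exact iff_of_false (point_ne_cons _ _ _).symm fun h => hi ⟨j', hC.inherits_congr h hj'⟩
    · rw [point_of_not_inherits hi, point_of_not_inherits hj, Prod.mk.injEq, hC.slotEq_eq_iff]
      exact and_iff_right rfl

theorem point_cons {T : Γ} {O : Slot m → Slot m → Prop} {p : Path m Γ}
    (hp : C.Valid φ ψ T₀ ((T, O) :: p)) {i j : Slot m} (h : O i j) :
    C.point T₀ ((T, O) :: p) j = C.point T₀ p i := by
  have hj : C.Inherits T O j i := ⟨j, h, hC.slotEq_refl T j⟩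
  obtain ⟨i', hi', heq⟩ := exists_point_eq_of_inherits (T₀ := T₀) (p := p) ⟨i, hj⟩
  rw [heq, hC.point_eq_iff hp.1, hC.slotEq_iff_of_inherits hp.2 hi' hj]
  exact hC.slotEq_refl T j

/-- The induction step for comparing two nodes: elements older than the last node are already
present at its parent. -/
theorem exists_val_iff_parent {T : Γ} {O : Slot m → Slot m → Prop} {p : Path m Γ}
    (hp : C.Valid φ ψ T₀ ((T, O) :: p)) {f : GF σ ⊕ κ} (hf : IsFeature φ ψ f)
    {l : Slot m → Slot m}
    (hl : ∀ x ∈ support f, (C.point T₀ ((T, O) :: p) (l x)).1 ≠ (T, O) :: p) :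
    ∃ l' : Slot m → Slot m,
      (∀ x ∈ support f, C.point T₀ ((T, O) :: p) (l x) = C.point T₀ p (l' x)) ∧
      (C.val T f l ↔ C.val (label T₀ p) f l') := by
  have hinherit (x : Slot m) : ∃ i j, x ∈ support f → O i j ∧ C.SlotEq T (l x) j ∧
      C.point T₀ ((T, O) :: p) (l x) = C.point T₀ p i := by
    by_cases hx : x ∈ support f
    · have : ∃ i, C.Inherits T O (l x) i := by
        by_contra h
        exact hl x hx (by rw [point_of_not_inherits h])
      obtain ⟨i, ⟨j, hO, hj⟩, hi⟩ := exists_point_eq_of_inherits (T₀ := T₀) (p := p) this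
      exact ⟨i, j, fun _ => ⟨hO, hj, hi⟩⟩
    · exact ⟨0, 0, fun h => absurd h hx⟩
  choose i j h using hinherit
  refine ⟨i, fun x hx => (h x hx).2.2, ?_⟩
  rw [hC.compat_self T f hf l j fun x hx => (h x hx).2.1]
  exact (hp.2 f hf i j fun x hx => (h x hx).1).symm

theorem val_iff_of_point_eq {p q : Path m Γ} (hp : C.Valid φ ψ T₀ p) (hq : C.Valid φ ψ T₀ q)
    {f : GF σ ⊕ κ} (hf : IsFeature φ ψ f) {l l' : Slot m → Slot m}
    (h : ∀ x ∈ support f, C.point T₀ p (l x) = C.point T₀ q (l' x)) :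
    C.val (label T₀ p) f l ↔ C.val (label T₀ q) f l' := by
  induction hn : p.length + q.length using Nat.strong_induction_on generalizing p q l l' with
  | _ n ih =>
  wlog hle : q.length ≤ p.length generalizing p q l l'
  · exact (this hq hp (fun x hx => (h x hx).symm) (by omega) (by omega)).symm
  by_cases heq : p = q
  · subst heq
    exact hC.compat_self _ f hf l l' fun x hx => (hC.point_eq_iff hp _ _).1 (h x hx)
  obtain _ | ⟨⟨T, O⟩, p⟩ := p
  · exact absurd (List.length_eq_zero_iff.1 (Nat.le_zero.1 hle)).symm heq
  obtain ⟨l₁, hl₁, hval⟩ := hC.exists_val_iff_parent hp hf fun x hx hx' => by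
    rw [h x hx] at hx'
    exact heq ((hx' ▸ point_suffix q (l' x)).eq_of_length_le hle)
  refine hval.trans (ih _ ?_ hp.1 hq (fun x hx => by rw [← hl₁ x hx, h x hx]) rfl)
  rw [← hn, List.length_cons]
  omega

end Saturated

variable (C φ ψ) in
/-- The nodes of the unravelling from the root type `T₀`. -/
def Node (T₀ : Γ) : Type := {p : Path m Γ // C.Valid φ ψ T₀ p}

variable (C φ ψ) in
/-- The universe of the unravelling. -/
def Element (T₀ : Γ) : Type :=
  {e : Path m Γ × (Slot m → Prop) // ∃ (ν : C.Node φ ψ T₀) (j : Slot m), C.point T₀ ν.1 j = e}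

namespace Node

/-- The type at a node. -/
def type (ν : C.Node φ ψ T₀) : Γ := label T₀ ν.1

/-- The element denoted by a slot at a node. -/
noncomputable def elem (ν : C.Node φ ψ T₀) (j : Slot m) : C.Element φ ψ T₀ :=
  ⟨C.point T₀ ν.1 j, ν, j, rfl⟩

/-- The root of the unravelling. -/
def root (T₀ : Γ) : C.Node φ ψ T₀ := ⟨[], trivial⟩

/-- Attaching a compatible type to a node. -/
def child (ν : C.Node φ ψ T₀) {O : Slot m → Slot m → Prop} {T : Γ}
    (h : C.Compat φ ψ ν.type O T) : C.Node φ ψ T₀ :=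
  ⟨(T, O) :: ν.1, ν.2, h⟩

theorem exists_elem_eq (d : C.Element φ ψ T₀) :
    ∃ (ν : C.Node φ ψ T₀) (j : Slot m), d = ν.elem j := by
  obtain ⟨e, ν, j, h⟩ := d
  exact ⟨ν, j, Subtype.ext h.symm⟩

end Node

namespace Saturated

variable (hC : C.Saturated φ ψ)
include hC

theorem elem_eq_iff (ν : C.Node φ ψ T₀) (i j : Slot m) :
    ν.elem i = ν.elem j ↔ C.SlotEq ν.type i j :=
  Subtype.ext_iff.trans (hC.point_eq_iff ν.2 i j)

theorem val_iff_of_elem_eq {ν ν' : C.Node φ ψ T₀} {f : GF σ ⊕ κ} (hf : IsFeature φ ψ f)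
    {l l' : Slot m → Slot m} (h : ∀ x ∈ support f, ν.elem (l x) = ν'.elem (l' x)) :
    C.val ν.type f l ↔ C.val ν'.type f l' :=
  hC.val_iff_of_point_eq ν.2 ν'.2 hf fun x hx => congrArg Subtype.val (h x hx)

theorem elem_child (ν : C.Node φ ψ T₀) {O : Slot m → Slot m → Prop} {T : Γ}
    (h : C.Compat φ ψ ν.type O T) {i j : Slot m} (hO : O i j) :
    (ν.child h).elem j = ν.elem i :=
  Subtype.ext (hC.point_cons ⟨ν.2, h⟩ hO)

end Saturated

variable (C φ ψ) in
/-- The structure unravelled from the root type `T₀`: a relation holds where some node says so. -/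
noncomputable def unravel (T₀ : Γ) : Str σ where
  dom := C.Element φ ψ T₀
  interp R r := ∃ (ν : C.Node φ ψ T₀) (t : Fin (σ.arity R) → ℕ) (l : Slot m → Slot m),
    Closure φ ψ (.atom (.rel R t)) ∧ C.Holds ν.type (.atom (.rel R t)) l ∧
      ∀ k, r k = ν.elem (l (t k))

theorem exists_node_forall_vars {α : Atomic σ} {v : ℕ → (C.unravel φ ψ T₀).dom}
    (hv : α.Sat (C.unravel φ ψ T₀) v) :
    ∃ ν : C.Node φ ψ T₀, ∀ x ∈ α.vars, ∃ i, v x = ν.elem i := by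
  cases α with
  | eq x y =>
    obtain ⟨ν, i, hi⟩ := Node.exists_elem_eq (v x)
    refine ⟨ν, fun z hz => ⟨i, ?_⟩⟩
    obtain rfl | rfl : z = x ∨ z = y := by simpa [Atomic.vars] using hz
    · exact hi
    · exact (Eq.symm hv).trans hi
  | rel R t =>
    obtain ⟨ν, t', l, -, -, h⟩ := hv
    refine ⟨ν, fun x hx => ?_⟩
    obtain ⟨k, -, rfl⟩ := Finset.mem_image.1 hx
    exact ⟨l (t' k), h k⟩

namespace Saturated

variable (hC : C.Saturated φ ψ)
include hC

theorem exists_guarded_forall_vars {α : Atomic σ} (hα : α.sig ⊆ φ.sig ∩ ψ.sig)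
    {v : ℕ → (C.unravel φ ψ T₀).dom} (hv : α.Sat (C.unravel φ ψ T₀) v) :
    ∃ (ν : C.Node φ ψ T₀) (ρ : Slot m → Slot m), C.Guarded φ ψ ν.type ρ ∧
      ∀ x ∈ α.vars, ∃ i, v x = ν.elem (ρ i) := by
  classical
  cases α with
  | eq x y =>
    obtain ⟨ν, h⟩ := exists_node_forall_vars hv
    obtain ⟨i, hi⟩ := h x (by simp [Atomic.vars])
    refine ⟨ν, fun _ => i, hC.guarded_const ν.type i, fun z hz => ⟨0, ?_⟩⟩
    obtain rfl | rfl : z = x ∨ z = y := by simpa [Atomic.vars] using hz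
    · exact hi
    · exact (Eq.symm hv).trans hi
  | rel R t =>
    obtain ⟨ν, t', l, ht', hl, h⟩ := hv
    rcases isEmpty_or_nonempty (Fin (σ.arity R)) with hR | ⟨⟨k₀⟩⟩
    · exact ⟨ν, fun _ => 0, hC.guarded_const ν.type 0,
        fun x hx => hR.elim (Finset.mem_image.1 hx).choose⟩
    · let ρ : Slot m → Slot m := fun i => if ∃ k, (t' k : Slot m) = i then l i else l (t' k₀)
      refine ⟨ν, ρ, ⟨_, ht'.sharedAtom_rel (hα rfl), l, hl, fun i => ?_⟩, fun x hx => ?_⟩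
      · by_cases hi : ∃ k, (t' k : Slot m) = i
        · obtain ⟨k, rfl⟩ := hi
          exact ⟨t' k, Finset.mem_image_of_mem _ (Finset.mem_univ k), if_pos ⟨k, rfl⟩⟩
        · exact ⟨t' k₀, Finset.mem_image_of_mem _ (Finset.mem_univ k₀), if_neg hi⟩
      · obtain ⟨k, -, rfl⟩ := Finset.mem_image.1 hx
        exact ⟨t' k, (h k).trans (congrArg ν.elem (if_pos ⟨k, rfl⟩).symm)⟩

theorem similar_step (ν ν' : C.Node φ ψ T₀) (μ : C.Node φ ψ T₁) {ρ ρ' s : Slot m → Slot m}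
    (hS : C.Similar φ ψ ν.type ρ μ.type s) (hρ' : C.Guarded φ ψ ν'.type ρ') :
    ∃ μ' : C.Node φ ψ T₁, C.Similar φ ψ ν'.type ρ' μ'.type id ∧
      ∀ i i', ν.elem (ρ i) = ν'.elem (ρ' i') → μ.elem (s i) = μ'.elem i' := by
  obtain ⟨k₀, hk₀⟩ := hC.exists_mosaic _ _ hρ'
  by_cases hov : ∃ i i', ν.elem (ρ i) = ν'.elem (ρ' i')
  · have hchoice (x : Slot m) : ∃ a b, ν.elem (ρ a) = ν'.elem (ρ' b) ∧
        ((∃ i, ν.elem (ρ i) = ν'.elem (ρ' x)) → b = x) := by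
      by_cases hx : ∃ i, ν.elem (ρ i) = ν'.elem (ρ' x)
      · exact ⟨hx.choose, x, hx.choose_spec, fun _ => rfl⟩
      · obtain ⟨i, i', h⟩ := hov
        exact ⟨i, i', h, fun h => absurd h hx⟩
    choose a b hab hb using hchoice
    obtain ⟨k₁, hk₁⟩ := hC.exists_mosaic _ _ (hρ'.comp b)
    have hν : C.InMosaic ν.type k₁ (ρ ∘ a) :=
      (hC.val_iff_of_elem_eq (f := .inr k₁) trivial fun x _ => hab x).2 hk₁
    obtain ⟨T, hT, hk⟩ := hC.extend _ _ _ _ _ _ _ ((hS.inMosaic k₁ a).1 hν) hk₁ hk₀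
    refine ⟨μ.child hT, hC.similar _ _ k₀ _ _ hk₀ hk, fun i i' h => ?_⟩
    have hi' : (μ.child hT).elem i' = μ.elem (s (a i')) :=
      hC.elem_child μ hT ⟨i', Set.mem_univ _, rfl, hb i' ⟨i, h⟩⟩
    rw [hi', hC.elem_eq_iff, ← hS.slotEq_iff hC, ← hC.elem_eq_iff, h, hab, hb i' ⟨i, h⟩]
  · obtain ⟨T, hT, hk⟩ := hC.realise μ.type _ k₀ _ hk₀
    exact ⟨μ.child hT, hC.similar _ _ k₀ _ _ hk₀ hk, fun i i' h => absurd ⟨i, i', h⟩ hov⟩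

variable (hφψ : Admissible φ ψ (m + 2))
include hφψ

/-- A relation may be witnessed at any node of the tree, but the value there is inherited by `ν`
once all components of the tuple live at `ν`. -/
theorem exists_holds_of_interp (ν : C.Node φ ψ T₀) (ρ : Slot m → Slot m) {R : σ.Rel}
    {s : Fin (σ.arity R) → Slot m}
    (h : (C.unravel φ ψ T₀).interp R fun k => ν.elem (ρ (s k))) :
    ∃ (t : Fin (σ.arity R) → ℕ) (l : Slot m → Slot m), Closure φ ψ (.atom (.rel R t)) ∧
      C.Holds ν.type (.atom (.rel R t)) (ρ ∘ l) ∧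
        ∀ k, ν.elem (ρ (l (t k))) = ν.elem (ρ (s k)) := by
  obtain ⟨ν', t, l', ht, hl', h⟩ := h
  obtain ⟨l, hl⟩ := exists_slot_map (hφψ.lt _ ht)
    (P := fun x j => ν.elem (ρ j) = ν'.elem (l' x)) fun x hx => by
      obtain ⟨k, -, rfl⟩ := Finset.mem_image.1 hx
      exact ⟨s k, h k⟩
  refine ⟨t, l, ht, (hC.val_iff_of_elem_eq (f := .inl _) ⟨ht, trivial⟩ ?_).2 hl', fun k => ?_⟩
  · rintro _ ⟨x, hx, rfl⟩
    exact hl x hx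
  · exact (hl _ (Finset.mem_image_of_mem _ (Finset.mem_univ k))).trans (h k).symm

theorem sat_atom_iff_holds {α : Atomic σ} (hα : Closure φ ψ (.atom α)) (ν : C.Node φ ψ T₀)
    (l : Slot m → Slot m) :
    α.Sat (C.unravel φ ψ T₀) (fun x => ν.elem (l x)) ↔ C.Holds ν.type (.atom α) l := by
  cases α with
  | eq x y => exact (hC.elem_eq_iff ν _ _).trans (hC.eq _ x y hα l).symm
  | rel R t =>
    refine ⟨fun h => ?_, fun h => ⟨ν, t, l, hα, h, fun _ => rfl⟩⟩
    obtain ⟨t', l', ht', hl', heq⟩ := hC.exists_holds_of_interp hφψ ν id h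
    exact hC.rel _ R t' t ht' hα l' l (fun k => (hC.elem_eq_iff ν _ _).1 (heq k)) hl'

theorem exists_holds_of_sat_guard {α : Atomic σ} (hα : Closure φ ψ (.atom α)) {χ : GF σ}
    (hχ : IsFeature (κ := κ) φ ψ (.inl χ)) (hfv : χ.fv ⊆ α.vars) (ν : C.Node φ ψ T₀)
    (l : Slot m → Slot m) {w : ℕ → (C.unravel φ ψ T₀).dom} (hw : ∀ x ∈ χ.fv, ν.elem (l x) = w x)
    (hsat : α.Sat _ w) :
    ∃ (ν' : C.Node φ ψ T₀) (l' : Slot m → Slot m), (∀ x ∈ α.vars, w x = ν'.elem (l' x)) ∧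
      C.Holds ν'.type (.atom α) l' ∧ (C.Holds ν.type χ l ↔ C.Holds ν'.type χ l') := by
  obtain ⟨ν', hν'⟩ := exists_node_forall_vars hsat
  obtain ⟨l', hl'⟩ := exists_slot_map (hφψ.lt _ hα) hν'
  refine ⟨ν', l', hl', ?_, hC.val_iff_of_elem_eq hχ ?_⟩
  · exact (hC.sat_atom_iff_holds hφψ hα ν' l').1 ((Atomic.sat_congr hl').1 hsat)
  · rintro _ ⟨x, hx, rfl⟩
    exact (hw x hx).trans (hl' x (hfv hx))

theorem sat_iff_holds {χ : GF σ} (hχ : Closure φ ψ χ) (ν : C.Node φ ψ T₀) (l : Slot m → Slot m) :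
    χ.Sat (C.unravel φ ψ T₀) (fun x => ν.elem (l x)) ↔ C.Holds ν.type χ l := by
  induction χ generalizing ν l with
  | atom α => exact hC.sat_atom_iff_holds hφψ hχ ν l
  | not χ ih => exact (not_congr (ih hχ.not ν l)).trans (hC.not _ _ hχ l).symm
  | and χ ξ ih₁ ih₂ =>
    exact (and_congr (ih₁ hχ.and_left ν l) (ih₂ hχ.and_right ν l)).trans (hC.and _ _ _ hχ l).symm
  | or χ ξ ih₁ ih₂ =>
    exact (or_congr (ih₁ hχ.or_left ν l) (ih₂ hχ.or_right ν l)).trans (hC.or _ _ _ hχ l).symm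
  | gex ys α χ ih =>
    have hfv := (hφψ.wellGuarded hχ).1
    refine (sat_gex_iff hfv).trans ⟨?_, ?_⟩
    · rintro ⟨w, hw, hα, hsat⟩
      obtain ⟨ν', l', hl', hα', hiff⟩ := hC.exists_holds_of_sat_guard hφψ hχ.gex_guard
        ⟨hχ, trivial⟩ (fun x hx => ((mem_fv_gex hfv).1 hx).1) ν l hw hα
      have hbody := (ih hχ.gex_body ν' l').1 ((sat_congr fun x hx => hl' x (hfv hx)).1 hsat)
      exact hiff.2 (hC.gex_intro _ _ _ _ hχ l' hα' hbody)
    · intro h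
      obtain ⟨T, l', hT, hα, hbody⟩ := hC.gex_elim _ _ _ _ hχ l h
      exact ⟨fun x => (ν.child hT).elem (l' x),
        fun x hx => (hC.elem_child ν hT ⟨x, Set.mem_image_of_mem _ hx, rfl, rfl⟩).symm,
        (hC.sat_atom_iff_holds hφψ hχ.gex_guard (ν.child hT) l').2 hα,
        (ih hχ.gex_body (ν.child hT) l').2 hbody⟩
  | gall ys α χ ih =>
    have hfv := (hφψ.wellGuarded hχ).1
    refine (sat_gall_iff hfv).trans ⟨?_, ?_⟩
    · intro hsat
      by_contra h
      obtain ⟨T, l', hT, hα, hbody⟩ := hC.gall_intro _ _ _ _ hχ l h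
      exact hbody ((ih hχ.gall_body (ν.child hT) l').1
        (hsat (fun x => (ν.child hT).elem (l' x))
          (fun x hx => (hC.elem_child ν hT ⟨x, Set.mem_image_of_mem _ hx, rfl, rfl⟩).symm)
          ((hC.sat_atom_iff_holds hφψ hχ.gall_guard (ν.child hT) l').2 hα)))
    · intro h w hw hα
      obtain ⟨ν', l', hl', hα', hiff⟩ := hC.exists_holds_of_sat_guard hφψ hχ.gall_guard
        ⟨hχ, trivial⟩ (fun x hx => ((mem_fv_gall hfv).1 hx).1) ν l hw hα
      exact (sat_congr fun x hx => hl' x (hfv hx)).2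
        ((ih hχ.gall_body ν' l').2 (hC.gall_elim _ _ _ _ hχ l' (hiff.1 h) hα'))

theorem sat_atom_of_similar {α : Atomic σ} (hα : α.sig ⊆ φ.sig ∩ ψ.sig) {ν : C.Node φ ψ T₀}
    {μ : C.Node φ ψ T₁} {ρ s : Slot m → Slot m} (hS : C.Similar φ ψ ν.type ρ μ.type s)
    {l : ℕ → Slot m} (h : α.Sat (C.unravel φ ψ T₀) fun x => ν.elem (ρ (l x))) :
    α.Sat (C.unravel φ ψ T₁) fun x => μ.elem (s (l x)) := by
  have helem (i j : Slot m) : ν.elem (ρ i) = ν.elem (ρ j) ↔ μ.elem (s i) = μ.elem (s j) := by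
    rw [hC.elem_eq_iff, hC.elem_eq_iff, hS.slotEq_iff hC]
  cases α with
  | eq x y => exact (helem _ _).1 h
  | rel R t =>
    obtain ⟨t', l', ht', hl', heq⟩ := hC.exists_holds_of_interp hφψ ν ρ h
    exact ⟨μ, t', s ∘ l', ht', (hS.atom _ (ht'.sharedAtom_rel (hα rfl)) l').1 hl',
      fun k => ((helem _ _).1 (heq k)).symm⟩

theorem sat_gex_of_similar {ys : List ℕ} {α : Atomic σ} {θ : GF σ}
    (hα : α.sig ⊆ φ.sig ∩ ψ.sig) (hfv : θ.fv ⊆ α.vars)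
    (hθ : ∀ (ν : C.Node φ ψ T₀) (μ : C.Node φ ψ T₁) (ρ s : Slot m → Slot m),
      C.Similar φ ψ ν.type ρ μ.type s → ∀ l : ℕ → Slot m,
        θ.Sat (C.unravel φ ψ T₀) (fun x => ν.elem (ρ (l x))) →
          θ.Sat (C.unravel φ ψ T₁) fun x => μ.elem (s (l x)))
    {ν : C.Node φ ψ T₀} {μ : C.Node φ ψ T₁} {ρ s : Slot m → Slot m}
    (hS : C.Similar φ ψ ν.type ρ μ.type s) {l : ℕ → Slot m}
    (h : (gex ys α θ).Sat (C.unravel φ ψ T₀) fun x => ν.elem (ρ (l x))) :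
    (gex ys α θ).Sat (C.unravel φ ψ T₁) fun x => μ.elem (s (l x)) := by
  obtain ⟨w, hw, hsat, hbody⟩ := (sat_gex_iff hfv).1 h
  obtain ⟨ν', ρ', hρ', hvars⟩ := hC.exists_guarded_forall_vars hα hsat
  obtain ⟨μ', hS', hstep⟩ := hC.similar_step ν ν' μ hS hρ'
  have (x : ℕ) : ∃ i, x ∈ α.vars → w x = ν'.elem (ρ' i) := by
    by_cases hx : x ∈ α.vars
    · exact (hvars x hx).imp fun i hi _ => hi
    · exact ⟨0, fun h => absurd h hx⟩
  choose l' hl' using this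
  refine (sat_gex_iff hfv).2 ⟨fun x => μ'.elem (l' x), fun x hx => ?_, ?_, ?_⟩
  · exact hstep _ _ ((hw x hx).trans (hl' x ((mem_fv_gex hfv).1 hx).1))
  · exact hC.sat_atom_of_similar hφψ hα hS' ((Atomic.sat_congr hl').1 hsat)
  · exact hθ ν' μ' ρ' id hS' l' ((sat_congr fun x hx => hl' x (hfv hx)).1 hbody)

theorem sat_iff_of_similar {θ : GF σ} (hwg : θ.WellGuarded) (hsig : θ.sig ⊆ φ.sig ∩ ψ.sig)
    (ν : C.Node φ ψ T₀) (μ : C.Node φ ψ T₁) {ρ s : Slot m → Slot m}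
    (hS : C.Similar φ ψ ν.type ρ μ.type s) (l : ℕ → Slot m) :
    θ.Sat (C.unravel φ ψ T₀) (fun x => ν.elem (ρ (l x))) ↔
      θ.Sat (C.unravel φ ψ T₁) fun x => μ.elem (s (l x)) := by
  induction θ generalizing ν μ ρ s l with
  | atom α =>
    exact ⟨hC.sat_atom_of_similar hφψ hsig hS, hC.sat_atom_of_similar hφψ hsig hS.symm⟩
  | not θ ih => exact not_congr (ih hwg hsig ν μ hS l)
  | and θ ξ ih₁ ih₂ =>
    rw [sig, Set.union_subset_iff] at hsig
    exact and_congr (ih₁ hwg.1 hsig.1 ν μ hS l) (ih₂ hwg.2 hsig.2 ν μ hS l)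
  | or θ ξ ih₁ ih₂ =>
    rw [sig, Set.union_subset_iff] at hsig
    exact or_congr (ih₁ hwg.1 hsig.1 ν μ hS l) (ih₂ hwg.2 hsig.2 ν μ hS l)
  | gex ys α θ ih =>
    rw [sig, Set.union_subset_iff] at hsig
    have ih := ih hwg.2 hsig.2
    exact ⟨hC.sat_gex_of_similar hφψ hsig.1 hwg.1 (fun ν μ _ _ hS l => (ih ν μ hS l).1) hS,
      hC.sat_gex_of_similar hφψ hsig.1 hwg.1 (fun ν μ _ _ hS l => (ih μ ν hS.symm l).2) hS.symm⟩
  | gall ys α θ ih =>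
    rw [sig, Set.union_subset_iff] at hsig
    have ih := ih hwg.2 hsig.2
    refine sat_gall_iff_not_gex.trans ((not_congr ?_).trans sat_gall_iff_not_gex.symm)
    exact ⟨
      hC.sat_gex_of_similar hφψ (θ := θ.not) hsig.1 hwg.1
        (fun ν μ _ _ hS l => mt (ih ν μ hS l).2) hS,
      hC.sat_gex_of_similar hφψ (θ := θ.not) hsig.1 hwg.1
        (fun ν μ _ _ hS l => mt (ih μ ν hS.symm l).1) hS.symm⟩

theorem not_hasGFInterpolant {T T' : Γ} (hS : C.Similar φ ψ T id T' id) (hφ : C.Holds T φ id)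
    (hψ : ¬ C.Holds T' ψ id) (n : ℕ) : ¬ HasGFInterpolant n φ ψ := by
  rintro ⟨θ, hwg, hsig, -, hφθ, hθψ⟩
  let ν : C.Node φ ψ T := Node.root T
  let μ : C.Node φ ψ T' := Node.root T'
  have hν : θ.Sat (C.unravel φ ψ T) fun x => ν.elem (id (x : Slot m)) :=
    hφθ _ _ ((hC.sat_iff_holds hφψ .left ν id).2 hφ)
  have hμ := (hC.sat_iff_of_similar hφψ hwg hsig ν μ hS _).1 hν
  exact hψ ((hC.sat_iff_holds hφψ .right μ id).1 (hθψ _ _ hμ))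

end Saturated

end MosaicSystem

/-! ### Compactness and saturation -/

/-- Renaming of the variables of an atom. -/
def Atomic.rename {σ : Sig} (f : ℕ → ℕ) : Atomic σ → Atomic σ
  | .eq i j => .eq (f i) (f j)
  | .rel R t => .rel R fun k => f (t k)

namespace Atomic

variable {σ : Sig} (f : ℕ → ℕ) (α : Atomic σ)

theorem sat_rename {A : Str σ} {v : ℕ → A.dom} :
    (α.rename f).Sat A v ↔ α.Sat A fun x => v (f x) := by
  cases α <;> rfl

theorem sig_rename : (α.rename f).sig = α.sig := by
  cases α <;> rfl

variable {f α} in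
theorem mem_vars_rename {y : ℕ} : y ∈ (α.rename f).vars ↔ ∃ x ∈ α.vars, f x = y := by
  cases α with
  | eq i j => simp [rename, vars, eq_comm]
  | rel R t => simp [rename, vars]

end Atomic

namespace GF

variable {σ : Sig} {τ : Set σ.Rel} {X Y : Set ℕ}

/-- `θ` is a formula of GF(`τ`) with free variables in `X`. -/
structure Over (τ : Set σ.Rel) (X : Set ℕ) (θ : GF σ) : Prop where
  wellGuarded : θ.WellGuarded
  sig : θ.sig ⊆ τ
  fv : ∀ x ∈ θ.fv, x ∈ X

namespace Over

theorem and {χ ξ : GF σ} (hχ : χ.Over τ X) (hξ : ξ.Over τ X) : (χ.and ξ).Over τ X :=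
  ⟨⟨hχ.wellGuarded, hξ.wellGuarded⟩, Set.union_subset hχ.sig hξ.sig,
    fun x hx => (Finset.mem_union.1 hx).elim (hχ.fv x) (hξ.fv x)⟩

theorem or {χ ξ : GF σ} (hχ : χ.Over τ X) (hξ : ξ.Over τ X) : (χ.or ξ).Over τ X :=
  ⟨⟨hχ.wellGuarded, hξ.wellGuarded⟩, Set.union_subset hχ.sig hξ.sig,
    fun x hx => (Finset.mem_union.1 hx).elim (hχ.fv x) (hξ.fv x)⟩

theorem not {χ : GF σ} (hχ : χ.Over τ X) : χ.not.Over τ X :=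
  ⟨hχ.wellGuarded, hχ.sig, hχ.fv⟩

theorem gex {ys : List ℕ} {α : Atomic σ} {χ : GF σ} (hα : α.sig ⊆ τ) (hχ : χ.Over τ α.vars)
    (hX : ∀ x ∈ α.vars, x ∉ ys → x ∈ X) : (GF.gex ys α χ).Over τ X :=
  ⟨⟨hχ.fv, hχ.wellGuarded⟩, Set.union_subset hα hχ.sig,
    fun x hx => hX x ((mem_fv_gex hχ.fv).1 hx).1 ((mem_fv_gex hχ.fv).1 hx).2⟩

theorem body_of_gex {ys : List ℕ} {α : Atomic σ} {χ : GF σ} (h : (GF.gex ys α χ).Over τ X) :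
    χ.Over τ α.vars :=
  ⟨h.wellGuarded.2, (Set.union_subset_iff.1 h.sig).2, h.wellGuarded.1⟩

end Over

/-- The renaming `f` adjusted to the scope of a quantifier: the bound variables `ys` are moved above
`b`, which avoids capture if the other variables have values below `b`. -/
def scopedRenaming (f : ℕ → ℕ) (ys : List ℕ) (b x : ℕ) : ℕ := if x ∈ ys then b + x else f x

theorem scopedRenaming_of_notMem (f : ℕ → ℕ) {ys : List ℕ} (b : ℕ) {x : ℕ} (hx : x ∉ ys) :
    scopedRenaming f ys b x = f x := if_neg hx

theorem scopedRenaming_mem_map_iff {f : ℕ → ℕ} (ys : List ℕ) {b x : ℕ} (hx : f x < b) :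
    scopedRenaming f ys b x ∈ ys.map (b + ·) ↔ x ∈ ys := by
  refine ⟨fun h => by_contra fun hy => ?_, fun hy => List.mem_map.2 ⟨x, hy, (if_pos hy).symm⟩⟩
  obtain ⟨z, -, hz⟩ := List.mem_map.1 (scopedRenaming_of_notMem f b hy ▸ h)
  omega

theorem sat_gex_scopedRenaming {ys : List ℕ} {α : Atomic σ} {χ χ' : GF σ} {f : ℕ → ℕ} {b : ℕ}
    (hb : ∀ x ∈ α.vars, f x < b) (hχ : χ.fv ⊆ α.vars)
    (hχ' : χ'.fv ⊆ (α.rename (scopedRenaming f ys b)).vars) {A : Str σ}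
    (hsat : ∀ v, χ'.Sat A v ↔ χ.Sat A fun x => v (scopedRenaming f ys b x)) (v : ℕ → A.dom) :
    (GF.gex (ys.map (b + ·)) (α.rename (scopedRenaming f ys b)) χ').Sat A v ↔
      (GF.gex ys α χ).Sat A fun x => v (f x) := by
  rw [sat_gex_iff hχ', sat_gex_iff hχ]
  simp only [mem_fv_gex hχ', mem_fv_gex hχ, hsat, Atomic.sat_rename]
  constructor
  · rintro ⟨w, hw, hα, hbody⟩
    refine ⟨fun x => w (scopedRenaming f ys b x), fun x ⟨hx, hy⟩ => ?_, hα, hbody⟩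
    rw [← scopedRenaming_of_notMem f b hy]
    exact hw _ ⟨Atomic.mem_vars_rename.2 ⟨x, hx, rfl⟩,
      (scopedRenaming_mem_map_iff ys (hb x hx)).not.2 hy⟩
  · rintro ⟨w, hw, hα, hbody⟩
    let u (y : ℕ) : A.dom := if b ≤ y then w (y - b) else v y
    have hu : ∀ x ∈ α.vars, u (scopedRenaming f ys b x) = w x := by
      intro x hx
      by_cases hy : x ∈ ys
      · simp [u, scopedRenaming, hy]
      · simp only [u, scopedRenaming_of_notMem f b hy, if_neg (hb x hx).not_ge, hw x ⟨hx, hy⟩]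
    refine ⟨u, fun x ⟨hx, hy⟩ => ?_, (Atomic.sat_congr hu).2 hα,
      (sat_congr fun x hx => hu x (hχ hx)).2 hbody⟩
    obtain ⟨z, hz, rfl⟩ := Atomic.mem_vars_rename.1 hx
    rw [scopedRenaming_mem_map_iff ys (hb z hz)] at hy
    rw [hu z hz, scopedRenaming_of_notMem f b hy, hw z ⟨hz, hy⟩]

theorem Over.exists_rename_gex {ys : List ℕ} {α : Atomic σ} {χ : GF σ}
    (h : (GF.gex ys α χ).Over τ X)
    (ih : ∀ g : ℕ → ℕ, ∃ χ' : GF σ, χ'.Over τ (g '' α.vars) ∧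
      ∀ (A : Str σ) v, χ'.Sat A v ↔ χ.Sat A fun x => v (g x))
    {f : ℕ → ℕ} (hf : ∀ x ∈ X, f x ∈ Y) :
    ∃ θ : GF σ, θ.Over τ Y ∧
      ∀ (A : Str σ) v, θ.Sat A v ↔ (GF.gex ys α χ).Sat A fun x => v (f x) := by
  have hχ := h.wellGuarded.1
  let b := α.vars.sup f + 1
  have hb (x : ℕ) (hx : x ∈ α.vars) : f x < b := Nat.lt_succ_of_le (Finset.le_sup hx)
  obtain ⟨χ', hχ', hsat⟩ := ih (scopedRenaming f ys b)
  have hfv : χ'.fv ⊆ (α.rename (scopedRenaming f ys b)).vars :=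
    fun x hx => Atomic.mem_vars_rename.2 (hχ'.fv x hx)
  refine ⟨.gex (ys.map (b + ·)) (α.rename (scopedRenaming f ys b)) χ',
    .gex ?_ ⟨hχ'.1, hχ'.2, hfv⟩ ?_, fun A v => sat_gex_scopedRenaming hb hχ hfv (hsat A) v⟩
  · exact (α.sig_rename _).trans_subset (Set.union_subset_iff.1 h.sig).1
  · rintro x hx hy
    obtain ⟨z, hz, rfl⟩ := Atomic.mem_vars_rename.1 hx
    rw [scopedRenaming_mem_map_iff ys (hb z hz)] at hy
    exact scopedRenaming_of_notMem f b hy ▸ hf z (h.fv z ((mem_fv_gex hχ).2 ⟨hz, hy⟩))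

theorem Over.exists_rename {θ : GF σ} (h : θ.Over τ X) {f : ℕ → ℕ} (hf : ∀ x ∈ X, f x ∈ Y) :
    ∃ θ' : GF σ, θ'.Over τ Y ∧ ∀ (A : Str σ) v, θ'.Sat A v ↔ θ.Sat A fun x => v (f x) := by
  induction θ generalizing X Y f with
  | atom α =>
    refine ⟨.atom (α.rename f), ⟨trivial, (α.sig_rename f).trans_subset h.sig, fun x hx => ?_⟩,
      fun A v => α.sat_rename f⟩
    obtain ⟨y, hy, rfl⟩ := Atomic.mem_vars_rename.1 hx
    exact hf y (h.fv y hy)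
  | not θ ih =>
    obtain ⟨θ', hθ', hsat⟩ := ih ⟨h.1, h.2, h.3⟩ hf
    exact ⟨θ'.not, hθ'.not, fun A v => not_congr (hsat A v)⟩
  | and θ ξ ih₁ ih₂ =>
    have hsig := Set.union_subset_iff.1 h.sig
    obtain ⟨θ', hθ', hθsat⟩ := ih₁ ⟨h.1.1, hsig.1, fun x hx => h.fv x (by simp [GF.fv, hx])⟩ hf
    obtain ⟨ξ', hξ', hξsat⟩ := ih₂ ⟨h.1.2, hsig.2, fun x hx => h.fv x (by simp [GF.fv, hx])⟩ hf
    exact ⟨_, hθ'.and hξ', fun A v => and_congr (hθsat A v) (hξsat A v)⟩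
  | or θ ξ ih₁ ih₂ =>
    have hsig := Set.union_subset_iff.1 h.sig
    obtain ⟨θ', hθ', hθsat⟩ := ih₁ ⟨h.1.1, hsig.1, fun x hx => h.fv x (by simp [GF.fv, hx])⟩ hf
    obtain ⟨ξ', hξ', hξsat⟩ := ih₂ ⟨h.1.2, hsig.2, fun x hx => h.fv x (by simp [GF.fv, hx])⟩ hf
    exact ⟨_, hθ'.or hξ', fun A v => or_congr (hθsat A v) (hξsat A v)⟩
  | gex ys α χ ih =>
    exact h.exists_rename_gex (fun g => ih h.body_of_gex fun _ => Set.mem_image_of_mem g) hf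
  | gall ys α χ ih =>
    have hbody : χ.Over τ α.vars := Over.body_of_gex (ys := ys) ⟨h.1, h.2, h.3⟩
    have hgex : (GF.gex ys α χ.not).Over τ X := ⟨h.1, h.2, h.3⟩
    obtain ⟨θ', hθ', hsat⟩ := hgex.exists_rename_gex (fun g => by
      obtain ⟨χ', hχ', hsat⟩ := ih hbody fun _ => Set.mem_image_of_mem g
      exact ⟨χ'.not, hχ'.not, fun A v => not_congr (hsat A v)⟩) hf
    exact ⟨θ'.not, hθ'.not, fun A v => (not_congr (hsat A v)).trans sat_gall_iff_not_gex.symm⟩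

theorem exists_conjunction {Δ : Set (GF σ)} (hΔ : Δ.Finite) (h : ∀ δ ∈ Δ, δ.Over τ X) :
    ∃ θ : GF σ, θ.Over τ X ∧ ∀ (A : Str σ) v, θ.Sat A v ↔ ∀ δ ∈ Δ, δ.Sat A v := by
  induction Δ, hΔ using Set.Finite.induction_on with
  | empty =>
    refine ⟨.gex [0] (.eq 0 0) (.atom (.eq 0 0)), .gex (Set.empty_subset _)
      ⟨trivial, Set.empty_subset _, fun _ h => h⟩ (by simp [Atomic.vars]), fun A v => ?_⟩
    exact iff_of_true ⟨v, rfl, rfl⟩ fun _ h => absurd h (Set.notMem_empty _)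
  | insert _ _ ih =>
    rw [Set.forall_mem_insert] at h
    obtain ⟨θ, hθ, hsat⟩ := ih h.2
    exact ⟨_, h.1.and hθ, fun A v => by rw [Set.forall_mem_insert, ← hsat]; rfl⟩

end GF

section Ultraproducts

open Filter

/-- A diagonal argument: the `n`-th entry of the sequence satisfies as many of the first `n`
conditions as possible. -/
theorem exists_forall_eventually {X : ℕ → Type} [∀ n, Nonempty (X n)] {U : Filter ℕ}
    (hU : U ≤ cofinite) (R : ℕ → ∀ n, X n → Prop)
    (h : ∀ k, ∀ᶠ n in U, ∃ x, ∀ j < k, R j n x) :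
    ∃ x : ∀ n, X n, ∀ j, ∀ᶠ n in U, R j n (x n) := by
  classical
  let P (n k : ℕ) : Prop := ∃ x, ∀ j < k, R j n x
  have hP (n : ℕ) : P n (Nat.findGreatest (P n) n) :=
    Nat.findGreatest_spec (P := P n) (Nat.zero_le n)
      ⟨Classical.arbitrary _, fun j hj => absurd hj j.not_lt_zero⟩
  choose x hx using hP
  refine ⟨x, fun j => ?_⟩
  have hlarge : ∀ᶠ n in U, j + 1 ≤ n :=
    hU (Nat.cofinite_eq_atTop ▸ eventually_ge_atTop (j + 1))
  filter_upwards [h (j + 1), hlarge] with n hn hle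
  exact hx n j (Nat.le_findGreatest hle hn)

namespace Str

variable {σ : Sig}

/-- The ultraproduct of a sequence of structures along a fixed nonprincipal ultrafilter. -/
noncomputable def ultraproduct (A : ℕ → Str σ) : Str σ where
  dom := (hyperfilter ℕ : Filter ℕ).Product fun n => (A n).dom
  interp R t := ∀ᶠ n in hyperfilter ℕ, (A n).interp R fun k => (t k).out n

namespace ultraproduct

variable {A : ℕ → Str σ}

/-- The element of the ultraproduct represented by a sequence. -/
noncomputable def mk (a : ∀ n, (A n).dom) : (ultraproduct A).dom :=
  Quotient.mk'' a

theorem mk_out (a : (ultraproduct A).dom) : mk (Quotient.out a) = a :=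
  Quotient.out_eq' a

theorem mk_out_assignment (w : ℕ → (ultraproduct A).dom) :
    (fun x => mk fun n => (w x).out n) = w :=
  funext fun x => mk_out (w x)

theorem mk_eq_mk_iff {a b : ∀ n, (A n).dom} :
    mk a = mk b ↔ ∀ᶠ n in hyperfilter ℕ, a n = b n :=
  Quotient.eq''

theorem out_mk (a : ∀ n, (A n).dom) : ∀ᶠ n in hyperfilter ℕ, (mk a).out n = a n :=
  mk_eq_mk_iff.1 (mk_out _)

theorem updOn_mk (v w : ∀ n, ℕ → (A n).dom) (ys : List ℕ) :
    updOn (fun x => mk fun n => v n x) ys (fun x => mk fun n => w n x) =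
      fun x => mk fun n => updOn (v n) ys (w n) x := by
  funext x
  unfold updOn
  split_ifs <;> rfl

theorem sat_atomic_iff (α : Atomic σ) (v : ∀ n, ℕ → (A n).dom) :
    α.Sat (ultraproduct A) (fun x => mk fun n => v n x) ↔
      ∀ᶠ n in hyperfilter ℕ, α.Sat (A n) (v n) := by
  cases α with
  | eq i j => exact mk_eq_mk_iff
  | rel R t =>
    have hout := eventually_all.2 fun k => out_mk fun n => v n (t k)
    exact eventually_congr (hout.mono fun n hn => by simp only [hn, Atomic.Sat])

theorem sat_gex_iff {ys : List ℕ} {α : Atomic σ} {χ : GF σ}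
    (hχ : ∀ v : ∀ n, ℕ → (A n).dom, χ.Sat (ultraproduct A) (fun x => mk fun n => v n x) ↔
      ∀ᶠ n in hyperfilter ℕ, χ.Sat (A n) (v n)) (v : ∀ n, ℕ → (A n).dom) :
    (GF.gex ys α χ).Sat (ultraproduct A) (fun x => mk fun n => v n x) ↔
      ∀ᶠ n in hyperfilter ℕ, (GF.gex ys α χ).Sat (A n) (v n) := by
  constructor
  · rintro ⟨w, hα, hsat⟩
    rw [← mk_out_assignment w, updOn_mk] at hα hsat
    filter_upwards [(sat_atomic_iff α _).1 hα, (hχ _).1 hsat] with n hαn hn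
    exact ⟨_, hαn, hn⟩
  · intro h
    have (n : ℕ) : ∃ w, (GF.gex ys α χ).Sat (A n) (v n) →
        α.Sat (A n) (updOn (v n) ys w) ∧ χ.Sat (A n) (updOn (v n) ys w) := by
      by_cases hn : (GF.gex ys α χ).Sat (A n) (v n)
      · exact hn.imp fun w hw _ => hw
      · exact ⟨v n, fun h => absurd h hn⟩
    choose w hw using this
    refine ⟨fun x => mk fun n => w n x, ?_, ?_⟩ <;> rw [updOn_mk]
    · exact (sat_atomic_iff α _).2 (h.mono fun n hn => (hw n hn).1)
    · exact (hχ _).2 (h.mono fun n hn => (hw n hn).2)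

theorem sat_iff (χ : GF σ) (v : ∀ n, ℕ → (A n).dom) :
    χ.Sat (ultraproduct A) (fun x => mk fun n => v n x) ↔
      ∀ᶠ n in hyperfilter ℕ, χ.Sat (A n) (v n) := by
  induction χ generalizing v with
  | atom α => exact sat_atomic_iff α v
  | not χ ih => exact (not_congr (ih v)).trans Ultrafilter.eventually_not.symm
  | and χ ξ ih₁ ih₂ => exact (and_congr (ih₁ v) (ih₂ v)).trans eventually_and.symm
  | or χ ξ ih₁ ih₂ => exact (or_congr (ih₁ v) (ih₂ v)).trans Ultrafilter.eventually_or.symm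
  | gex ys α χ ih => exact sat_gex_iff ih v
  | gall ys α χ ih =>
    have hnot (v : ∀ n, ℕ → (A n).dom) : χ.not.Sat (ultraproduct A) (fun x => mk fun n => v n x) ↔
        ∀ᶠ n in hyperfilter ℕ, χ.not.Sat (A n) (v n) :=
      (not_congr (ih v)).trans Ultrafilter.eventually_not.symm
    simp only [GF.sat_gall_iff_not_gex, sat_gex_iff hnot]
    exact Ultrafilter.eventually_not.symm

end ultraproduct

/-- `A` realises every countable set of formulas that is finitely satisfiable in `A` by
assignments with prescribed values on `F`. -/
def CountablySaturated (A : Str σ) : Prop :=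
  ∀ (v : ℕ → A.dom) (F : Set ℕ) (Θ : Set (GF σ)), Θ.Countable →
    (∀ Δ ⊆ Θ, Δ.Finite → ∃ w, Set.EqOn w v F ∧ ∀ δ ∈ Δ, δ.Sat A w) →
      ∃ w, Set.EqOn w v F ∧ ∀ θ ∈ Θ, θ.Sat A w

theorem countablySaturated_ultraproduct (A : ℕ → Str σ) :
    (ultraproduct A).CountablySaturated := by
  intro v F Θ hΘ hfin
  obtain ⟨e, he⟩ : ∃ e : ℕ → GF σ, Θ ⊆ Set.range e :=
    have : Nonempty (GF σ) := ⟨.atom (.eq 0 0)⟩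
    Set.countable_iff_exists_subset_range.1 hΘ
  have (n : ℕ) : Nonempty (ℕ → (A n).dom) := ⟨fun x => (v x).out n⟩
  let R (j n : ℕ) (w : ℕ → (A n).dom) : Prop :=
    (∀ x ∈ F, w x = (v x).out n) ∧ (e j ∈ Θ → (e j).Sat (A n) w)
  obtain ⟨w, hw⟩ : ∃ w : ∀ n, ℕ → (A n).dom, ∀ j, ∀ᶠ n in hyperfilter ℕ, R j n (w n) := by
    refine exists_forall_eventually hyperfilter_le_cofinite R fun k => ?_
    have hΔ : (Θ ∩ e '' Set.Iio k).Finite := ((Set.finite_Iio k).image e).inter_of_right Θ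
    obtain ⟨w, hwF, hw⟩ := hfin _ Set.inter_subset_left hΔ
    rw [← ultraproduct.mk_out_assignment w] at hw
    have hsat := (eventually_all_finite hΔ).2 fun δ hδ => (ultraproduct.sat_iff δ _).1 (hw δ hδ)
    filter_upwards [hsat] with n hn
    exact ⟨_, fun j hj => ⟨fun x hx => by rw [hwF hx], fun hj' => hn _ ⟨hj', j, hj, rfl⟩⟩⟩
  refine ⟨fun x => ultraproduct.mk fun n => w n x, fun x hx => ?_, fun θ hθ => ?_⟩
  · rw [← ultraproduct.mk_out (v x)]
    exact ultraproduct.mk_eq_mk_iff.2 ((hw 0).mono fun n hn => hn.1 x hx)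
  · obtain ⟨j, rfl⟩ := he hθ
    exact (ultraproduct.sat_iff _ _).2 ((hw j).mono fun n hn => hn.2 hθ)

end Str

theorem GF.compactness {σ : Sig} {Θ : Set (GF σ)} (hΘ : Θ.Countable)
    (hfin : ∀ Δ ⊆ Θ, Δ.Finite → ∃ (A : Str σ) (v : ℕ → A.dom), ∀ δ ∈ Δ, δ.Sat A v) :
    ∃ A : Str σ, A.CountablySaturated ∧ ∃ v : ℕ → A.dom, ∀ θ ∈ Θ, θ.Sat A v := by
  obtain ⟨e, he⟩ : ∃ e : ℕ → GF σ, Θ ⊆ Set.range e :=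
    have : Nonempty (GF σ) := ⟨.atom (.eq 0 0)⟩
    Set.countable_iff_exists_subset_range.1 hΘ
  choose A v hv using fun n => hfin (Θ ∩ e '' Set.Iio n) Set.inter_subset_left
    (((Set.finite_Iio n).image e).inter_of_right Θ)
  refine ⟨_, Str.countablySaturated_ultraproduct A,
    fun x => Str.ultraproduct.mk fun n => v n x, fun θ hθ => ?_⟩
  obtain ⟨j, rfl⟩ := he hθ
  have hlarge : ∀ᶠ n in (hyperfilter ℕ : Filter ℕ), j < n :=
    Nat.hyperfilter_le_atTop (eventually_gt_atTop j)
  exact (Str.ultraproduct.sat_iff _ _).2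
    (hlarge.mono fun n hn => hv n _ ⟨hθ, j, hn, rfl⟩)

end Ultraproducts

/-! ### Interpolants and equivalent saturated structures -/

namespace GF

variable {σ : Sig}

theorem exists_saturated_model_insert [Countable (GF σ)] (χ : GF σ) {S : Set (GF σ)}
    (h : ∀ Δ ⊆ S, Δ.Finite → ∃ (A : Str σ) (v : ℕ → A.dom), χ.Sat A v ∧ ∀ δ ∈ Δ, δ.Sat A v) :
    ∃ A : Str σ, A.CountablySaturated ∧ ∃ v : ℕ → A.dom, χ.Sat A v ∧ ∀ θ ∈ S, θ.Sat A v := by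
  obtain ⟨A, hA, v, hv⟩ := compactness (Set.to_countable (insert χ S)) fun Δ hΔ hfin => by
    obtain ⟨A, v, hχ, hS⟩ := h (Δ ∩ S) Set.inter_subset_right (hfin.inter_of_left S)
    refine ⟨A, v, fun δ hδ => ?_⟩
    obtain rfl | hδS := hΔ hδ
    · exact hχ
    · exact hS δ ⟨hδ, hδS⟩
  exact ⟨A, hA, v, hv χ (Set.mem_insert _ _), fun θ hθ => hv θ (Set.mem_insert_of_mem _ hθ)⟩

variable {φ ψ θ : GF σ} {n : ℕ}

theorem Over.hasGFInterpolant (hθ : θ.Over (φ.sig ∩ ψ.sig) Set.univ)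
    (hφ : φ.fv ⊆ Finset.range n) (hψ : ψ.fv ⊆ Finset.range n) (hφθ : GFEnt φ θ)
    (hθψ : GFEnt θ ψ) : HasGFInterpolant n φ ψ := by
  have sat_clamp {χ : GF σ} (hχ : χ.fv ⊆ Finset.range n) {A : Str σ} {v : ℕ → A.dom} :
      (χ.Sat A fun x => v (if x < n then x else 0)) ↔ χ.Sat A v :=
    sat_congr fun x hx => by simp only [if_pos (Finset.mem_range.1 (hχ hx))]
  obtain ⟨θ', hθ', hsat⟩ := hθ.exists_rename (f := fun x => if x < n then x else 0)
    fun x _ => Set.mem_range_self x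
  have hφθ' : GFEnt φ θ' := fun A v h => (hsat A v).2 (hφθ A _ ((sat_clamp hφ).2 h))
  have hθψ' : GFEnt θ' ψ := fun A v h => (sat_clamp hψ).1 (hθψ A _ ((hsat A v).1 h))
  have hfv {x : ℕ} (hx : x ∈ θ'.fv) : x < n ∨ x = 0 := by
    obtain ⟨y, rfl⟩ := hθ'.fv x hx
    dsimp only
    split_ifs with hy <;> simp [hy]
  obtain rfl | hn := n.eq_zero_or_pos
  · have hguard : θ'.fv ⊆ (Atomic.eq 0 0 : Atomic σ).vars := fun x hx => by
      simpa [Atomic.vars] using hfv hx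
    refine ⟨.gex [0] (.eq 0 0) θ', ⟨hguard, hθ'.wellGuarded⟩,
      Set.union_subset (Set.empty_subset _) hθ'.sig, fun x hx => ?_, fun A v h => ?_, ?_⟩
    · simp [mem_fv_gex hguard, Atomic.vars] at hx
    · exact ⟨v, rfl, hφθ' A _ ((sat_congr fun x hx => absurd (hφ hx) (by simp)).1 h)⟩
    · rintro A v ⟨w, -, h⟩
      exact (sat_congr fun x hx => absurd (hψ hx) (by simp)).1 (hθψ' A _ h)
  · exact ⟨θ', hθ'.wellGuarded, hθ'.sig, fun x hx => Finset.mem_range.2 (by grind), hφθ', hθψ'⟩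

theorem exists_equivalent_of_not_hasGFInterpolant [Countable (GF σ)]
    (hφ : φ.fv ⊆ Finset.range n) (hψ : ψ.fv ⊆ Finset.range n) (h : ¬ HasGFInterpolant n φ ψ) :
    ∃ A B : Str σ, A.CountablySaturated ∧ B.CountablySaturated ∧
      ∃ (v : ℕ → A.dom) (v' : ℕ → B.dom), φ.Sat A v ∧ ¬ ψ.Sat B v' ∧
        ∀ θ : GF σ, θ.Over (φ.sig ∩ ψ.sig) Set.univ → (θ.Sat A v ↔ θ.Sat B v') := by
  obtain ⟨B, hB, v', hψB, hcons⟩ := exists_saturated_model_insert ψ.not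
      (S := {θ | θ.Over (φ.sig ∩ ψ.sig) Set.univ ∧ GFEnt φ θ}) fun Δ hΔ hfin => by
    obtain ⟨θ, hθ, hsat⟩ := exists_conjunction hfin fun δ hδ => (hΔ hδ).1
    by_contra! hno
    refine h (hθ.hasGFInterpolant hφ hψ ?_ ?_)
    · exact fun A v hA => (hsat A v).2 fun δ hδ => (hΔ hδ).2 A v hA
    · intro A v hA
      by_contra hψA
      obtain ⟨δ, hδ, hfalse⟩ := hno A v hψA
      exact hfalse ((hsat A v).1 hA δ hδ)
  obtain ⟨A, hA, v, hφA, htheory⟩ := exists_saturated_model_insert φ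
      (S := {θ | θ.Over (φ.sig ∩ ψ.sig) Set.univ ∧ θ.Sat B v'}) fun Δ hΔ hfin => by
    obtain ⟨θ, hθ, hsat⟩ := exists_conjunction hfin fun δ hδ => (hΔ hδ).1
    by_contra! hno
    refine hcons θ.not ⟨hθ.not, fun A v hA hθA => ?_⟩ ((hsat B v').2 fun δ hδ => (hΔ hδ).2)
    obtain ⟨δ, hδ, hfalse⟩ := hno A v hA
    exact hfalse ((hsat A v).1 hθA δ hδ)
  refine ⟨A, B, hA, hB, v, v', hφA, hψB, fun θ hθ => ⟨fun hθA => ?_, fun hθB => ?_⟩⟩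
  · by_contra hθB
    exact htheory θ.not ⟨hθ.not, hθB⟩ hθA
  · exact htheory θ ⟨hθ, hθB⟩

end GF

/-! ### Tuples of saturated structures -/

namespace GF

theorem _root_.Str.CountablySaturated.exists_extension {σ : Sig} [Countable (GF σ)]
    {τ : Set σ.Rel} {A B : Str σ} (hB : B.CountablySaturated) {α : Atomic σ} (hα : α.sig ⊆ τ)
    {v : ℕ → A.dom} (hv : α.Sat A v) {F : Set ℕ} (hF : ∀ x ∈ F, x ∈ α.vars) {u : ℕ → B.dom}
    (h : ∀ θ : GF σ, θ.Over τ F → θ.Sat A v → θ.Sat B u) :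
    ∃ w, Set.EqOn w u F ∧ ∀ θ : GF σ, θ.Over τ α.vars → (θ.Sat A v ↔ θ.Sat B w) := by
  classical
  obtain ⟨w, hwF, hw⟩ := hB u F {θ | θ.Over τ α.vars ∧ θ.Sat A v} (Set.to_countable _)
      fun Δ hΔ hfin => by
    obtain ⟨θ, hθ, hsat⟩ := exists_conjunction hfin fun δ hδ => (hΔ hδ).1
    let ys := (α.vars.filter (· ∉ F)).toList
    have hmem {x : ℕ} : x ∈ (gex ys α θ).fv ↔ x ∈ F := by
      rw [mem_fv_gex hθ.fv, Finset.mem_toList, Finset.mem_filter]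
      exact ⟨fun hx => by_contra fun hxF => hx.2 ⟨hx.1, hxF⟩, fun hx => ⟨hF x hx, fun h => h.2 hx⟩⟩
    have hA : (gex ys α θ).Sat A v :=
      (sat_gex_iff hθ.fv).2 ⟨v, fun _ _ => rfl, hv, (hsat A v).2 fun δ hδ => (hΔ hδ).2⟩
    have hover : (gex ys α θ).Over τ F :=
      .gex hα hθ fun x hx hy => hmem.1 ((mem_fv_gex hθ.fv).2 ⟨hx, hy⟩)
    obtain ⟨w, hw, -, hθw⟩ := (sat_gex_iff hθ.fv).1 (h _ hover hA)
    exact ⟨w, fun x hx => (hw x (hmem.2 hx)).symm, (hsat B w).1 hθw⟩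
  refine ⟨w, hwF, fun θ hθ => ⟨fun hA => hw θ ⟨hθ, hA⟩, fun hBw => ?_⟩⟩
  by_contra hA
  exact hw θ.not ⟨hθ.not, hA⟩ hBw

end GF

/-- Tuples of fixed length in the members of a family of structures. -/
abbrev TupleIn {σ : Sig} {ι : Type} (A : ι → Str σ) (m : ℕ) : Type :=
  Σ s, Slot m → (A s).dom

namespace TupleIn

open GF

variable {σ : Sig} {ι : Type} {A : ι → Str σ} {m : ℕ} {τ : Set σ.Rel}

/-- Truth of a formula if the variable `x` denotes the component with index `l x`. -/
def Sat (T : TupleIn A m) (χ : GF σ) (l : ℕ → Slot m) : Prop :=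
  χ.Sat (A T.1) fun x => T.2 (l x)

/-- Reindexing of a tuple. -/
def comp (T : TupleIn A m) (ρ : Slot m → Slot m) : TupleIn A m :=
  ⟨T.1, T.2 ∘ ρ⟩

/-- The components are covered by an atom over `τ`. -/
def Guarded (τ : Set σ.Rel) (T : TupleIn A m) : Prop :=
  ∃ α : Atomic σ, α.sig ⊆ τ ∧ ∃ v, α.Sat (A T.1) v ∧ ∀ i, ∃ x ∈ α.vars, T.2 i = v x

/-- Two tuples satisfy the same formulas of GF(`τ`). -/
def Equivalent (τ : Set σ.Rel) (T T' : TupleIn A m) : Prop :=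
  ∀ θ : GF σ, θ.Over τ Set.univ → ∀ l, T.Sat θ l ↔ T'.Sat θ l

theorem Guarded.comp {T : TupleIn A m} (h : T.Guarded τ) (ρ : Slot m → Slot m) :
    (T.comp ρ).Guarded τ := by
  obtain ⟨α, hα, v, hv, hT⟩ := h
  exact ⟨α, hα, v, hv, fun i => hT (ρ i)⟩

namespace Equivalent

theorem refl (T : TupleIn A m) : T.Equivalent τ T :=
  fun _ _ _ => Iff.rfl

theorem symm {T T' : TupleIn A m} (h : T.Equivalent τ T') : T'.Equivalent τ T :=
  fun θ hθ l => (h θ hθ l).symm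

theorem trans {T T' T'' : TupleIn A m} (h : T.Equivalent τ T') (h' : T'.Equivalent τ T'') :
    T.Equivalent τ T'' :=
  fun θ hθ l => (h θ hθ l).trans (h' θ hθ l)

theorem comp {T T' : TupleIn A m} (h : T.Equivalent τ T') (ρ : Slot m → Slot m) :
    (T.comp ρ).Equivalent τ (T'.comp ρ) :=
  fun θ hθ l => h θ hθ (ρ ∘ l)

theorem eq_iff {T T' : TupleIn A m} (h : T.Equivalent τ T') (i j : Slot m) :
    T.2 i = T.2 j ↔ T'.2 i = T'.2 j := by
  simpa [TupleIn.Sat, GF.Sat, Atomic.Sat] using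
    h (.atom (.eq 0 1)) ⟨trivial, Set.empty_subset _, fun _ _ => trivial⟩
      (Function.update (fun _ => j) 0 i)

/-- The forth condition for guarded bisimulations. -/
theorem exists_guarded [Countable (GF σ)] {s s' : ι} (hs : (A s).CountablySaturated)
    {c : Slot m → (A s).dom} {d₀ d : Slot m → (A s').dom} (h : Equivalent τ ⟨s, c⟩ ⟨s', d₀⟩)
    (hd : Guarded τ ⟨s', d⟩) :
    ∃ c' : Slot m → (A s).dom, Guarded τ ⟨s, c'⟩ ∧ Equivalent τ ⟨s, c'⟩ ⟨s', d⟩ ∧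
      ∀ i j, d₀ i = d j → c i = c' j := by
  obtain ⟨α, hα, v, hv, hcover⟩ := hd
  choose π hπ hdπ using hcover
  have (x : ℕ) : ∃ i, (∃ j, d₀ j = v x) → d₀ i = v x := by
    by_cases hx : ∃ j, d₀ j = v x
    · exact hx.imp fun i hi _ => hi
    · exact ⟨0, fun h => absurd h hx⟩
  choose κ hκ using this
  obtain ⟨w, hwF, hw⟩ := hs.exists_extension hα hv (F := {x | x ∈ α.vars ∧ ∃ j, d₀ j = v x})
      (fun x hx => hx.1) (u := fun x => c (κ x)) fun θ hθ hsat =>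
    (h θ ⟨hθ.wellGuarded, hθ.sig, fun _ _ => trivial⟩ κ).2
      ((sat_congr fun x hx => hκ x (hθ.fv x hx).2).2 hsat)
  have hαw : α.Sat (A s) w := (hw (.atom α) ⟨trivial, hα, fun _ hx => hx⟩).1 hv
  refine ⟨fun j => w (π j), ⟨α, hα, w, hαw, fun j => ⟨π j, hπ j, rfl⟩⟩, fun θ hθ l => ?_,
    fun i j hij => ?_⟩
  · obtain ⟨θ', hθ', hsat⟩ := hθ.exists_rename (Y := α.vars) fun x _ => hπ (l x)
    have key := hw θ' hθ'
    rw [hsat, hsat] at key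
    exact key.symm.trans (sat_congr fun x _ => (hdπ (l x)).symm)
  · have hj : d₀ i = v (π j) := hij.trans (hdπ j)
    have hwj : w (π j) = c (κ (π j)) := hwF ⟨hπ j, i, hj⟩
    exact ((h.eq_iff i (κ (π j))).2 (hj.trans (hκ _ ⟨i, hj⟩).symm)).trans hwj.symm

theorem guarded [Countable (GF σ)] {T T' : TupleIn A m} (h : T.Equivalent τ T')
    (hT : (A T.1).CountablySaturated) (hT' : T'.Guarded τ) : T.Guarded τ := by
  obtain ⟨c', hc', -, heq⟩ := h.exists_guarded hT hT'
  obtain rfl : T.2 = c' := funext fun i => heq i i rfl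
  exact hc'

end Equivalent

variable (φ ψ : GF σ)

/-- The formulas of the closure that hold of a tuple under the various assignments of variables to
its components. -/
def table (T : TupleIn A m) : Set ({χ // Closure φ ψ χ} × (Slot m → Slot m)) :=
  {q | T.Sat q.1 fun x => q.2 x}

/-- The tables of all tuples that satisfy the same formulas in the shared signature. -/
def mosaic (T : TupleIn A m) : Set (Set ({χ // Closure φ ψ χ} × (Slot m → Slot m))) :=
  table φ ψ '' {T' | T'.Equivalent (φ.sig ∩ ψ.sig) T}

variable {φ ψ}

theorem table_comp {T T' : TupleIn A m} (h : T.table φ ψ = T'.table φ ψ) (ρ : Slot m → Slot m) :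
    (T.comp ρ).table φ ψ = (T'.comp ρ).table φ ψ :=
  Set.ext fun q => Set.ext_iff.1 h (q.1, ρ ∘ q.2)

theorem Equivalent.mosaic_eq {T T' : TupleIn A m} (h : T.Equivalent (φ.sig ∩ ψ.sig) T') :
    T.mosaic φ ψ = T'.mosaic φ ψ :=
  congrArg (table φ ψ '' ·) (Set.ext fun _ => ⟨fun hU => Equivalent.trans hU h,
    fun hU => Equivalent.trans hU h.symm⟩)

theorem exists_equivalent_table_eq {T T' : TupleIn A m} (h : T.mosaic φ ψ = T'.mosaic φ ψ) :
    ∃ U : TupleIn A m, U.Equivalent (φ.sig ∩ ψ.sig) T' ∧ U.table φ ψ = T.table φ ψ :=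
  h.subset ⟨T, .refl T, rfl⟩

theorem mosaic_comp_subset [Countable (GF σ)] (hA : ∀ s, (A s).CountablySaturated)
    {T T' : TupleIn A m} (hT : T.Guarded (φ.sig ∩ ψ.sig)) (h : T.mosaic φ ψ = T'.mosaic φ ψ)
    (ρ : Slot m → Slot m) :
    (T.comp ρ).mosaic φ ψ ⊆ (T'.comp ρ).mosaic φ ψ := by
  rintro _ ⟨U, hU, rfl⟩
  obtain ⟨c, -, hc, heq⟩ := hU.exists_guarded (hA _) hT
  have hUc : TupleIn.comp ⟨U.1, c⟩ ρ = U :=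
    Sigma.ext rfl (heq_of_eq (funext fun i => (heq i _ rfl).symm))
  obtain ⟨U', hU', htable⟩ := h.subset ⟨_, hc, rfl⟩
  rw [← hUc]
  exact ⟨U'.comp ρ, Equivalent.comp hU' ρ, table_comp htable ρ⟩

theorem mosaic_comp [Countable (GF σ)] (hA : ∀ s, (A s).CountablySaturated) {T T' : TupleIn A m}
    (hT : T.Guarded (φ.sig ∩ ψ.sig)) (hT' : T'.Guarded (φ.sig ∩ ψ.sig))
    (h : T.mosaic φ ψ = T'.mosaic φ ψ) (ρ : Slot m → Slot m) :
    (T.comp ρ).mosaic φ ψ = (T'.comp ρ).mosaic φ ψ :=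
  (mosaic_comp_subset hA hT h ρ).antisymm (mosaic_comp_subset hA hT' h.symm ρ)

end TupleIn

namespace MosaicSystem

open GF TupleIn

variable {σ : Sig} {ι : Type} {A : ι → Str σ} {m : ℕ} {Γ κ : Type} {C : MosaicSystem σ m Γ κ}
  {φ ψ : GF σ} {mos : TupleIn A m → κ}

/-- The type `t` records the formulas of the closure that hold of the tuple `T` and, with names
given by `mos`, the mosaics of the guarded tuples over `T`. -/
structure Describes (C : MosaicSystem σ m Γ κ) (φ ψ : GF σ) (mos : TupleIn A m → κ) (t : Γ)
    (T : TupleIn A m) : Prop where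
  holds : ∀ χ, Closure φ ψ χ → ∀ l, (C.Holds t χ l ↔ T.Sat χ fun x => l x)
  inMosaic : ∀ k ρ, C.InMosaic t k ρ ↔
    (T.comp ρ).Guarded (φ.sig ∩ ψ.sig) ∧ mos (T.comp ρ) = k

namespace Describes

variable {t t' : Γ} {T T' : TupleIn A m}

theorem slotEq_iff (h : C.Describes φ ψ mos t T) {i j : Slot m} :
    C.SlotEq t i j ↔ T.2 i = T.2 j := by
  have hsat (l : Slot m → Slot m) : C.Holds t (.atom (.eq 0 1)) l ↔ T.2 (l 0) = T.2 (l 1) := by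
    rw [h.holds _ .eq]
    simp [TupleIn.Sat, GF.Sat, Atomic.Sat]
  constructor
  · rintro ⟨l, rfl, rfl, hl⟩
    exact (hsat l).1 hl
  · intro hij
    refine ⟨Function.update (fun _ => j) 0 i, by simp, by simp, (hsat _).2 ?_⟩
    simpa using hij

theorem compat (h : C.Describes φ ψ mos t T) {b : Slot m → (A T.1).dom}
    (h' : C.Describes φ ψ mos t' ⟨T.1, b⟩) {O : Slot m → Slot m → Prop}
    (hO : ∀ i j, O i j → T.2 i = b j) : C.Compat φ ψ t O t' := by
  rintro (χ | k) hf l l' hl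
  · have hsat : T.Sat χ (fun x => l x) ↔ TupleIn.Sat (A := A) ⟨T.1, b⟩ χ fun x => l' x :=
      sat_congr fun x hx => hO _ _ (hl x ⟨x, hx, rfl⟩)
    exact (h.holds χ hf.1 l).trans (hsat.trans (h'.holds χ hf.1 l').symm)
  · have hcomp : T.comp l = TupleIn.comp ⟨T.1, b⟩ l' :=
      Sigma.ext rfl (heq_of_eq (funext fun i => hO _ _ (hl i trivial)))
    exact (h.inMosaic k l).trans (hcomp ▸ (h'.inMosaic k l').symm)

theorem guarded (h : C.Describes φ ψ mos t T) {ρ : Slot m → Slot m} (hρ : C.Guarded φ ψ t ρ) :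
    (T.comp ρ).Guarded (φ.sig ∩ ψ.sig) := by
  obtain ⟨α, hα, l, hl, hcover⟩ := hρ
  refine ⟨α, hα.2, fun x => T.2 (l x), (h.holds _ hα.1 l).1 hl, fun i => ?_⟩
  obtain ⟨x, hx, hρi⟩ := hcover i
  exact ⟨x, hx, congrArg T.2 hρi⟩

end Describes

/-- The types of `C` are the descriptions of the tuples of a family of saturated structures that
satisfy the same sentences of the shared signature, and mosaics are named injectively by `mos`. -/
structure Represents (C : MosaicSystem σ m Γ κ) (φ ψ : GF σ) (mos : TupleIn A m → κ) : Prop where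
  saturated : ∀ s, (A s).CountablySaturated
  exists_equivalent : ∀ s s', ∃ (c : Slot m → (A s).dom) (c' : Slot m → (A s').dom),
    TupleIn.Equivalent (A := A) (φ.sig ∩ ψ.sig) ⟨s, c⟩ ⟨s', c'⟩
  mos_eq_iff : ∀ T T', mos T = mos T' ↔ T.mosaic φ ψ = T'.mosaic φ ψ
  exists_tuple : ∀ t, ∃ T, C.Describes φ ψ mos t T
  exists_type : ∀ T, ∃ t, C.Describes φ ψ mos t T

namespace Represents

variable (hC : C.Represents φ ψ mos)
include hC

theorem exists_witness (hN : Admissible φ ψ (m + 2)) {t : Γ} {T : TupleIn A m}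
    (ht : C.Describes φ ψ mos t T) {ξ : GF σ} (hξ : Closure φ ψ ξ) {l : Slot m → Slot m}
    {w : ℕ → (A T.1).dom} (hw : ∀ x ∈ ξ.fv, T.2 (l x) = w x) :
    ∃ t', C.Compat φ ψ t (overlap (ξ.slots m) l id) t' ∧
      ∀ χ, Closure φ ψ χ → (C.Holds t' χ id ↔ χ.Sat (A T.1) w) := by
  have hval {χ : GF σ} (hχ : Closure φ ψ χ) {x : ℕ} (hx : x ∈ χ.fv) : ((x : Slot m) : ℕ) = x :=
    Fin.val_cast_of_lt (hN.lt χ hχ x hx)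
  obtain ⟨t', ht'⟩ := hC.exists_type ⟨T.1, fun i => w i⟩
  refine ⟨t', ht.compat ht' ?_, fun χ hχ => (ht'.holds χ hχ id).trans ?_⟩
  · rintro _ _ ⟨_, ⟨x, hx, rfl⟩, rfl, rfl⟩
    exact (hw x hx).trans (congrArg w (hval hξ hx).symm)
  · exact sat_congr fun x hx => congrArg w (hval hχ hx)

theorem exists_witness_gex (hN : Admissible φ ψ (m + 2)) {t : Γ} {ys : List ℕ} {α : Atomic σ}
    {χ : GF σ} (h : Closure φ ψ (.gex ys α χ)) {l : Slot m → Slot m}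
    (hl : C.Holds t (.gex ys α χ) l) :
    ∃ t' l', C.Compat φ ψ t (overlap ((gex ys α χ).slots m) l l') t' ∧
      C.Holds t' (.atom α) l' ∧ C.Holds t' χ l' := by
  obtain ⟨T, ht⟩ := hC.exists_tuple t
  obtain ⟨w, hw, hα, hχ⟩ := (sat_gex_iff (hN.wellGuarded h).1).1 ((ht.holds _ h l).1 hl)
  obtain ⟨t', hcompat, ht'⟩ := hC.exists_witness hN ht h hw
  exact ⟨t', id, hcompat, (ht' _ h.gex_guard).2 hα, (ht' _ h.gex_body).2 hχ⟩

theorem exists_witness_not_gall (hN : Admissible φ ψ (m + 2)) {t : Γ} {ys : List ℕ}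
    {α : Atomic σ} {χ : GF σ} (h : Closure φ ψ (.gall ys α χ)) {l : Slot m → Slot m}
    (hl : ¬ C.Holds t (.gall ys α χ) l) :
    ∃ t' l', C.Compat φ ψ t (overlap ((gall ys α χ).slots m) l l') t' ∧
      C.Holds t' (.atom α) l' ∧ ¬ C.Holds t' χ l' := by
  obtain ⟨T, ht⟩ := hC.exists_tuple t
  have hsat := mt (ht.holds _ h l).2 hl
  rw [TupleIn.Sat, sat_gall_iff (hN.wellGuarded h).1] at hsat
  push Not at hsat
  obtain ⟨w, hw, hα, hχ⟩ := hsat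
  obtain ⟨t', hcompat, ht'⟩ := hC.exists_witness hN ht h hw
  exact ⟨t', id, hcompat, (ht' _ h.gall_guard).2 hα, mt (ht' _ h.gall_body).1 hχ⟩

variable [Countable (GF σ)]

theorem mos_comp {T T' : TupleIn A m} (hT : T.Guarded (φ.sig ∩ ψ.sig))
    (hT' : T'.Guarded (φ.sig ∩ ψ.sig)) (h : mos T = mos T') (ρ : Slot m → Slot m) :
    mos (T.comp ρ) = mos (T'.comp ρ) :=
  (hC.mos_eq_iff _ _).2 (mosaic_comp hC.saturated hT hT' ((hC.mos_eq_iff _ _).1 h) ρ)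

theorem describes_congr {t : Γ} {T T' : TupleIn A m} (ht : C.Describes φ ψ mos t T)
    (hT : T.Guarded (φ.sig ∩ ψ.sig)) (hT' : T'.Guarded (φ.sig ∩ ψ.sig))
    (htable : T.table φ ψ = T'.table φ ψ) (hmos : mos T = mos T') : C.Describes φ ψ mos t T' where
  holds χ hχ l := (ht.holds χ hχ l).trans (Set.ext_iff.1 htable (⟨χ, hχ⟩, l))
  inMosaic k ρ := by
    rw [ht.inMosaic, hC.mos_comp hT hT' hmos]
    exact and_congr_left fun _ => iff_of_true (hT.comp ρ) (hT'.comp ρ)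

theorem similar {t t' : Γ} {k : κ} {ρ ρ' : Slot m → Slot m} (h : C.InMosaic t k ρ)
    (h' : C.InMosaic t' k ρ') : C.Similar φ ψ t ρ t' ρ' := by
  obtain ⟨T, ht⟩ := hC.exists_tuple t
  obtain ⟨T', ht'⟩ := hC.exists_tuple t'
  obtain ⟨hρ, hk⟩ := (ht.inMosaic k ρ).1 h
  obtain ⟨hρ', hk'⟩ := (ht'.inMosaic k ρ').1 h'
  have hmos : mos (T.comp ρ) = mos (T'.comp ρ') := hk.trans hk'.symm
  refine ⟨fun j l => ?_, fun α hα l => ?_⟩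
  · rw [ht.inMosaic, ht'.inMosaic]
    exact and_congr (iff_of_true (hρ.comp l) (hρ'.comp l))
      (Eq.congr_left (hC.mos_comp hρ hρ' hmos l))
  · obtain ⟨U, hU, htable⟩ := exists_equivalent_table_eq ((hC.mos_eq_iff _ _).1 hmos)
    have hover : (GF.atom α).Over (φ.sig ∩ ψ.sig) Set.univ := ⟨trivial, hα.2, fun _ _ => trivial⟩
    rw [ht.holds _ hα.1, ht'.holds _ hα.1]
    exact (Set.ext_iff.1 htable (⟨_, hα.1⟩, l)).symm.trans (hU _ hover fun x => l x)

theorem extend {t t₁ : Γ} {k₀ k₁ : κ} {ρ ρ₁ l : Slot m → Slot m} (h : C.InMosaic t k₁ ρ)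
    (h₁ : C.InMosaic t₁ k₁ (ρ₁ ∘ l)) (h₀ : C.InMosaic t₁ k₀ ρ₁) :
    ∃ t₂, C.Compat φ ψ t (overlap Set.univ ρ l) t₂ ∧ C.InMosaic t₂ k₀ id := by
  obtain ⟨T, ht⟩ := hC.exists_tuple t
  obtain ⟨T₁, ht₁⟩ := hC.exists_tuple t₁
  obtain ⟨hρ, hk⟩ := (ht.inMosaic _ _).1 h
  obtain ⟨hρ₁l, hk₁⟩ := (ht₁.inMosaic _ _).1 h₁
  obtain ⟨hρ₁, hk₀⟩ := (ht₁.inMosaic _ _).1 h₀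
  obtain ⟨⟨s, c⟩, hU, htable⟩ :=
    exists_equivalent_table_eq ((hC.mos_eq_iff _ _).1 (hk.trans hk₁.symm))
  have hmos : mos (T.comp ρ) = mos ⟨s, c⟩ :=
    (hk.trans hk₁.symm).trans ((hC.mos_eq_iff _ _).2 hU.mosaic_eq.symm)
  obtain ⟨t₀, ht₀⟩ := hC.exists_type (T.comp ρ)
  have ht₀' : C.Describes φ ψ mos t₀ ⟨s, c⟩ :=
    hC.describes_congr ht₀ hρ (hU.guarded (hC.saturated s) hρ₁l) htable.symm hmos
  obtain ⟨c', hc', hequiv, heq⟩ := hU.exists_guarded (hC.saturated s) hρ₁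
  obtain ⟨t₂, ht₂⟩ := hC.exists_type ⟨s, c'⟩
  have hcompat := (ht.compat ht₀ (O := fun i k => i = ρ k) fun _ _ => congrArg T.2).trans
    (ht₀'.compat ht₂ (O := fun k j => l k = j) fun i j hij => heq i j (hij ▸ rfl))
  refine ⟨t₂, fun f hf a b hab => hcompat f hf a b fun x hx => ?_, (ht₂.inMosaic _ _).2 ⟨hc', ?_⟩⟩
  · obtain ⟨k, -, hi, hj⟩ := hab x hx
    exact ⟨k, hi.symm, hj⟩
  · exact ((hC.mos_eq_iff _ _).2 hequiv.mosaic_eq).trans hk₀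

theorem realise {t t₁ : Γ} {k₀ : κ} {ρ₁ : Slot m → Slot m} (h : C.InMosaic t₁ k₀ ρ₁) :
    ∃ t₂, C.Compat φ ψ t (fun _ _ => False) t₂ ∧ C.InMosaic t₂ k₀ id := by
  obtain ⟨T, ht⟩ := hC.exists_tuple t
  obtain ⟨T₁, ht₁⟩ := hC.exists_tuple t₁
  obtain ⟨hρ₁, hk₀⟩ := (ht₁.inMosaic _ _).1 h
  obtain ⟨c, d, hcd⟩ := hC.exists_equivalent T.1 T₁.1
  obtain ⟨c', hc', hequiv, -⟩ := hcd.exists_guarded (hC.saturated _) hρ₁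
  obtain ⟨t₂, ht₂⟩ := hC.exists_type ⟨T.1, c'⟩
  exact ⟨t₂, ht.compat ht₂ fun _ _ => False.elim,
    (ht₂.inMosaic _ _).2 ⟨hc', ((hC.mos_eq_iff _ _).2 hequiv.mosaic_eq).trans hk₀⟩⟩

theorem toSaturated (hN : Admissible φ ψ (m + 2)) : C.Saturated φ ψ := by
  choose D hD using hC.exists_tuple
  exact
  { slotEq_refl := fun t i => (hD t).slotEq_iff.2 rfl
    eq := fun t x y h l => ((hD t).holds _ h l).trans (hD t).slotEq_iff.symm
    rel := fun t R a b ha hb l l' hl h => by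
      rw [(hD t).holds _ hb]
      have hval : (fun k => (D t).2 (l (a k))) = fun k => (D t).2 (l' (b k)) :=
        funext fun k => (hD t).slotEq_iff.1 (hl k)
      have hrel : (A (D t).1).interp R fun k => (D t).2 (l (a k)) := ((hD t).holds _ ha l).1 h
      rw [hval] at hrel
      exact hrel
    not := fun t χ h l =>
      ((hD t).holds _ h l).trans (not_congr ((hD t).holds χ h.not l).symm)
    and := fun t χ ξ h l => ((hD t).holds _ h l).trans
      (and_congr ((hD t).holds χ h.and_left l).symm ((hD t).holds ξ h.and_right l).symm)
    or := fun t χ ξ h l => ((hD t).holds _ h l).trans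
      (or_congr ((hD t).holds χ h.or_left l).symm ((hD t).holds ξ h.or_right l).symm)
    gex_intro := fun t ys α χ h l hα hχ => ((hD t).holds _ h l).2
      ((sat_gex_iff (hN.wellGuarded h).1).2 ⟨_, fun _ _ => rfl, ((hD t).holds _ h.gex_guard l).1 hα,
        ((hD t).holds _ h.gex_body l).1 hχ⟩)
    gex_elim := fun t ys α χ h l hl => hC.exists_witness_gex hN h hl
    gall_elim := fun t ys α χ h l hl hα => ((hD t).holds _ h.gall_body l).2
      ((sat_gall_iff (hN.wellGuarded h).1).1 (((hD t).holds _ h l).1 hl) _ (fun _ _ => rfl)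
        (((hD t).holds _ h.gall_guard l).1 hα))
    gall_intro := fun t ys α χ h l hl => hC.exists_witness_not_gall hN h hl
    compat_self := fun t => (hD t).compat (hD t) fun _ _ => (hD t).slotEq_iff.1
    exists_mosaic := fun t ρ h => ⟨_, ((hD t).inMosaic _ ρ).2 ⟨(hD t).guarded h, rfl⟩⟩
    similar := fun t t' k ρ ρ' h h' => hC.similar h h'
    extend := fun t t₁ k₀ k₁ ρ ρ₁ l h h₁ h₀ => hC.extend h h₁ h₀
    realise := fun t t₁ k₀ ρ₁ h => hC.realise h }

theorem similar_of_equivalent {t t' : Γ} {T T' : TupleIn A m} (ht : C.Describes φ ψ mos t T)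
    (ht' : C.Describes φ ψ mos t' T') (h : T.Equivalent (φ.sig ∩ ψ.sig) T') :
    C.Similar φ ψ t id t' id := by
  refine ⟨fun k l => ?_, fun α hα l => ?_⟩
  · rw [ht.inMosaic, ht'.inMosaic]
    exact and_congr
      ⟨(h.comp l).symm.guarded (hC.saturated _), (h.comp l).guarded (hC.saturated _)⟩
      (Eq.congr_left ((hC.mos_eq_iff _ _).2 (h.comp l).mosaic_eq))
  · rw [ht.holds _ hα.1, ht'.holds _ hα.1]
    exact h (.atom α) ⟨trivial, hα.2, fun _ _ => trivial⟩ fun x => l x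

end Represents

end MosaicSystem

/-! ### Finite refutations -/

theorem exists_fin_of_finite {X Y : Type*} [Finite Y] (f : X → Y) :
    ∃ k ≤ Nat.card Y, ∃ e : X → Fin k, e.Surjective ∧ ∀ x x', e x = e x' ↔ f x = f x' := by
  refine ⟨Nat.card (Set.range f), Finite.card_subtype_le _,
    Finite.equivFin _ ∘ Set.rangeFactorization f,
    (Equiv.surjective _).comp Set.rangeFactorization_surjective, fun x x' => ?_⟩
  rw [Function.comp_apply, Function.comp_apply, EmbeddingLike.apply_eq_iff_eq, Subtype.ext_iff]
  rfl

theorem natCard_set (X : Type*) [Finite X] : Nat.card (Set X) = 2 ^ Nat.card X := by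
  have := Fintype.ofFinite X
  rw [Nat.card_eq_fintype_card, Fintype.card_set, Nat.card_eq_fintype_card]

namespace MosaicSystem

open GF

variable {σ : Sig} {m : ℕ} {Γ κ : Type} {φ ψ : GF σ}

/-- A mosaic system which witnesses that there is no interpolant for `φ` and `ψ`: it is saturated
and has indistinguishable types of which the first satisfies `φ` and the second refutes `ψ`. -/
structure Refutes (C : MosaicSystem σ m Γ κ) (φ ψ : GF σ) : Prop where
  saturated : C.Saturated φ ψ
  exists_similar : ∃ T T', C.Similar φ ψ T id T' id ∧ C.Holds T φ id ∧ ¬ C.Holds T' ψ id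

theorem exists_represents {ι : Type} {A : ι → Str σ} (φ ψ : GF σ)
    [Finite {χ // Closure φ ψ χ}] (hA : ∀ s, (A s).CountablySaturated)
    (hequiv : ∀ s s', ∃ (c : Slot m → (A s).dom) (c' : Slot m → (A s').dom),
      TupleIn.Equivalent (A := A) (φ.sig ∩ ψ.sig) ⟨s, c⟩ ⟨s', c'⟩) :
    ∃ k ≤ 2 ^ 2 ^ (Nat.card {χ // Closure φ ψ χ} * (m + 2) ^ (m + 2)),
      ∃ g ≤ 2 ^ ((Nat.card {χ // Closure φ ψ χ} + k) * (m + 2) ^ (m + 2)),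
        ∃ (C : MosaicSystem σ m (Fin g) (Fin k)) (mos : TupleIn A m → Fin k),
          (∀ t χ l, C.Holds t χ l → Closure φ ψ χ) ∧ C.Represents φ ψ mos := by
  obtain ⟨k, hk, mos, -, hmos⟩ := exists_fin_of_finite (TupleIn.mosaic (A := A) (m := m) φ ψ)
  let truth (T : TupleIn A m) : GF σ ⊕ Fin k → (Slot m → Slot m) → Prop
    | .inl χ, l => Closure φ ψ χ ∧ T.Sat χ fun x => l x
    | .inr j, ρ => (T.comp ρ).Guarded (φ.sig ∩ ψ.sig) ∧ mos (T.comp ρ) = j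
  let typeOf (T : TupleIn A m) : Set (({χ // Closure φ ψ χ} ⊕ Fin k) × (Slot m → Slot m)) :=
    {q | truth T (q.1.map Subtype.val id) q.2}
  obtain ⟨g, hg, type, htype_surj, htype⟩ := exists_fin_of_finite typeOf
  let C : MosaicSystem σ m (Fin g) (Fin k) := ⟨fun t f l => ∃ T, type T = t ∧ truth T f l⟩
  have hC (T : TupleIn A m) : C.Describes φ ψ mos (type T) T := by
    constructor
    · refine fun χ hχ l => ⟨?_, fun h => ⟨T, rfl, hχ, h⟩⟩
      rintro ⟨T', hT', h⟩
      have hmem : (.inl ⟨χ, hχ⟩, l) ∈ typeOf T' := h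
      rw [(htype T' T).1 hT'] at hmem
      exact hmem.2
    · refine fun j ρ => ⟨?_, fun h => ⟨T, rfl, h⟩⟩
      rintro ⟨T', hT', h⟩
      have hmem : (.inr j, ρ) ∈ typeOf T' := h
      rwa [(htype T' T).1 hT'] at hmem
  refine ⟨k, by simpa [natCard_set] using hk, g, by simpa [natCard_set] using hg, C, mos,
    fun t χ l h => ?_, hA, hequiv, hmos, fun t => ?_, fun T => ⟨_, hC T⟩⟩
  · obtain ⟨T, -, hχ, -⟩ := h
    exact hχ
  · obtain ⟨T, rfl⟩ := htype_surj t
    exact ⟨T, hC T⟩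

theorem exists_refutes [Countable (GF σ)] [Finite {χ // Closure φ ψ χ}] {n : ℕ}
    (hN : Admissible φ ψ (m + 2)) (hφ : φ.fv ⊆ Finset.range n) (hψ : ψ.fv ⊆ Finset.range n)
    (h : ¬ HasGFInterpolant n φ ψ) :
    ∃ k ≤ 2 ^ 2 ^ (Nat.card {χ // Closure φ ψ χ} * (m + 2) ^ (m + 2)),
      ∃ g ≤ 2 ^ ((Nat.card {χ // Closure φ ψ χ} + k) * (m + 2) ^ (m + 2)),
        ∃ C : MosaicSystem σ m (Fin g) (Fin k),
          (∀ t χ l, C.Holds t χ l → Closure φ ψ χ) ∧ C.Refutes φ ψ := by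
  obtain ⟨A, B, hA, hB, v, v', hv, hv', hequiv⟩ := exists_equivalent_of_not_hasGFInterpolant hφ hψ h
  let F : Bool → Str σ := fun s => cond s A B
  let R : TupleIn F m := ⟨true, fun i => v i⟩
  let R' : TupleIn F m := ⟨false, fun i => v' i⟩
  have hR : R.Equivalent (φ.sig ∩ ψ.sig) R' := fun θ hθ l => by
    obtain ⟨θ', hθ', hsat⟩ := hθ.exists_rename (f := fun x => (l x : ℕ)) (Y := Set.univ)
      fun _ _ => trivial
    exact (hsat A v).symm.trans ((hequiv θ' hθ').trans (hsat B v'))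
  have hval {χ : GF σ} (hχ : Closure φ ψ χ) {x : ℕ} (hx : x ∈ χ.fv) : ((x : Slot m) : ℕ) = x :=
    Fin.val_cast_of_lt (hN.lt χ hχ x hx)
  obtain ⟨k, hk, g, hg, C, mos, hclosure, hC⟩ := exists_represents (A := F) (m := m) φ ψ
    (by rintro (_ | _) <;> assumption) (by
      rintro (_ | _) (_ | _)
      exacts [⟨_, _, .refl R'⟩, ⟨_, _, hR.symm⟩, ⟨_, _, hR⟩, ⟨_, _, .refl R⟩])
  obtain ⟨t, ht⟩ := hC.exists_type R
  obtain ⟨t', ht'⟩ := hC.exists_type R'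
  refine ⟨k, hk, g, hg, C, hclosure, hC.toSaturated hN, t, t',
    hC.similar_of_equivalent ht ht' hR, (ht.holds φ .left id).2 ?_,
    mt (ht'.holds ψ .right id).1 fun hsat => hv' ?_⟩
  · exact (sat_congr fun x hx => congrArg v (hval .left hx)).2 hv
  · exact (sat_congr fun x hx => congrArg v' (hval .right hx)).1 hsat

theorem Refutes.not_hasGFInterpolant {C : MosaicSystem σ m Γ κ} (hC : C.Refutes φ ψ)
    (hφψ : Admissible φ ψ (m + 2)) (n : ℕ) : ¬ HasGFInterpolant n φ ψ := by
  obtain ⟨T, T', hS, hφ, hψ⟩ := hC.exists_similar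
  exact hC.saturated.not_hasGFInterpolant hφψ hS hφ hψ n

end MosaicSystem

/-! ### Primitive recursive predicates on natural numbers -/

/-- The list of natural numbers with a given code. -/
def decodeList (e : ℕ) : List ℕ := Denumerable.ofNat (List ℕ) e

theorem decodeList_encode (l : List ℕ) : decodeList (Encodable.encode l) = l :=
  Denumerable.ofNat_encode l

namespace PrimrecRules

variable {α β γ : Type*} [Primcodable α] [Primcodable β] [Primcodable γ]

attribute [fun_prop] Primrec PrimrecPred

@[fun_prop]
theorem id' : Primrec fun a : α => a := .id

@[fun_prop]
theorem const (b : β) : Primrec fun _ : α => b := .const b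

@[fun_prop]
theorem comp {f : β → γ} {g : α → β} (hf : Primrec f) (hg : Primrec g) :
    Primrec fun a => f (g a) := hf.comp hg

@[fun_prop]
theorem fst {f : α → β × γ} (hf : Primrec f) : Primrec fun a => (f a).1 := Primrec.fst.comp hf

@[fun_prop]
theorem snd {f : α → β × γ} (hf : Primrec f) : Primrec fun a => (f a).2 := Primrec.snd.comp hf

@[fun_prop]
theorem prodMk {f : α → β} {g : α → γ} (hf : Primrec f) (hg : Primrec g) :
    Primrec fun a => (f a, g a) := hf.pair hg

@[fun_prop]
theorem pred_comp {p : β → Prop} {g : α → β} (hp : PrimrecPred p) (hg : Primrec g) :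
    PrimrecPred fun a => p (g a) := hp.comp hg

section Arithmetic

variable {f g : α → ℕ}

@[fun_prop]
theorem add (hf : Primrec f) (hg : Primrec g) : Primrec fun a => f a + g a :=
  Primrec.nat_add.comp hf hg

@[fun_prop]
theorem mul (hf : Primrec f) (hg : Primrec g) : Primrec fun a => f a * g a :=
  Primrec.nat_mul.comp hf hg

@[fun_prop]
theorem div (hf : Primrec f) (hg : Primrec g) : Primrec fun a => f a / g a :=
  Primrec.nat_div.comp hf hg

@[fun_prop]
theorem mod (hf : Primrec f) (hg : Primrec g) : Primrec fun a => f a % g a :=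
  Primrec.nat_mod.comp hf hg

@[fun_prop]
theorem pow (hf : Primrec f) (hg : Primrec g) : Primrec fun a => f a ^ g a :=
  Primrec₂.comp (Primrec₂.unpaired'.1 Nat.Primrec.pow) hf hg

@[fun_prop]
theorem natPair (hf : Primrec f) (hg : Primrec g) : Primrec fun a => Nat.pair (f a) (g a) :=
  Primrec₂.natPair.comp hf hg

@[fun_prop]
theorem unpair (hf : Primrec f) : Primrec fun a => (f a).unpair :=
  Primrec.unpair.comp hf

@[fun_prop]
theorem eq (hf : Primrec f) (hg : Primrec g) : PrimrecPred fun a => f a = g a :=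
  Primrec.eq.comp hf hg

@[fun_prop]
theorem testBit (hf : Primrec f) (hg : Primrec g) : PrimrecPred fun a => (f a).testBit (g a) := by
  have : PrimrecPred fun a => f a / 2 ^ g a % 2 = 1 := by fun_prop
  exact this.of_eq fun a => by simp [Nat.testBit_eq_decide_div_mod_eq]

@[fun_prop]
theorem length_decodeList (hf : Primrec f) : Primrec fun a => (decodeList (f a)).length :=
  Primrec.list_length.comp ((Primrec.ofNat (List ℕ)).comp hf)

@[fun_prop]
theorem getD_decodeList (hf : Primrec f) (hg : Primrec g) :
    Primrec fun a => (decodeList (f a)).getD (g a) 0 :=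
  (Primrec.list_getD 0).comp ((Primrec.ofNat (List ℕ)).comp hf) hg

@[fun_prop]
theorem mem_decodeList (hf : Primrec f) (hg : Primrec g) :
    PrimrecPred fun a => f a ∈ decodeList (g a) := by
  have hrel : PrimrecRel fun x y : ℕ => x = y := Primrec.eq
  exact (hrel.exists_mem_list.comp ((Primrec.ofNat (List ℕ)).comp hg) hf).of_eq fun a => by
    simp [decodeList]

@[fun_prop]
theorem sum_range {F : α → ℕ → ℕ} (hf : Primrec f) (hF : Primrec fun x : α × ℕ => F x.1 x.2) :
    Primrec fun a => ∑ x ∈ Finset.range (f a), F a x := by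
  have hstep : Primrec₂ fun (a : α) (x : ℕ × ℕ) => x.2 + F a x.1 := by
    unfold Primrec₂
    fun_prop
  refine (Primrec.nat_rec' hf (.const 0) hstep).of_eq fun a => ?_
  induction f a with
  | zero => rfl
  | succ n ih => rw [Finset.sum_range_succ, ← ih]

end Arithmetic

section Logic

variable {p q : α → Prop}

@[fun_prop]
theorem const_pred (r : Prop) : PrimrecPred fun _ : α => r := by
  classical exact ⟨inferInstance, .const (decide r)⟩

@[fun_prop]
theorem not (hp : PrimrecPred p) : PrimrecPred fun a => ¬ p a := hp.not

@[fun_prop]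
theorem and (hp : PrimrecPred p) (hq : PrimrecPred q) : PrimrecPred fun a => p a ∧ q a := hp.and hq

@[fun_prop]
theorem or (hp : PrimrecPred p) (hq : PrimrecPred q) : PrimrecPred fun a => p a ∨ q a := hp.or hq

@[fun_prop]
theorem imp (hp : PrimrecPred p) (hq : PrimrecPred q) : PrimrecPred fun a => p a → q a :=
  (hp.not.or hq).of_eq fun _ => imp_iff_not_or.symm

@[fun_prop]
theorem iff (hp : PrimrecPred p) (hq : PrimrecPred q) : PrimrecPred fun a => p a ↔ q a :=
  ((imp hp hq).and (imp hq hp)).of_eq fun _ => iff_def.symm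

variable {b : α → ℕ} {r : α → ℕ → Prop}

@[fun_prop]
theorem exists_lt (hb : Primrec b) (hr : PrimrecPred fun x : α × ℕ => r x.1 x.2) :
    PrimrecPred fun a => ∃ x < b a, r a x := by
  have hrel : PrimrecRel fun (x : ℕ) (a : α) => r a x := hr.comp (Primrec.snd.pair Primrec.fst)
  exact (hrel.exists_mem_list.comp (Primrec.list_range.comp hb) .id).of_eq fun a => by simp

@[fun_prop]
theorem forall_lt (hb : Primrec b) (hr : PrimrecPred fun x : α × ℕ => r x.1 x.2) :
    PrimrecPred fun a => ∀ x < b a, r a x :=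
  (not (exists_lt (r := fun a x => ¬ r a x) hb (not hr))).of_eq fun a => by simp

end Logic

end PrimrecRules

/-! ### Codes of formulas -/

theorem mem_le_encode {l : List ℕ} {x : ℕ} (hx : x ∈ l) : x ≤ Encodable.encode l := by
  induction l with
  | nil => simp at hx
  | cons y l ih =>
    rw [Encodable.encode_list_cons, Encodable.encode_nat]
    obtain rfl | hx := List.mem_cons.1 hx
    · exact (Nat.left_le_pair _ _).trans (Nat.le_succ _)
    · exact ((ih hx).trans (Nat.right_le_pair _ _)).trans (Nat.le_succ _)

theorem pair_zero_le_pair {t a b : ℕ} (h : a ≤ b) : Nat.pair 0 a ≤ Nat.pair t b := by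
  obtain ht | rfl := (Nat.zero_le t).lt_or_eq <;> obtain h | rfl := h.lt_or_eq
  · exact ((Nat.pair_lt_pair_left _ ht).trans (Nat.pair_lt_pair_right _ h)).le
  · exact (Nat.pair_lt_pair_left _ ht).le
  · exact (Nat.pair_lt_pair_right _ h).le
  · exact le_rfl

theorem exists_testBit_iff (M : ℕ) (p : ℕ → Prop) :
    ∃ P < 2 ^ M, ∀ i, P.testBit i ↔ i < M ∧ p i := by
  classical
  refine ⟨Nat.ofBits fun i : Fin M => decide (p i), Nat.ofBits_lt_two_pow _, fun i => ?_⟩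
  by_cases hi : i < M
  · simp [hi]
  · simp [hi, Nat.testBit_ofBits_ge _ _ (not_lt.1 hi)]

section Encoding

variable {ar : ℕ → ℕ}

theorem Atomic.le_encAtom {α : Atomic ⟨ℕ, ar⟩} {x : ℕ} (hx : x ∈ α.vars) : x ≤ encAtom α := by
  cases α with
  | eq i j =>
    obtain rfl | rfl : x = i ∨ x = j := by simpa [vars] using hx
    · exact (Nat.left_le_pair _ _).trans (Nat.right_le_pair _ _)
    · exact (Nat.right_le_pair _ _).trans (Nat.right_le_pair _ _)
  | rel R t =>
    have hmem : x ∈ List.ofFn t := by simpa [vars, List.mem_ofFn] using hx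
    exact (mem_le_encode hmem).trans ((Nat.right_le_pair _ _).trans (Nat.right_le_pair _ _))

theorem encAtom_injective : Function.Injective (encAtom (ar := ar)) := by
  rintro (⟨i, j⟩ | ⟨R, t⟩) (⟨i', j'⟩ | ⟨R', t'⟩) h
  · simp only [encAtom, Nat.pair_eq_pair, true_and] at h
    rw [h.1, h.2]
  · simp [encAtom] at h
  · simp [encAtom] at h
  · simp only [encAtom, Nat.pair_eq_pair, true_and] at h
    obtain ⟨rfl, h⟩ := h
    rw [List.ofFn_injective (Encodable.encode_injective h)]

theorem encGF_injective : Function.Injective (encGF (ar := ar)) := by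
  intro χ
  induction χ with
  | atom α =>
    rintro (_ | _ | _ | _ | _ | _) h <;> simp only [encGF, Nat.pair_eq_pair] at h
    case atom => rw [encAtom_injective h.2]
    all_goals simp at h
  | not χ ih =>
    rintro (_ | _ | _ | _ | _ | _) h <;> simp only [encGF, Nat.pair_eq_pair] at h
    case not => rw [ih h.2]
    all_goals simp at h
  | and χ ξ ih₁ ih₂ =>
    rintro (_ | _ | _ | _ | _ | _) h <;> simp only [encGF, Nat.pair_eq_pair] at h
    case and => rw [ih₁ h.2.1, ih₂ h.2.2]
    all_goals simp at h
  | or χ ξ ih₁ ih₂ =>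
    rintro (_ | _ | _ | _ | _ | _) h <;> simp only [encGF, Nat.pair_eq_pair] at h
    case or => rw [ih₁ h.2.1, ih₂ h.2.2]
    all_goals simp at h
  | gex ys α χ ih =>
    rintro (_ | _ | _ | _ | _ | _) h <;> simp only [encGF, Nat.pair_eq_pair] at h
    case gex => rw [Encodable.encode_injective h.2.1, encAtom_injective h.2.2.1, ih h.2.2.2]
    all_goals simp at h
  | gall ys α χ ih =>
    rintro (_ | _ | _ | _ | _ | _) h <;> simp only [encGF, Nat.pair_eq_pair] at h
    case gall => rw [Encodable.encode_injective h.2.1, encAtom_injective h.2.2.1, ih h.2.2.2]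
    all_goals simp at h

theorem encGF_eq_zero_one : encGF (.atom (.eq 0 1) : GF ⟨ℕ, ar⟩) = 1 := by
  rw [encGF, encAtom]
  decide

theorem GF.le_encGF {χ : GF ⟨ℕ, ar⟩} {x : ℕ} (hx : x ∈ χ.fv) : x ≤ encGF χ := by
  induction χ with
  | atom α => exact (α.le_encAtom hx).trans (Nat.right_le_pair _ _)
  | not χ ih => exact (ih hx).trans (Nat.right_le_pair _ _)
  | and χ ξ ih₁ ih₂ | or χ ξ ih₁ ih₂ =>
    refine le_trans ?_ (Nat.right_le_pair _ _)
    obtain hx | hx := Finset.mem_union.1 hx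
    · exact (ih₁ hx).trans (Nat.left_le_pair _ _)
    · exact (ih₂ hx).trans (Nat.right_le_pair _ _)
  | gex ys α χ ih | gall ys α χ ih =>
    refine le_trans ?_ ((Nat.right_le_pair _ _).trans (Nat.right_le_pair _ _))
    obtain hx | hx := Finset.mem_union.1 (Finset.mem_filter.1 hx).1
    · exact (α.le_encAtom hx).trans (Nat.left_le_pair _ _)
    · exact (ih hx).trans (Nat.right_le_pair _ _)

end Encoding

theorem GF.Closure.trans {σ : Sig} {φ ψ χ ξ : GF σ} (h : Closure φ ψ χ) (hξ : Closure χ χ ξ) :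
    Closure φ ψ ξ := by
  induction hξ with
  | left | right => exact h
  | eq => exact .eq
  | not _ ih => exact ih.not
  | and_left _ ih => exact ih.and_left
  | and_right _ ih => exact ih.and_right
  | or_left _ ih => exact ih.or_left
  | or_right _ ih => exact ih.or_right
  | gex_guard _ ih => exact ih.gex_guard
  | gex_body _ ih => exact ih.gex_body
  | gall_guard _ ih => exact ih.gall_guard
  | gall_body _ ih => exact ih.gall_body

theorem GF.Closure.sig_subset {σ : Sig} {φ χ : GF σ} (h : Closure φ φ χ) : χ.sig ⊆ φ.sig := by
  induction h with
  | left | right => exact subset_rfl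
  | eq => exact Set.empty_subset _
  | not _ ih => exact ih
  | and_left _ ih | or_left _ ih | gex_guard _ ih | gall_guard _ ih =>
    exact Set.subset_union_left.trans ih
  | and_right _ ih | or_right _ ih | gex_body _ ih | gall_body _ ih =>
    exact Set.subset_union_right.trans ih

theorem GF.mem_sig_iff {σ : Sig} {φ : GF σ} {R : σ.Rel} :
    R ∈ φ.sig ↔ ∃ t, Closure φ φ (.atom (.rel R t)) := by
  refine ⟨fun h => ?_, fun ⟨t, ht⟩ => ht.sig_subset rfl⟩
  have atom {ξ : GF σ} {α : Atomic σ} (hα : Closure ξ ξ (atom α)) (hR : R ∈ α.sig) :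
      ∃ t, Closure ξ ξ (.atom (.rel R t)) := by
    cases α with
    | eq => exact hR.elim
    | rel R' t =>
      obtain rfl : R = R' := hR
      exact ⟨t, hα⟩
  induction φ with
  | atom α => exact atom .left h
  | not χ ih => exact (ih h).imp fun _ => Closure.left.not.trans
  | and χ ξ ih₁ ih₂ =>
    exact h.elim (fun h => (ih₁ h).imp fun _ => Closure.left.and_left.trans)
      fun h => (ih₂ h).imp fun _ => Closure.left.and_right.trans
  | or χ ξ ih₁ ih₂ =>
    exact h.elim (fun h => (ih₁ h).imp fun _ => Closure.left.or_left.trans)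
      fun h => (ih₂ h).imp fun _ => Closure.left.or_right.trans
  | gex ys α χ ih =>
    exact h.elim (atom Closure.left.gex_guard)
      fun h => (ih h).imp fun _ => Closure.left.gex_body.trans
  | gall ys α χ ih =>
    exact h.elim (atom Closure.left.gall_guard)
      fun h => (ih h).imp fun _ => Closure.left.gall_body.trans

namespace GFCode

/-- `x` is a variable of the atom with code `A`. -/
def AtomVar (x A : ℕ) : Prop :=
  A.unpair.1 = 0 ∧ (x = A.unpair.2.unpair.1 ∨ x = A.unpair.2.unpair.2) ∨
    A.unpair.1 ≠ 0 ∧ x ∈ decodeList A.unpair.2.unpair.2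

/-- `c` is the code of an atom or of a quantified formula. -/
def IsBase (c : ℕ) : Prop := c.unpair.1 = 0 ∨ c.unpair.1 = 4 ∨ c.unpair.1 = 5

/-- `x` is a free variable of the atom or quantified formula with code `c`. -/
def BaseVar (x c : ℕ) : Prop :=
  c.unpair.1 = 0 ∧ AtomVar x c.unpair.2 ∨
    c.unpair.1 ≠ 0 ∧ AtomVar x c.unpair.2.unpair.2.unpair.1 ∧ x ∉ decodeList c.unpair.2.unpair.1

/-- `d` codes an immediate subformula or the guard of the formula with code `c`. -/
def Subcode (d c : ℕ) : Prop :=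
  c.unpair.1 = 1 ∧ d = c.unpair.2 ∨
    (c.unpair.1 = 2 ∨ c.unpair.1 = 3) ∧ (d = c.unpair.2.unpair.1 ∨ d = c.unpair.2.unpair.2) ∨
    (c.unpair.1 = 4 ∨ c.unpair.1 = 5) ∧
      (d = Nat.pair 0 c.unpair.2.unpair.2.unpair.1 ∨ d = c.unpair.2.unpair.2.unpair.2)

/-- `c` lies in every set of codes below `a + b + 2`, given by the bits of a number `P`, that
contains `a`, `b` and the code `1` of `x₀ = x₁` and is closed under `Subcode`. -/
def InClosure (a b c : ℕ) : Prop :=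
  ∀ P < 2 ^ (a + b + 2), P.testBit a → P.testBit b → P.testBit 1 →
    (∀ e < a + b + 2, P.testBit e → ∀ d < a + b + 2, Subcode d e → P.testBit d) → P.testBit c

/-- The relation symbol `R` occurs in the formula with code `a`. -/
def Occurs (R a : ℕ) : Prop :=
  ∃ e < a + a + 2, InClosure a a (Nat.pair 0 (Nat.pair 1 (Nat.pair R e)))

/-- `A` codes an atom of the closure over the signature shared by the formulas coded by `a` and
`b`. -/
def SharedAtom (a b A : ℕ) : Prop :=
  InClosure a b (Nat.pair 0 A) ∧
    (A.unpair.1 ≠ 0 → Occurs A.unpair.2.unpair.1 a ∧ Occurs A.unpair.2.unpair.1 b)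

section Primrec

variable {α : Type*} [Primcodable α] {f g h : α → ℕ}

@[fun_prop]
theorem AtomVar.primrecPred (hf : Primrec f) (hg : Primrec g) :
    PrimrecPred fun a => AtomVar (f a) (g a) := by
  unfold AtomVar
  fun_prop

@[fun_prop]
theorem IsBase.primrecPred (hf : Primrec f) : PrimrecPred fun a => IsBase (f a) := by
  unfold IsBase
  fun_prop

@[fun_prop]
theorem BaseVar.primrecPred (hf : Primrec f) (hg : Primrec g) :
    PrimrecPred fun a => BaseVar (f a) (g a) := by
  unfold BaseVar
  fun_prop

@[fun_prop]
theorem Subcode.primrecPred (hf : Primrec f) (hg : Primrec g) :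
    PrimrecPred fun a => Subcode (f a) (g a) := by
  unfold Subcode
  fun_prop

@[fun_prop]
theorem InClosure.primrecPred (hf : Primrec f) (hg : Primrec g) (hh : Primrec h) :
    PrimrecPred fun a => InClosure (f a) (g a) (h a) := by
  unfold InClosure
  fun_prop

@[fun_prop]
theorem Occurs.primrecPred (hf : Primrec f) (hg : Primrec g) :
    PrimrecPred fun a => Occurs (f a) (g a) := by
  unfold Occurs
  fun_prop

@[fun_prop]
theorem SharedAtom.primrecPred (hf : Primrec f) (hg : Primrec g) (hh : Primrec h) :
    PrimrecPred fun a => SharedAtom (f a) (g a) (h a) := by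
  unfold SharedAtom
  fun_prop

end Primrec

variable {ar : ℕ → ℕ} {φ ψ χ : GF ⟨ℕ, ar⟩}

theorem atomVar_iff {x : ℕ} {α : Atomic ⟨ℕ, ar⟩} : AtomVar x (encAtom α) ↔ x ∈ α.vars := by
  cases α with
  | eq i j => simp [AtomVar, encAtom, Atomic.vars]
  | rel R t => simp [AtomVar, encAtom, Atomic.vars, decodeList_encode, List.mem_ofFn]

theorem isBase_iff : IsBase (encGF χ) ↔ χ.IsBase := by
  cases χ <;> simp [IsBase, GF.IsBase, encGF]

theorem baseVar_iff (hχ : χ.WellGuarded) (hbase : χ.IsBase) {x : ℕ} :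
    BaseVar x (encGF χ) ↔ x ∈ χ.fv := by
  cases χ with
  | atom α => simp [BaseVar, encGF, atomVar_iff, GF.fv]
  | not | and | or => exact hbase.elim
  | gex | gall => simp [BaseVar, encGF, atomVar_iff, GF.mem_fv_gex, GF.mem_fv_gall, hχ.1,
      decodeList_encode]

theorem exists_closure_of_subcode {d : ℕ} (hχ : GF.Closure φ ψ χ) (hd : Subcode d (encGF χ)) :
    ∃ ξ, GF.Closure φ ψ ξ ∧ encGF ξ = d := by
  cases χ <;> simp only [Subcode, encGF, Nat.unpair_pair, Nat.reduceEqDiff, false_and, true_and,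
    false_or, or_false, reduceCtorEq, or_self] at hd
  case not χ => exact ⟨χ, hχ.not, hd.symm⟩
  case and χ ξ =>
    obtain rfl | rfl := hd
    exacts [⟨χ, hχ.and_left, rfl⟩, ⟨ξ, hχ.and_right, rfl⟩]
  case or χ ξ =>
    obtain rfl | rfl := hd
    exacts [⟨χ, hχ.or_left, rfl⟩, ⟨ξ, hχ.or_right, rfl⟩]
  case gex ys α χ =>
    obtain rfl | rfl := hd
    exacts [⟨.atom α, hχ.gex_guard, rfl⟩, ⟨χ, hχ.gex_body, rfl⟩]
  case gall ys α χ =>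
    obtain rfl | rfl := hd
    exacts [⟨.atom α, hχ.gall_guard, rfl⟩, ⟨χ, hχ.gall_body, rfl⟩]

theorem encGF_lt (hχ : GF.Closure φ ψ χ) : encGF χ < encGF φ + encGF ψ + 2 := by
  have right_right {a b c : ℕ} : c ≤ Nat.pair a (Nat.pair b c) :=
    (Nat.right_le_pair _ _).trans (Nat.right_le_pair _ _)
  induction hχ with
  | left => omega
  | right => omega
  | eq => rw [encGF_eq_zero_one]; omega
  | not _ ih => exact (Nat.right_le_pair _ _).trans_lt ih
  | and_left _ ih | or_left _ ih =>
    exact ((Nat.left_le_pair _ _).trans (Nat.right_le_pair _ _)).trans_lt ih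
  | and_right _ ih | or_right _ ih => exact right_right.trans_lt ih
  | gex_guard _ ih | gall_guard _ ih =>
    exact (pair_zero_le_pair ((Nat.left_le_pair _ _).trans (Nat.right_le_pair _ _))).trans_lt ih
  | gex_body _ ih | gall_body _ ih => exact ((Nat.right_le_pair _ _).trans right_right).trans_lt ih

theorem InClosure.exists_closure {c : ℕ} (h : InClosure (encGF φ) (encGF ψ) c) :
    ∃ χ, GF.Closure φ ψ χ ∧ encGF χ = c := by
  obtain ⟨P, hP, hbit⟩ := exists_testBit_iff (encGF φ + encGF ψ + 2)
    fun c => ∃ χ, GF.Closure φ ψ χ ∧ encGF χ = c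
  have hmem {χ : GF ⟨ℕ, ar⟩} (hχ : GF.Closure φ ψ χ) : P.testBit (encGF χ) :=
    (hbit _).2 ⟨encGF_lt hχ, χ, hχ, rfl⟩
  refine ((hbit c).1 (h P hP (hmem .left) (hmem .right) ?_ fun e _ he d hd hde => ?_)).2
  · exact encGF_eq_zero_one (ar := ar) ▸ hmem .eq
  · obtain ⟨-, χ, hχ, rfl⟩ := (hbit e).1 he
    exact (hbit d).2 ⟨hd, exists_closure_of_subcode hχ hde⟩

theorem inClosure_of_closure (hχ : GF.Closure φ ψ χ) :
    InClosure (encGF φ) (encGF ψ) (encGF χ) := by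
  intro P _ hφ hψ heq hsub
  have step {ξ ζ : GF ⟨ℕ, ar⟩} (hξ : GF.Closure φ ψ ξ) (hζ : GF.Closure φ ψ ζ)
      (hbit : P.testBit (encGF ξ)) (h : Subcode (encGF ζ) (encGF ξ)) : P.testBit (encGF ζ) :=
    hsub _ (encGF_lt hξ) hbit _ (encGF_lt hζ) h
  induction hχ with
  | left => exact hφ
  | right => exact hψ
  | eq => rwa [encGF_eq_zero_one]
  | not h ih => exact step h h.not ih (by simp [Subcode, encGF])
  | and_left h ih => exact step h h.and_left ih (by simp [Subcode, encGF])
  | and_right h ih => exact step h h.and_right ih (by simp [Subcode, encGF])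
  | or_left h ih => exact step h h.or_left ih (by simp [Subcode, encGF])
  | or_right h ih => exact step h h.or_right ih (by simp [Subcode, encGF])
  | gex_guard h ih => exact step h h.gex_guard ih (by simp [Subcode, encGF])
  | gex_body h ih => exact step h h.gex_body ih (by simp [Subcode, encGF])
  | gall_guard h ih => exact step h h.gall_guard ih (by simp [Subcode, encGF])
  | gall_body h ih => exact step h h.gall_body ih (by simp [Subcode, encGF])

theorem inClosure_iff : InClosure (encGF φ) (encGF ψ) (encGF χ) ↔ GF.Closure φ ψ χ := by
  refine ⟨fun h => ?_, inClosure_of_closure⟩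
  obtain ⟨ξ, hξ, hcode⟩ := h.exists_closure
  rwa [← encGF_injective hcode]

theorem occurs_iff {R : ℕ} : Occurs R (encGF φ) ↔ R ∈ φ.sig := by
  rw [GF.mem_sig_iff]
  constructor
  · rintro ⟨e, -, h⟩
    obtain ⟨χ, hχ, hcode⟩ := h.exists_closure
    obtain ⟨t, rfl⟩ : ∃ t, χ = .atom (.rel R t) := by
      rcases χ with (_ | ⟨R', t⟩) | _ | _ | _ | _ | _
      case atom.rel =>
        obtain rfl : R' = R := (show R' = R ∧ _ by simpa [encGF, encAtom] using hcode).1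
        exact ⟨t, rfl⟩
      all_goals simp [encGF, encAtom] at hcode
    exact ⟨t, hχ⟩
  · rintro ⟨t, ht⟩
    refine ⟨Encodable.encode (List.ofFn t), ?_, inClosure_of_closure ht⟩
    exact (((Nat.right_le_pair R _).trans (Nat.right_le_pair 1 _)).trans
      (Nat.right_le_pair 0 _)).trans_lt (encGF_lt ht)

theorem sharedAtom_iff {α : Atomic ⟨ℕ, ar⟩} :
    SharedAtom (encGF φ) (encGF ψ) (encAtom α) ↔ GF.SharedAtom φ ψ α := by
  refine and_congr (inClosure_iff (χ := .atom α)) ?_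
  cases α with
  | eq i j => simp [encAtom, Atomic.sig]
  | rel R t => simp [encAtom, Atomic.sig, occurs_iff]

theorem injective_encGF_closure (φ ψ : GF ⟨ℕ, ar⟩) :
    Function.Injective fun χ : {χ // GF.Closure φ ψ χ} =>
      (⟨encGF χ.1, encGF_lt χ.2⟩ : Fin (encGF φ + encGF ψ + 2)) :=
  fun _ _ h => Subtype.ext (encGF_injective (Fin.mk.inj h))

theorem card_closure_le (φ ψ : GF ⟨ℕ, ar⟩) :
    Nat.card {χ // GF.Closure φ ψ χ} ≤ encGF φ + encGF ψ + 2 := by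
  simpa using Nat.card_le_card_of_injective _ (injective_encGF_closure φ ψ)

theorem admissible (hφ : φ.WellGuarded) (hψ : ψ.WellGuarded) :
    GF.Admissible φ ψ (encGF φ + encGF ψ + 2) :=
  ⟨hφ, hψ, fun _ hχ _ hx => (GF.le_encGF hx).trans_lt (encGF_lt hχ)⟩

end GFCode

/-! ### Numerical presentations of mosaic systems -/

/-- A presentation `((a, b), (g, k), P)` of a mosaic system for the formulas with codes `a` and
`b`: it has types `0, …, g - 1` and mosaics `0, …, k - 1`, and its truth values are bits of `P`. -/
abbrev Presentation : Type := (ℕ × ℕ) × (ℕ × ℕ) × ℕ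

namespace Presentation

section Definitions

variable (s : Presentation)

/-- The code of the first formula. -/
def left : ℕ := s.1.1

/-- The code of the second formula. -/
def right : ℕ := s.1.2

/-- The number of types. -/
def types : ℕ := s.2.1.1

/-- The number of mosaics. -/
def mosaics : ℕ := s.2.1.2

/-- The number of slots, which exceeds the code of every formula of the closure. -/
def size : ℕ := s.left + s.right + 2

/-- The number of maps between slots. -/
def maps : ℕ := s.size ^ s.size

/-- The value at `x` of the map between slots with code `l`, that is, a digit of `l` in base
`size`. Variables are reduced modulo `size`, as in the cast to `Slot`. -/
def digit (l x : ℕ) : ℕ := l / s.size ^ (x % s.size) % s.size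

/-- The code of a map between slots. -/
def mapCode (f : ℕ → ℕ) : ℕ := ∑ x ∈ Finset.range s.size, f x * s.size ^ x

/-- Composition of maps between slots. -/
def comp (l l' : ℕ) : ℕ := s.mapCode fun x => s.digit l (s.digit l' x)

/-- Truth of the formula with code `c` in the type `t`; even numbers are the codes of formulas. -/
def Holds (t c l : ℕ) : Prop := s.2.2.testBit (Nat.pair t (Nat.pair (2 * c) l))

/-- Membership in the mosaic `k` for the type `t`; odd numbers are the codes of mosaics. -/
def InMosaic (t k l : ℕ) : Prop := s.2.2.testBit (Nat.pair t (Nat.pair (2 * k + 1) l))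

/-- The counterpart of `GF.Closure`. -/
def InClosure (c : ℕ) : Prop := GFCode.InClosure s.left s.right c

/-- The counterpart of `GF.SharedAtom`. -/
def SharedAtom (A : ℕ) : Prop := GFCode.SharedAtom s.left s.right A

/-- The counterpart of `MosaicSystem.SlotEq`. -/
def SlotEq (t i j : ℕ) : Prop :=
  ∃ l < s.maps, s.digit l 0 = i ∧ s.digit l 1 = j ∧ s.Holds t 1 l

/-- The counterpart of `overlap`, for the variables in `p`. -/
def Overlap (p : ℕ → Prop) (l l' i j : ℕ) : Prop :=
  ∃ x < s.size, p x ∧ s.digit l x = i ∧ s.digit l' x = j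

/-- The counterpart of `MosaicSystem.Compat`. -/
def Compat (t : ℕ) (O : ℕ → ℕ → Prop) (t' : ℕ) : Prop :=
  (∀ c < s.size, s.InClosure c → GFCode.IsBase c → ∀ l < s.maps, ∀ l' < s.maps,
    (∀ x < s.size, GFCode.BaseVar x c → O (s.digit l x) (s.digit l' x)) →
      (s.Holds t c l ↔ s.Holds t' c l')) ∧
  ∀ k < s.mosaics, ∀ l < s.maps, ∀ l' < s.maps,
    (∀ x < s.size, O (s.digit l x) (s.digit l' x)) → (s.InMosaic t k l ↔ s.InMosaic t' k l')

/-- The counterpart of `MosaicSystem.Guarded`. -/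
def Guarded (t ρ : ℕ) : Prop :=
  ∃ A < s.size, s.SharedAtom A ∧ ∃ l < s.maps, s.Holds t (Nat.pair 0 A) l ∧
    ∀ i < s.size, ∃ x < s.size, GFCode.AtomVar x A ∧ s.digit ρ i = s.digit l x

/-- The counterpart of `MosaicSystem.Similar`. -/
def Similar (t ρ t' ρ' : ℕ) : Prop :=
  (∀ k < s.mosaics, ∀ l < s.maps,
    (s.InMosaic t k (s.comp ρ l) ↔ s.InMosaic t' k (s.comp ρ' l))) ∧
  ∀ A < s.size, s.SharedAtom A → ∀ l < s.maps,
    (s.Holds t (Nat.pair 0 A) (s.comp ρ l) ↔ s.Holds t' (Nat.pair 0 A) (s.comp ρ' l))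

/-- The counterpart of `MosaicSystem.RespectsConnectives`. -/
def RespectsConnectives : Prop :=
  (∀ t < s.types, ∀ i < s.size, s.SlotEq t i i) ∧
  (∀ t < s.types, ∀ x < s.size, ∀ y < s.size,
    s.InClosure (Nat.pair 0 (Nat.pair 0 (Nat.pair x y))) → ∀ l < s.maps,
      (s.Holds t (Nat.pair 0 (Nat.pair 0 (Nat.pair x y))) l ↔
        s.SlotEq t (s.digit l x) (s.digit l y))) ∧
  (∀ t < s.types, ∀ R < s.size, ∀ e < s.size, ∀ e' < s.size,
    s.InClosure (Nat.pair 0 (Nat.pair 1 (Nat.pair R e))) →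
    s.InClosure (Nat.pair 0 (Nat.pair 1 (Nat.pair R e'))) → ∀ l < s.maps, ∀ l' < s.maps,
      (∀ k < (decodeList e).length,
        s.SlotEq t (s.digit l ((decodeList e).getD k 0)) (s.digit l' ((decodeList e').getD k 0))) →
      s.Holds t (Nat.pair 0 (Nat.pair 1 (Nat.pair R e))) l →
        s.Holds t (Nat.pair 0 (Nat.pair 1 (Nat.pair R e'))) l') ∧
  (∀ t < s.types, ∀ c < s.size, s.InClosure (Nat.pair 1 c) → ∀ l < s.maps,
    (s.Holds t (Nat.pair 1 c) l ↔ ¬ s.Holds t c l)) ∧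
  (∀ t < s.types, ∀ c < s.size, ∀ d < s.size, s.InClosure (Nat.pair 2 (Nat.pair c d)) →
    ∀ l < s.maps, (s.Holds t (Nat.pair 2 (Nat.pair c d)) l ↔ s.Holds t c l ∧ s.Holds t d l)) ∧
  ∀ t < s.types, ∀ c < s.size, ∀ d < s.size, s.InClosure (Nat.pair 3 (Nat.pair c d)) →
    ∀ l < s.maps, (s.Holds t (Nat.pair 3 (Nat.pair c d)) l ↔ s.Holds t c l ∨ s.Holds t d l)

/-- The counterpart of `MosaicSystem.HasWitnesses`. -/
def HasWitnesses : Prop :=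
  (∀ t < s.types, ∀ y < s.size, ∀ A < s.size, ∀ c < s.size,
    s.InClosure (Nat.pair 4 (Nat.pair y (Nat.pair A c))) → ∀ l < s.maps,
      s.Holds t (Nat.pair 0 A) l → s.Holds t c l →
        s.Holds t (Nat.pair 4 (Nat.pair y (Nat.pair A c))) l) ∧
  (∀ t < s.types, ∀ y < s.size, ∀ A < s.size, ∀ c < s.size,
    s.InClosure (Nat.pair 4 (Nat.pair y (Nat.pair A c))) → ∀ l < s.maps,
      s.Holds t (Nat.pair 4 (Nat.pair y (Nat.pair A c))) l → ∃ t' < s.types, ∃ l' < s.maps,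
        s.Compat t (s.Overlap (fun x =>
          GFCode.BaseVar x (Nat.pair 4 (Nat.pair y (Nat.pair A c)))) l l') t' ∧
        s.Holds t' (Nat.pair 0 A) l' ∧ s.Holds t' c l') ∧
  (∀ t < s.types, ∀ y < s.size, ∀ A < s.size, ∀ c < s.size,
    s.InClosure (Nat.pair 5 (Nat.pair y (Nat.pair A c))) → ∀ l < s.maps,
      s.Holds t (Nat.pair 5 (Nat.pair y (Nat.pair A c))) l → s.Holds t (Nat.pair 0 A) l →
        s.Holds t c l) ∧
  ∀ t < s.types, ∀ y < s.size, ∀ A < s.size, ∀ c < s.size,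
    s.InClosure (Nat.pair 5 (Nat.pair y (Nat.pair A c))) → ∀ l < s.maps,
      ¬ s.Holds t (Nat.pair 5 (Nat.pair y (Nat.pair A c))) l → ∃ t' < s.types, ∃ l' < s.maps,
        s.Compat t (s.Overlap (fun x =>
          GFCode.BaseVar x (Nat.pair 5 (Nat.pair y (Nat.pair A c)))) l l') t' ∧
        s.Holds t' (Nat.pair 0 A) l' ∧ ¬ s.Holds t' c l'

/-- The counterpart of `MosaicSystem.CoherentMosaics`. -/
def CoherentMosaics : Prop :=
  (∀ t < s.types, s.Compat t (s.SlotEq t) t) ∧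
  (∀ t < s.types, ∀ ρ < s.maps, s.Guarded t ρ → ∃ k < s.mosaics, s.InMosaic t k ρ) ∧
  (∀ t < s.types, ∀ t' < s.types, ∀ k < s.mosaics, ∀ ρ < s.maps, ∀ ρ' < s.maps,
    s.InMosaic t k ρ → s.InMosaic t' k ρ' → s.Similar t ρ t' ρ') ∧
  (∀ t < s.types, ∀ t₁ < s.types, ∀ k₀ < s.mosaics, ∀ k₁ < s.mosaics, ∀ ρ < s.maps,
    ∀ ρ₁ < s.maps, ∀ l < s.maps, s.InMosaic t k₁ ρ → s.InMosaic t₁ k₁ (s.comp ρ₁ l) →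
      s.InMosaic t₁ k₀ ρ₁ → ∃ t₂ < s.types,
        s.Compat t (s.Overlap (fun _ => True) ρ l) t₂ ∧ s.InMosaic t₂ k₀ (s.mapCode id)) ∧
  ∀ t < s.types, ∀ t₁ < s.types, ∀ k₀ < s.mosaics, ∀ ρ₁ < s.maps, s.InMosaic t₁ k₀ ρ₁ →
    ∃ t₂ < s.types, s.Compat t (fun _ _ => False) t₂ ∧ s.InMosaic t₂ k₀ (s.mapCode id)

/-- The counterpart of `MosaicSystem.Refutes`. -/
def Refutes : Prop :=
  (s.RespectsConnectives ∧ s.HasWitnesses ∧ s.CoherentMosaics) ∧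
    ∃ t < s.types, ∃ t' < s.types, s.Similar t (s.mapCode id) t' (s.mapCode id) ∧
      s.Holds t s.left (s.mapCode id) ∧ ¬ s.Holds t' s.right (s.mapCode id)

end Definitions

section Primrec

variable {α : Type*} [Primcodable α] {s : α → Presentation} {f g h k : α → ℕ}
  (hs : Primrec s)
include hs

@[fun_prop]
theorem primrec_left : Primrec fun a => (s a).left := by
  unfold left
  fun_prop

@[fun_prop]
theorem primrec_right : Primrec fun a => (s a).right := by
  unfold right
  fun_prop

@[fun_prop]
theorem primrec_types : Primrec fun a => (s a).types := by
  unfold types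
  fun_prop

@[fun_prop]
theorem primrec_mosaics : Primrec fun a => (s a).mosaics := by
  unfold mosaics
  fun_prop

@[fun_prop]
theorem primrec_size : Primrec fun a => (s a).size := by
  unfold size
  fun_prop

@[fun_prop]
theorem primrec_maps : Primrec fun a => (s a).maps := by
  unfold maps
  fun_prop

@[fun_prop]
theorem primrec_digit (hf : Primrec f) (hg : Primrec g) :
    Primrec fun a => (s a).digit (f a) (g a) := by
  unfold digit
  fun_prop

@[fun_prop]
theorem primrec_mapCode {F : α → ℕ → ℕ} (hF : Primrec fun x : α × ℕ => F x.1 x.2) :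
    Primrec fun a => (s a).mapCode (F a) := by
  unfold mapCode
  fun_prop

@[fun_prop]
theorem primrec_comp (hf : Primrec f) (hg : Primrec g) :
    Primrec fun a => (s a).comp (f a) (g a) := by
  unfold comp
  fun_prop

@[fun_prop]
theorem primrecPred_holds (hf : Primrec f) (hg : Primrec g) (hh : Primrec h) :
    PrimrecPred fun a => (s a).Holds (f a) (g a) (h a) := by
  unfold Holds
  fun_prop

@[fun_prop]
theorem primrecPred_inMosaic (hf : Primrec f) (hg : Primrec g) (hh : Primrec h) :
    PrimrecPred fun a => (s a).InMosaic (f a) (g a) (h a) := by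
  unfold InMosaic
  fun_prop

@[fun_prop]
theorem primrecPred_inClosure (hf : Primrec f) :
    PrimrecPred fun a => (s a).InClosure (f a) := by
  unfold InClosure
  fun_prop

@[fun_prop]
theorem primrecPred_sharedAtom (hf : Primrec f) :
    PrimrecPred fun a => (s a).SharedAtom (f a) := by
  unfold SharedAtom
  fun_prop

@[fun_prop]
theorem primrecPred_slotEq (hf : Primrec f) (hg : Primrec g) (hh : Primrec h) :
    PrimrecPred fun a => (s a).SlotEq (f a) (g a) (h a) := by
  unfold SlotEq
  fun_prop

@[fun_prop]
theorem primrecPred_overlap {p : α → ℕ → Prop} (hp : PrimrecPred fun x : α × ℕ => p x.1 x.2)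
    (hf : Primrec f) (hg : Primrec g) (hh : Primrec h) (hk : Primrec k) :
    PrimrecPred fun a => (s a).Overlap (p a) (f a) (g a) (h a) (k a) := by
  unfold Overlap
  fun_prop

@[fun_prop]
theorem primrecPred_compat {O : α → ℕ → ℕ → Prop}
    (hO : PrimrecPred fun x : α × ℕ × ℕ => O x.1 x.2.1 x.2.2) (hf : Primrec f) (hg : Primrec g) :
    PrimrecPred fun a => (s a).Compat (f a) (O a) (g a) := by
  unfold Compat
  fun_prop

@[fun_prop]
theorem primrecPred_guarded (hf : Primrec f) (hg : Primrec g) :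
    PrimrecPred fun a => (s a).Guarded (f a) (g a) := by
  unfold Guarded
  fun_prop

@[fun_prop]
theorem primrecPred_similar (hf : Primrec f) (hg : Primrec g) (hh : Primrec h)
    (hk : Primrec k) : PrimrecPred fun a => (s a).Similar (f a) (g a) (h a) (k a) := by
  unfold Similar
  fun_prop

@[fun_prop]
theorem primrecPred_respectsConnectives : PrimrecPred fun a => (s a).RespectsConnectives := by
  unfold RespectsConnectives
  fun_prop

@[fun_prop]
theorem primrecPred_hasWitnesses : PrimrecPred fun a => (s a).HasWitnesses := by
  unfold HasWitnesses
  fun_prop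

@[fun_prop]
theorem primrecPred_coherentMosaics : PrimrecPred fun a => (s a).CoherentMosaics := by
  unfold CoherentMosaics
  fun_prop

@[fun_prop]
theorem primrecPred_refutes : PrimrecPred fun a => (s a).Refutes := by
  unfold Refutes
  fun_prop

end Primrec

end Presentation

/-! ### Correctness of presentations -/

theorem forall_fin {n : ℕ} {p : Fin n → Prop} {q : ℕ → Prop} (h : ∀ i, p i ↔ q i) :
    (∀ i, p i) ↔ ∀ i < n, q i :=
  (forall_congr' h).trans Fin.forall_iff

theorem exists_fin {n : ℕ} {p : Fin n → Prop} {q : ℕ → Prop} (h : ∀ i, p i ↔ q i) :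
    (∃ i, p i) ↔ ∃ i < n, q i := by
  rw [exists_congr h, Fin.exists_iff]
  simp only [exists_prop]

namespace Presentation

section SlotMaps

variable (s : Presentation)

/-- The code of a map between slots, whose digits in base `size` are the values of the map. -/
def code (l : Slot (s.left + s.right) → Slot (s.left + s.right)) : ℕ := finFunctionFinEquiv l

theorem code_lt (l : Slot (s.left + s.right) → Slot (s.left + s.right)) : s.code l < s.maps :=
  (finFunctionFinEquiv l).isLt

theorem code_injective : Function.Injective s.code :=
  Fin.val_injective.comp finFunctionFinEquiv.injective

theorem exists_code_eq {c : ℕ} (hc : c < s.maps) : ∃ l, s.code l = c :=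
  ⟨finFunctionFinEquiv.symm ⟨c, hc⟩, congrArg Fin.val (finFunctionFinEquiv.apply_symm_apply _)⟩

@[simp]
theorem digit_code (l : Slot (s.left + s.right) → Slot (s.left + s.right)) (x : ℕ) :
    s.digit (s.code l) x = l x :=
  congrArg Fin.val (congrFun (finFunctionFinEquiv.symm_apply_apply l) x)

theorem code_eq_mapCode {l : Slot (s.left + s.right) → Slot (s.left + s.right)} {f : ℕ → ℕ}
    (hf : ∀ i : Slot (s.left + s.right), f i = l i) : s.code l = s.mapCode f := by
  rw [code, finFunctionFinEquiv_apply, mapCode, ← Fin.sum_univ_eq_sum_range]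
  exact Finset.sum_congr rfl fun i _ => by rw [hf]; rfl

theorem code_id : s.code id = s.mapCode id := s.code_eq_mapCode fun _ => rfl

@[simp]
theorem code_comp (ρ l : Slot (s.left + s.right) → Slot (s.left + s.right)) :
    s.code (ρ ∘ l) = s.comp (s.code ρ) (s.code l) :=
  s.code_eq_mapCode fun i => by simp

variable {s} {p : (Slot (s.left + s.right) → Slot (s.left + s.right)) → Prop} {q : ℕ → Prop}

theorem forall_slotMap (h : ∀ l, p l ↔ q (s.code l)) : (∀ l, p l) ↔ ∀ c < s.maps, q c := by
  refine ⟨fun hp c hc => ?_, fun hq l => (h l).2 (hq _ (s.code_lt l))⟩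
  obtain ⟨l, rfl⟩ := s.exists_code_eq hc
  exact (h l).1 (hp l)

theorem exists_slotMap (h : ∀ l, p l ↔ q (s.code l)) : (∃ l, p l) ↔ ∃ c < s.maps, q c := by
  refine ⟨fun ⟨l, hl⟩ => ⟨_, s.code_lt l, (h l).1 hl⟩, fun ⟨c, hc, hq⟩ => ?_⟩
  obtain ⟨l, rfl⟩ := s.exists_code_eq hc
  exact ⟨l, (h l).2 hq⟩

end SlotMaps

section System

variable {ar : ℕ → ℕ}

/-- The code of a feature: formulas have even codes and mosaics have odd ones. -/
def featureCode {k : ℕ} : GF ⟨ℕ, ar⟩ ⊕ Fin k → ℕ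
  | .inl χ => 2 * encGF χ
  | .inr i => 2 * i + 1

theorem featureCode_injective {k : ℕ} :
    Function.Injective (featureCode (ar := ar) (k := k)) := by
  rintro (χ | i) (χ' | i') h <;> simp only [featureCode] at h
  · rw [encGF_injective (Nat.eq_of_mul_eq_mul_left two_pos h)]
  · omega
  · omega
  · exact congrArg Sum.inr (Fin.ext (by omega))

variable (ar)

/-- The mosaic system over the signature `⟨ℕ, ar⟩` with a given presentation. -/
def system (s : Presentation) :
    MosaicSystem ⟨ℕ, ar⟩ (s.left + s.right) (Fin s.types) (Fin s.mosaics) where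
  val t f l := s.2.2.testBit (Nat.pair t (Nat.pair (featureCode f) (s.code l)))

theorem exists_system_eq {a b g k : ℕ} (C : MosaicSystem ⟨ℕ, ar⟩ (a + b) (Fin g) (Fin k))
    (hC : ∀ t χ l, C.Holds t χ l → encGF χ < a + b + 2) :
    ∃ P < 2 ^ Nat.pair g (Nat.pair (2 * (a + b + 2 + k)) ((a + b + 2) ^ (a + b + 2))),
      system ar ((a, b), (g, k), P) = C := by
  obtain ⟨P, hP, hbit⟩ := exists_testBit_iff
    (Nat.pair g (Nat.pair (2 * (a + b + 2 + k)) ((a + b + 2) ^ (a + b + 2)))) fun i =>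
      ∃ (t : Fin g) (f : _) (l : _), C.val t f l ∧
        i = Nat.pair t (Nat.pair (featureCode f) (code ((a, b), (g, k), 0) l))
  refine ⟨P, hP, MosaicSystem.ext (funext₃ fun t f l => propext ?_)⟩
  refine (hbit _).trans ⟨fun ⟨_, t', f', l', h, hcode⟩ => ?_, fun h => ⟨?_, t, f, l, h, rfl⟩⟩
  · obtain ⟨ht, hf, hl⟩ : (t : ℕ) = t' ∧ featureCode f = featureCode f' ∧ _ := by
      simpa only [Nat.pair_eq_pair] using hcode
    rwa [Fin.ext ht, featureCode_injective hf, code_injective _ hl]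
  · have hf : featureCode f < 2 * (a + b + 2 + k) := by
      cases f with
      | inl χ =>
        have hχ := hC t χ l h
        simp only [featureCode]
        omega
      | inr i =>
        have hi : (i : ℕ) < k := i.isLt
        simp only [featureCode]
        omega
    have hl : code ((a, b), (g, k), 0) l < (a + b + 2) ^ (a + b + 2) := code_lt _ l
    exact (Nat.pair_lt_pair_left _ t.isLt).trans (Nat.pair_lt_pair_right _
      ((Nat.pair_lt_pair_left _ hf).trans (Nat.pair_lt_pair_right _ hl)))

variable {ar} {s : Presentation}

theorem slotEq_iff {t : Fin s.types} {i j : Slot (s.left + s.right)} :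
    (s.system ar).SlotEq t i j ↔ s.SlotEq t i j :=
  exists_slotMap fun l => by
    refine and_congr ?_ (and_congr ?_ ?_)
    · rw [digit_code, Nat.cast_zero, Fin.val_inj]
    · rw [digit_code, Nat.cast_one, Fin.val_inj]
    · rw [← encGF_eq_zero_one (ar := ar)]
      rfl

theorem inMosaic_id_iff {t : Fin s.types} {k : Fin s.mosaics} :
    (s.system ar).InMosaic t k id ↔ s.InMosaic t k (s.mapCode id) := by
  rw [← code_id]
  rfl

theorem holds_id_iff {t : Fin s.types} {χ : GF ⟨ℕ, ar⟩} {c : ℕ}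
    (hc : c = encGF χ) : (s.system ar).Holds t χ id ↔ s.Holds t c (s.mapCode id) := by
  rw [← code_id, hc]
  rfl

theorem overlap_iff {S : Set (Slot (s.left + s.right))} {p : ℕ → Prop}
    (hS : ∀ i : Slot (s.left + s.right), i ∈ S ↔ p i)
    {l l' : Slot (s.left + s.right) → Slot (s.left + s.right)} {i j : Slot (s.left + s.right)} :
    overlap S l l' i j ↔ s.Overlap p (s.code l) (s.code l') i j :=
  exists_fin fun x => by simp [hS, Fin.val_inj]

end System

/-- The presentation is one of a mosaic system for the well-guarded formulas `φ` and `ψ`. -/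
structure Encodes {ar : ℕ → ℕ} (s : Presentation) (φ ψ : GF ⟨ℕ, ar⟩) : Prop where
  left : s.left = encGF φ
  right : s.right = encGF ψ
  wellGuarded_left : φ.WellGuarded
  wellGuarded_right : ψ.WellGuarded

namespace Encodes

open GF (Closure)

variable {ar : ℕ → ℕ} {s : Presentation} {φ ψ : GF ⟨ℕ, ar⟩} (hs : s.Encodes φ ψ)
include hs

theorem admissible : GF.Admissible φ ψ s.size := by
  rw [size, hs.left, hs.right]
  exact GFCode.admissible hs.wellGuarded_left hs.wellGuarded_right

theorem encGF_lt {χ : GF ⟨ℕ, ar⟩} (hχ : Closure φ ψ χ) : encGF χ < s.size := by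
  rw [size, hs.left, hs.right]
  exact GFCode.encGF_lt hχ

theorem inClosure_iff {c : ℕ} : s.InClosure c ↔ ∃ χ, Closure φ ψ χ ∧ encGF χ = c := by
  rw [InClosure, hs.left, hs.right]
  exact ⟨fun h => h.exists_closure, fun ⟨χ, hχ, hc⟩ => hc ▸ GFCode.inClosure_of_closure hχ⟩

theorem sharedAtom_iff {α : Atomic ⟨ℕ, ar⟩} :
    s.SharedAtom (encAtom α) ↔ GF.SharedAtom φ ψ α := by
  rw [SharedAtom, hs.left, hs.right, GFCode.sharedAtom_iff]

theorem exists_encAtom_eq {A : ℕ} (h : s.SharedAtom A) : ∃ α : Atomic ⟨ℕ, ar⟩, encAtom α = A := by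
  obtain ⟨χ, -, hχ⟩ := hs.inClosure_iff.1 h.1
  cases χ with
  | atom α => exact ⟨α, (Nat.pair_eq_pair.1 hχ).2⟩
  | _ => simp [encGF] at hχ

theorem encAtom_lt {α : Atomic ⟨ℕ, ar⟩} (hα : Closure φ ψ (.atom α)) : encAtom α < s.size :=
  (Nat.right_le_pair _ _).trans_lt (hs.encGF_lt hα)

section Transfer

theorem forall_closure {p : GF ⟨ℕ, ar⟩ → Prop} {q : ℕ → Prop}
    (h : ∀ χ, Closure φ ψ χ → (p χ ↔ q (encGF χ))) :
    (∀ χ, Closure φ ψ χ → p χ) ↔ ∀ c < s.size, s.InClosure c → q c := by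
  refine ⟨fun hp c _ hc => ?_, fun hq χ hχ =>
    (h χ hχ).2 (hq _ (hs.encGF_lt hχ) (hs.inClosure_iff.2 ⟨χ, hχ, rfl⟩))⟩
  obtain ⟨χ, hχ, rfl⟩ := hs.inClosure_iff.1 hc
  exact (h χ hχ).1 (hp χ hχ)

theorem forall_sharedAtom {p : Atomic ⟨ℕ, ar⟩ → Prop} {q : ℕ → Prop}
    (h : ∀ α, p α ↔ q (encAtom α)) :
    (∀ α, GF.SharedAtom φ ψ α → p α) ↔ ∀ A < s.size, s.SharedAtom A → q A := by
  refine ⟨fun hp A _ hA => ?_, fun hq α hα =>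
    (h α).2 (hq _ (hs.encAtom_lt hα.1) (hs.sharedAtom_iff.2 hα))⟩
  obtain ⟨α, rfl⟩ := hs.exists_encAtom_eq hA
  exact (h α).1 (hp α (hs.sharedAtom_iff.1 hA))

theorem exists_sharedAtom {p : Atomic ⟨ℕ, ar⟩ → Prop} {q : ℕ → Prop}
    (h : ∀ α, GF.SharedAtom φ ψ α → (p α ↔ q (encAtom α))) :
    (∃ α, GF.SharedAtom φ ψ α ∧ p α) ↔ ∃ A < s.size, s.SharedAtom A ∧ q A := by
  refine ⟨fun ⟨α, hα, hp⟩ => ⟨_, hs.encAtom_lt hα.1, hs.sharedAtom_iff.2 hα, (h α hα).1 hp⟩,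
    fun ⟨A, _, hA, hq⟩ => ?_⟩
  obtain ⟨α, rfl⟩ := hs.exists_encAtom_eq hA
  have hα := hs.sharedAtom_iff.1 hA
  exact ⟨α, hα, (h α hα).2 hq⟩

theorem forall_not {p : GF ⟨ℕ, ar⟩ → Prop} {q : ℕ → Prop} (h : ∀ χ, p χ ↔ q (encGF χ)) :
    (∀ χ, Closure φ ψ (.not χ) → p χ) ↔ ∀ c < s.size, s.InClosure (Nat.pair 1 c) → q c := by
  refine ⟨fun hp c _ hc => ?_, fun hq χ hχ =>
    (h χ).2 (hq _ (hs.encGF_lt hχ.not) (hs.inClosure_iff.2 ⟨_, hχ, rfl⟩))⟩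
  obtain ⟨ξ, hξ, hcode⟩ := hs.inClosure_iff.1 hc
  cases ξ <;> simp only [encGF, Nat.pair_eq_pair, Nat.reduceEqDiff, false_and, true_and] at hcode
  case not χ =>
    subst hcode
    exact (h χ).1 (hp χ hξ)

theorem forall_and {p : GF ⟨ℕ, ar⟩ → GF ⟨ℕ, ar⟩ → Prop} {q : ℕ → ℕ → Prop}
    (h : ∀ χ ξ, p χ ξ ↔ q (encGF χ) (encGF ξ)) :
    (∀ χ ξ, Closure φ ψ (.and χ ξ) → p χ ξ) ↔
      ∀ c < s.size, ∀ d < s.size, s.InClosure (Nat.pair 2 (Nat.pair c d)) → q c d := by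
  refine ⟨fun hp c _ d _ hc => ?_, fun hq χ ξ hχ => (h χ ξ).2
    (hq _ (hs.encGF_lt hχ.and_left) _ (hs.encGF_lt hχ.and_right)
      (hs.inClosure_iff.2 ⟨_, hχ, rfl⟩))⟩
  obtain ⟨ζ, hζ, hcode⟩ := hs.inClosure_iff.1 hc
  cases ζ <;> simp only [encGF, Nat.pair_eq_pair, Nat.reduceEqDiff, false_and, true_and] at hcode
  case and χ ξ =>
    obtain ⟨rfl, rfl⟩ := hcode
    exact (h χ ξ).1 (hp χ ξ hζ)

theorem forall_or {p : GF ⟨ℕ, ar⟩ → GF ⟨ℕ, ar⟩ → Prop} {q : ℕ → ℕ → Prop}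
    (h : ∀ χ ξ, p χ ξ ↔ q (encGF χ) (encGF ξ)) :
    (∀ χ ξ, Closure φ ψ (.or χ ξ) → p χ ξ) ↔
      ∀ c < s.size, ∀ d < s.size, s.InClosure (Nat.pair 3 (Nat.pair c d)) → q c d := by
  refine ⟨fun hp c _ d _ hc => ?_, fun hq χ ξ hχ => (h χ ξ).2
    (hq _ (hs.encGF_lt hχ.or_left) _ (hs.encGF_lt hχ.or_right)
      (hs.inClosure_iff.2 ⟨_, hχ, rfl⟩))⟩
  obtain ⟨ζ, hζ, hcode⟩ := hs.inClosure_iff.1 hc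
  cases ζ <;> simp only [encGF, Nat.pair_eq_pair, Nat.reduceEqDiff, false_and, true_and] at hcode
  case or χ ξ =>
    obtain ⟨rfl, rfl⟩ := hcode
    exact (h χ ξ).1 (hp χ ξ hζ)

theorem forall_gex {p : List ℕ → Atomic ⟨ℕ, ar⟩ → GF ⟨ℕ, ar⟩ → Prop} {q : ℕ → ℕ → ℕ → Prop}
    (h : ∀ ys α χ, Closure φ ψ (.gex ys α χ) →
      (p ys α χ ↔ q (Encodable.encode ys) (encAtom α) (encGF χ))) :
    (∀ ys α χ, Closure φ ψ (.gex ys α χ) → p ys α χ) ↔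
      ∀ y < s.size, ∀ A < s.size, ∀ c < s.size,
        s.InClosure (Nat.pair 4 (Nat.pair y (Nat.pair A c))) → q y A c := by
  refine ⟨fun hp y _ A _ c _ hc => ?_, fun hq ys α χ hχ => (h ys α χ hχ).2
    (hq _ (((Nat.left_le_pair _ _).trans (Nat.right_le_pair _ _)).trans_lt (hs.encGF_lt hχ))
      _ (hs.encAtom_lt hχ.gex_guard) _ (hs.encGF_lt hχ.gex_body)
      (hs.inClosure_iff.2 ⟨_, hχ, rfl⟩))⟩
  obtain ⟨ζ, hζ, hcode⟩ := hs.inClosure_iff.1 hc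
  cases ζ <;> simp only [encGF, Nat.pair_eq_pair, Nat.reduceEqDiff, false_and, true_and] at hcode
  case gex ys α χ =>
    obtain ⟨rfl, rfl, rfl⟩ := hcode
    exact (h ys α χ hζ).1 (hp ys α χ hζ)

theorem forall_gall {p : List ℕ → Atomic ⟨ℕ, ar⟩ → GF ⟨ℕ, ar⟩ → Prop} {q : ℕ → ℕ → ℕ → Prop}
    (h : ∀ ys α χ, Closure φ ψ (.gall ys α χ) →
      (p ys α χ ↔ q (Encodable.encode ys) (encAtom α) (encGF χ))) :
    (∀ ys α χ, Closure φ ψ (.gall ys α χ) → p ys α χ) ↔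
      ∀ y < s.size, ∀ A < s.size, ∀ c < s.size,
        s.InClosure (Nat.pair 5 (Nat.pair y (Nat.pair A c))) → q y A c := by
  refine ⟨fun hp y _ A _ c _ hc => ?_, fun hq ys α χ hχ => (h ys α χ hχ).2
    (hq _ (((Nat.left_le_pair _ _).trans (Nat.right_le_pair _ _)).trans_lt (hs.encGF_lt hχ))
      _ (hs.encAtom_lt hχ.gall_guard) _ (hs.encGF_lt hχ.gall_body)
      (hs.inClosure_iff.2 ⟨_, hχ, rfl⟩))⟩
  obtain ⟨ζ, hζ, hcode⟩ := hs.inClosure_iff.1 hc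
  cases ζ <;> simp only [encGF, Nat.pair_eq_pair, Nat.reduceEqDiff, false_and, true_and] at hcode
  case gall ys α χ =>
    obtain ⟨rfl, rfl, rfl⟩ := hcode
    exact (h ys α χ hζ).1 (hp ys α χ hζ)

theorem forall_eq {p q : ℕ → ℕ → Prop} (h : ∀ x y, p x y ↔ q x y) :
    (∀ x y, Closure φ ψ (.atom (.eq x y)) → p x y) ↔
      ∀ x < s.size, ∀ y < s.size,
        s.InClosure (Nat.pair 0 (Nat.pair 0 (Nat.pair x y))) → q x y := by
  refine ⟨fun hp x _ y _ hc => ?_, fun hq x y hxy => (h x y).2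
    (hq x (hs.admissible.lt _ hxy x (by simp [GF.fv, Atomic.vars]))
      y (hs.admissible.lt _ hxy y (by simp [GF.fv, Atomic.vars]))
      (hs.inClosure_iff.2 ⟨_, hxy, rfl⟩))⟩
  obtain ⟨ζ, hζ, hcode⟩ := hs.inClosure_iff.1 hc
  obtain rfl : ζ = .atom (.eq x y) := encGF_injective hcode
  exact (h x y).1 (hp x y hζ)

theorem forall_rel {p : (R : ℕ) → (Fin (ar R) → ℕ) → (Fin (ar R) → ℕ) → Prop}
    {q : ℕ → ℕ → ℕ → Prop}
    (h : ∀ R t t',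
      p R t t' ↔ q R (Encodable.encode (List.ofFn t)) (Encodable.encode (List.ofFn t'))) :
    (∀ R t t', Closure φ ψ (.atom (.rel R t)) → Closure φ ψ (.atom (.rel R t')) → p R t t') ↔
      ∀ R < s.size, ∀ e < s.size, ∀ e' < s.size,
        s.InClosure (Nat.pair 0 (Nat.pair 1 (Nat.pair R e))) →
        s.InClosure (Nat.pair 0 (Nat.pair 1 (Nat.pair R e'))) → q R e e' := by
  have code_lt {R : ℕ} {t : Fin (ar R) → ℕ} (ht : Closure φ ψ (.atom (.rel R t))) :
      Nat.pair R (Encodable.encode (List.ofFn t)) < s.size :=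
    (Nat.right_le_pair _ _).trans_lt (hs.encAtom_lt ht)
  have exists_eq {R e : ℕ} (hc : s.InClosure (Nat.pair 0 (Nat.pair 1 (Nat.pair R e)))) :
      ∃ t, Closure φ ψ (.atom (.rel R t)) ∧ Encodable.encode (List.ofFn t) = e := by
    obtain ⟨ζ, hζ, hcode⟩ := hs.inClosure_iff.1 hc
    rcases ζ with (_ | ⟨R', t⟩) | _ | _ | _ | _ | _ <;>
      simp only [encGF, encAtom, Nat.pair_eq_pair, false_and, true_and,
        reduceCtorEq] at hcode
    obtain ⟨rfl, hcode⟩ := hcode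
    exact ⟨t, hζ, hcode⟩
  refine ⟨fun hp R _ e _ e' _ he he' => ?_, fun hq R t t' ht ht' => (h R t t').2
    (hq R ((Nat.left_le_pair _ _).trans_lt (code_lt ht)) _
      ((Nat.right_le_pair _ _).trans_lt (code_lt ht)) _
      ((Nat.right_le_pair _ _).trans_lt (code_lt ht'))
      (hs.inClosure_iff.2 ⟨_, ht, rfl⟩) (hs.inClosure_iff.2 ⟨_, ht', rfl⟩))⟩
  obtain ⟨t, ht, rfl⟩ := exists_eq he
  obtain ⟨t', ht', rfl⟩ := exists_eq he'
  exact (h R t t').1 (hp R t t' ht ht')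

end Transfer

theorem mem_slots_iff {χ : GF ⟨ℕ, ar⟩} (hχ : Closure φ ψ χ) (hbase : χ.IsBase)
    {i : Slot (s.left + s.right)} :
    i ∈ χ.slots (s.left + s.right) ↔ GFCode.BaseVar i (encGF χ) := by
  rw [GFCode.baseVar_iff (hs.admissible.wellGuarded hχ) hbase]
  refine ⟨fun ⟨x, hx, hi⟩ => ?_, fun hi =>
    ⟨i, hi, Fin.cast_val_eq_self (n := s.left + s.right + 2) i⟩⟩
  have hval : ((x : Slot (s.left + s.right)) : ℕ) = x :=
    Fin.val_cast_of_lt (hs.admissible.lt χ hχ x hx)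
  rwa [← hi, hval]

theorem compat_iff {t t' : Fin s.types}
    {O : Slot (s.left + s.right) → Slot (s.left + s.right) → Prop} {O' : ℕ → ℕ → Prop}
    (hO : ∀ i j, O i j ↔ O' i j) :
    (s.system ar).Compat φ ψ t O t' ↔ s.Compat t O' t' := by
  refine Sum.forall.trans (and_congr ?_ ?_)
  · refine (forall_congr' fun χ => and_imp).trans (hs.forall_closure fun χ hχ => ?_)
    rw [GFCode.isBase_iff]
    refine forall_congr' fun hbase => forall_slotMap fun l => forall_slotMap fun l' => ?_
    refine imp_congr (forall_fin fun x => ?_) Iff.rfl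
    simp [MosaicSystem.support, hs.mem_slots_iff hχ hbase, hO]
  · refine forall_fin fun k => (forall_prop_of_true trivial).trans ?_
    refine forall_slotMap fun l => forall_slotMap fun l' => ?_
    refine imp_congr (forall_fin fun x => ?_) Iff.rfl
    simp [MosaicSystem.support, hO]

theorem guarded_iff {t : Fin s.types} {ρ : Slot (s.left + s.right) → Slot (s.left + s.right)} :
    (s.system ar).Guarded φ ψ t ρ ↔ s.Guarded t (s.code ρ) := by
  refine hs.exists_sharedAtom fun α hα => exists_slotMap fun l => and_congr Iff.rfl ?_
  refine forall_fin fun i => ?_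
  simp only [GFCode.atomVar_iff, digit_code, Fin.val_inj, Fin.cast_val_eq_self]
  exact exists_congr fun x => ⟨fun ⟨hx, h⟩ => ⟨hs.admissible.lt _ hα.1 x hx, hx, h⟩, And.right⟩

theorem similar_iff {t t' : Fin s.types}
    {ρ ρ' : Slot (s.left + s.right) → Slot (s.left + s.right)} :
    (s.system ar).Similar φ ψ t ρ t' ρ' ↔ s.Similar t (s.code ρ) t' (s.code ρ') := by
  refine Iff.trans ⟨fun h => ⟨h.inMosaic, h.atom⟩, fun h => ⟨h.1, h.2⟩⟩ (and_congr ?_ ?_)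
  · refine forall_fin fun k => forall_slotMap fun l => ?_
    rw [← code_comp, ← code_comp]
    rfl
  · refine hs.forall_sharedAtom fun α => forall_slotMap fun l => ?_
    rw [← code_comp, ← code_comp]
    rfl

theorem similar_id_iff {t t' : Fin s.types} :
    (s.system ar).Similar φ ψ t id t' id ↔ s.Similar t (s.mapCode id) t' (s.mapCode id) := by
  rw [← code_id]
  exact hs.similar_iff

theorem respectsConnectives_iff :
    (s.system ar).RespectsConnectives φ ψ ↔ s.RespectsConnectives := by
  refine Iff.trans (b := _ ∧ _ ∧ _ ∧ _ ∧ _ ∧ _)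
    ⟨fun h => ⟨h.slotEq_refl, h.eq, h.rel, h.not, h.and, h.or⟩,
    fun ⟨h₁, h₂, h₃, h₄, h₅, h₆⟩ => ⟨h₁, h₂, h₃, h₄, h₅, h₆⟩⟩ ?_
  refine and_congr ?_ <| and_congr ?_ <| and_congr ?_ <| and_congr ?_ <| and_congr ?_ ?_
  · exact forall_fin fun t => forall_fin fun i => slotEq_iff
  · refine forall_fin fun t => hs.forall_eq fun x y => forall_slotMap fun l => iff_congr Iff.rfl ?_
    rw [slotEq_iff, digit_code, digit_code]
  · refine forall_fin fun t => hs.forall_rel fun R a b => forall_slotMap fun l =>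
      forall_slotMap fun l' => imp_congr ?_ Iff.rfl
    simp only [decodeList_encode, List.length_ofFn]
    refine forall_fin fun k => ?_
    simp [slotEq_iff]
  · exact forall_fin fun t => hs.forall_not fun χ => forall_slotMap fun l => Iff.rfl
  · exact forall_fin fun t => hs.forall_and fun χ ξ => forall_slotMap fun l => Iff.rfl
  · exact forall_fin fun t => hs.forall_or fun χ ξ => forall_slotMap fun l => Iff.rfl

theorem hasWitnesses_iff : (s.system ar).HasWitnesses φ ψ ↔ s.HasWitnesses := by
  refine Iff.trans (b := _ ∧ _ ∧ _ ∧ _)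
    ⟨fun h => ⟨h.gex_intro, h.gex_elim, h.gall_elim, h.gall_intro⟩,
    fun ⟨h₁, h₂, h₃, h₄⟩ => ⟨h₁, h₂, h₃, h₄⟩⟩ ?_
  refine and_congr ?_ <| and_congr ?_ <| and_congr ?_ ?_
  · exact forall_fin fun t => hs.forall_gex fun ys α χ _ => forall_slotMap fun l => Iff.rfl
  · refine forall_fin fun t => hs.forall_gex fun ys α χ hχ => forall_slotMap fun l =>
      imp_congr Iff.rfl <| exists_fin fun t' => exists_slotMap fun l' => and_congr ?_ Iff.rfl
    exact hs.compat_iff fun i j => overlap_iff fun x => hs.mem_slots_iff hχ trivial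
  · exact forall_fin fun t => hs.forall_gall fun ys α χ _ => forall_slotMap fun l => Iff.rfl
  · refine forall_fin fun t => hs.forall_gall fun ys α χ hχ => forall_slotMap fun l =>
      imp_congr Iff.rfl <| exists_fin fun t' => exists_slotMap fun l' => and_congr ?_ Iff.rfl
    exact hs.compat_iff fun i j => overlap_iff fun x => hs.mem_slots_iff hχ trivial

theorem coherentMosaics_iff : (s.system ar).CoherentMosaics φ ψ ↔ s.CoherentMosaics := by
  refine Iff.trans (b := _ ∧ _ ∧ _ ∧ _ ∧ _)
    ⟨fun h => ⟨h.compat_self, h.exists_mosaic, h.similar, h.extend, h.realise⟩,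
    fun ⟨h₁, h₂, h₃, h₄, h₅⟩ => ⟨h₁, h₂, h₃, h₄, h₅⟩⟩ ?_
  refine and_congr ?_ <| and_congr ?_ <| and_congr ?_ <| and_congr ?_ ?_
  · exact forall_fin fun t => hs.compat_iff fun i j => slotEq_iff
  · exact forall_fin fun t => forall_slotMap fun ρ => imp_congr hs.guarded_iff <|
      exists_fin fun k => Iff.rfl
  · exact forall_fin fun t => forall_fin fun t' => forall_fin fun k => forall_slotMap fun ρ =>
      forall_slotMap fun ρ' => imp_congr Iff.rfl <| imp_congr Iff.rfl hs.similar_iff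
  · refine forall_fin fun t => forall_fin fun t₁ => forall_fin fun k₀ => forall_fin fun k₁ =>
      forall_slotMap fun ρ => forall_slotMap fun ρ₁ => forall_slotMap fun l => ?_
    rw [← code_comp]
    refine imp_congr Iff.rfl <| imp_congr Iff.rfl <| imp_congr Iff.rfl <| exists_fin fun t₂ => ?_
    exact and_congr (hs.compat_iff fun i j => overlap_iff fun x => Iff.rfl) inMosaic_id_iff
  · exact forall_fin fun t => forall_fin fun t₁ => forall_fin fun k₀ => forall_slotMap fun ρ₁ =>
      imp_congr Iff.rfl <| exists_fin fun t₂ =>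
        and_congr (hs.compat_iff fun _ _ => Iff.rfl) inMosaic_id_iff

theorem refutes_iff : (s.system ar).Refutes φ ψ ↔ s.Refutes := by
  refine Iff.trans ⟨fun h => ⟨h.saturated, h.exists_similar⟩, fun h => ⟨h.1, h.2⟩⟩
    (and_congr ?_ ?_)
  · refine Iff.trans (b := _ ∧ _ ∧ _)
      ⟨fun h => ⟨h.toRespectsConnectives, h.toHasWitnesses, h.toCoherentMosaics⟩,
      fun ⟨h₁, h₂, h₃⟩ => ⟨h₁, h₂, h₃⟩⟩ ?_
    exact and_congr hs.respectsConnectives_iff <|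
      and_congr hs.hasWitnesses_iff hs.coherentMosaics_iff
  · refine exists_fin fun t => exists_fin fun t' => ?_
    exact and_congr hs.similar_id_iff (and_congr (holds_id_iff hs.left)
      (not_congr (holds_id_iff hs.right)))

end Encodes

end Presentation

/-! ### The decision procedure -/

/-- Some presentation within the size bounds of `MosaicSystem.exists_refutes` refutes the formulas
with codes `a` and `b`. -/
def Refutable (a b : ℕ) : Prop :=
  ∃ k < 2 ^ 2 ^ ((a + b + 2) * (a + b + 2) ^ (a + b + 2)) + 1,
    ∃ g < 2 ^ ((a + b + 2 + k) * (a + b + 2) ^ (a + b + 2)) + 1,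
      ∃ P < 2 ^ Nat.pair g (Nat.pair (2 * (a + b + 2 + k)) ((a + b + 2) ^ (a + b + 2))),
        Presentation.Refutes ((a, b), (g, k), P)

@[fun_prop]
theorem Refutable.primrecPred {α : Type*} [Primcodable α] {f g : α → ℕ} (hf : Primrec f)
    (hg : Primrec g) : PrimrecPred fun a => Refutable (f a) (g a) := by
  unfold Refutable
  fun_prop

theorem refutable_iff {ar : ℕ → ℕ} {n : ℕ} {φ ψ : GF ⟨ℕ, ar⟩} (hφ : φ.WellGuarded)
    (hψ : ψ.WellGuarded) (hφn : φ.fv ⊆ Finset.range n) (hψn : ψ.fv ⊆ Finset.range n) :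
    Refutable (encGF φ) (encGF ψ) ↔ ¬ HasGFInterpolant n φ ψ := by
  have encodes (g k P : ℕ) : Presentation.Encodes ((encGF φ, encGF ψ), (g, k), P) φ ψ :=
    ⟨rfl, rfl, hφ, hψ⟩
  have hadm := GFCode.admissible hφ hψ
  constructor
  · rintro ⟨k, -, g, -, P, -, hP⟩
    exact ((encodes g k P).refutes_iff.2 hP).not_hasGFInterpolant hadm n
  · intro h
    have := (encGF_injective (ar := ar)).countable
    have := Finite.of_injective _ (GFCode.injective_encGF_closure φ ψ)
    obtain ⟨k, hk, g, hg, C, hC, hrefutes⟩ := MosaicSystem.exists_refutes hadm hφn hψn h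
    have hcard := GFCode.card_closure_le φ ψ
    obtain ⟨P, hP, rfl⟩ := Presentation.exists_system_eq ar C
      fun t χ l hχ => GFCode.encGF_lt (hC t χ l hχ)
    refine ⟨k, Nat.lt_succ_of_le (hk.trans ?_), g, Nat.lt_succ_of_le (hg.trans ?_), P, hP,
      (encodes g k P).refutes_iff.1 hrefutes⟩ <;> gcongr <;> norm_num

theorem gf_interpolant_existence_decidable_general :
    ∃ f : ℕ → Bool, Primrec f ∧
      ∀ (ar : ℕ → ℕ) (n : ℕ) (φ ψ : GF ⟨ℕ, ar⟩), φ.WellGuarded → ψ.WellGuarded →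
        φ.fv ⊆ Finset.range n → ψ.fv ⊆ Finset.range n →
        (f (Nat.pair n (Nat.pair (encGF φ) (encGF ψ))) = true ↔ HasGFInterpolant n φ ψ) := by
  classical
  have hprim : PrimrecPred fun z : ℕ => ¬ Refutable z.unpair.2.unpair.1 z.unpair.2.unpair.2 := by
    fun_prop
  refine ⟨_, hprim.decide, fun ar n φ ψ hφ hψ hφn hψn => ?_⟩
  simp [refutable_iff hφ hψ hφn hψn]

/-- GF-interpolant existence is decidable: over any computable
relational signature there is a computable (total) function deciding, given
(codes of) GF-formulas `φ(x)` and `ψ(x)`, whether there exists a GF-formula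
`θ(x)` with `sig θ ⊆ sig φ ∩ sig ψ`, `φ ⊨ θ` and `θ ⊨ ψ`. -/
theorem gf_interpolant_existence_decidable (ar : ℕ → ℕ) (har : Computable ar) :
    ∃ f : ℕ → Bool, Computable f ∧
      ∀ (n : ℕ) (φ ψ : GF ⟨ℕ, ar⟩), φ.WellGuarded → ψ.WellGuarded →
        φ.fv ⊆ Finset.range n → ψ.fv ⊆ Finset.range n → φ.fv = ψ.fv →
        (f (Nat.pair n (Nat.pair (encGF φ) (encGF ψ))) = true ↔
          HasGFInterpolant n φ ψ) := by
  obtain ⟨f, hf, hdecides⟩ := gf_interpolant_existence_decidable_general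
  exact ⟨f, hf.to_comp, fun n φ ψ hφ hψ hφn hψn _ => hdecides ar n φ ψ hφ hψ hφn hψn⟩
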